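/- arXiv:2105.05848 — 7 statements merged into one kernel-verified Lean document; each statement's English description precedes it below -/
import Mathlib

section
/- Let X be a real Banach space, α ∈ (0,1), and t > 0. Let v : [0,t] → X be continuous with v(0) = 0, differentiable on the open interval (0,t), and suppose that s ↦ (t−s)^{−α}‖v′(s)‖ is integrable on (0,t). Then the function s ↦ α(t−s)^{−α−1}(v(t) − v(s)) is Bochner integrable on (0,t), and ∫_0^t (t−s)^{−α} v′(s) ds = t^{−α} v(t) + ∫_0^t α (t−s)^{−α−1} (v(t) − v(s)) ds. -/
open MeasureTheory Real

lemma caputo_aux_kernel (α t r : ℝ) (hr0 : 0 < r) (hrt : r < t) :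
    IntegrableOn (fun s => α * (t - s) ^ (-α - 1)) (Set.Ioo 0 r) ∧
    ∫ s in Set.Ioo 0 r, α * (t - s) ^ (-α - 1) = (t - r) ^ (-α) - t ^ (-α) := by
  have hc : ContinuousOn (fun s => α * (t - s) ^ (-α - 1)) (Set.uIcc 0 r) := by
    rw [Set.uIcc_of_le hr0.le]
    refine continuousOn_const.mul (ContinuousOn.rpow_const (by fun_prop) ?_)
    intro x hx
    left
    have := hx.2
    linarith
  have hi : IntervalIntegrable (fun s => α * (t - s) ^ (-α - 1)) volume 0 r :=
    hc.intervalIntegrable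
  refine ⟨((intervalIntegrable_iff_integrableOn_Ioo_of_le hr0.le).1 hi), ?_⟩
  rw [← integral_Ioc_eq_integral_Ioo, ← intervalIntegral.integral_of_le hr0.le]
  rw [intervalIntegral.integral_eq_sub_of_hasDerivAt (f := fun s => (t - s) ^ (-α)) _ hi]
  · simp
  · intro x hx
    rw [Set.uIcc_of_le hr0.le] at hx
    have h1 : HasDerivAt (fun s : ℝ => t - s) (-1) x := by
      simpa using (hasDerivAt_id x).const_sub t
    have h2 := h1.rpow_const (p := -α) (Or.inl (by have := hx.2; linarith))
    exact h2.congr_deriv (by ring)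

/-- Integration-by-parts representation of the Caputo fractional derivative
for Banach-space-valued functions vanishing at `0`. -/
theorem caputo_integration_by_parts
    {X : Type*} [NormedAddCommGroup X] [NormedSpace ℝ X] [CompleteSpace X]
    (α t : ℝ) (hα : α ∈ Set.Ioo (0 : ℝ) 1) (ht : 0 < t)
    (v v' : ℝ → X)
    (hv_cont : ContinuousOn v (Set.Icc 0 t))
    (hv0 : v 0 = 0)
    (hderiv : ∀ s ∈ Set.Ioo 0 t, HasDerivAt v (v' s) s)
    (hint : IntegrableOn (fun s => (t - s) ^ (-α) * ‖v' s‖) (Set.Ioo 0 t)) :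
    IntegrableOn (fun s => (α * (t - s) ^ (-α - 1)) • (v t - v s)) (Set.Ioo 0 t) ∧
    ∫ s in Set.Ioo 0 t, (t - s) ^ (-α) • v' s
      = t ^ (-α) • v t + ∫ s in Set.Ioo 0 t, (α * (t - s) ^ (-α - 1)) • (v t - v s) := by
  obtain ⟨hα0, hα1⟩ := hα
  set μ : Measure ℝ := volume.restrict (Set.Ioo 0 t) with hμ
  have hmem : ∀ᵐ s ∂μ, s ∈ Set.Ioo 0 t := ae_restrict_mem measurableSet_Ioo
  have hv'm : AEStronglyMeasurable v' μ := by
    refine (aestronglyMeasurable_deriv v μ).congr ?_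
    filter_upwards [hmem] with s hs using (hderiv s hs).deriv
  have hkm : Measurable (fun s : ℝ => α * (t - s) ^ (-α - 1)) := by fun_prop
  have hlm : Measurable (fun s : ℝ => (t - s) ^ (-α)) := by fun_prop
  have hL : Integrable (fun s => (t - s) ^ (-α) • v' s) μ := by
    refine Integrable.mono' hint (hlm.aestronglyMeasurable.smul hv'm) ?_
    filter_upwards [hmem] with s hs
    rw [norm_smul, Real.norm_of_nonneg (rpow_nonneg (by linarith [hs.2]) _)]
  have hv'i : Integrable v' μ := by
    refine Integrable.mono' (hint.const_mul (t ^ α)) hv'm ?_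
    filter_upwards [hmem] with s hs
    have hpos : 0 < t - s := by linarith [hs.2]
    have h1 : (t - s) ^ α ≤ t ^ α := rpow_le_rpow hpos.le (by linarith [hs.1]) hα0.le
    have h2 : 1 ≤ t ^ α * (t - s) ^ (-α) := by
      rw [rpow_neg hpos.le, ← div_eq_mul_inv, one_le_div (rpow_pos_of_pos hpos _)]
      exact h1
    rw [← mul_assoc]
    exact le_mul_of_one_le_left (norm_nonneg _) h2
  have hftc : ∀ s ∈ Set.Ico 0 t, ∫ r in Set.Ioo s t, v' r = v t - v s := by
    intro s hs
    rw [← integral_Ioc_eq_integral_Ioo, ← intervalIntegral.integral_of_le hs.2.le]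
    refine intervalIntegral.integral_eq_sub_of_hasDerivAt_of_le hs.2.le
      (hv_cont.mono (Set.Icc_subset_Icc_left hs.1))
      (fun x hx => hderiv x ⟨hs.1.trans_lt hx.1, hx.2⟩) ?_
    rw [intervalIntegrable_iff_integrableOn_Ioo_of_le hs.2.le]
    exact IntegrableOn.mono_set hv'i (Set.Ioo_subset_Ioo_left hs.1)
  let F : ℝ → ℝ → X := fun s r =>
    {p : ℝ × ℝ | p.1 < p.2}.indicator (fun p => (α * (t - p.1) ^ (-α - 1)) • v' p.2) (s, r)
  have hF1 : ∀ s, F s = fun r => (α * (t - s) ^ (-α - 1)) • (Set.Ioi s).indicator v' r := by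
    intro s
    funext r
    by_cases h : s < r <;> simp [F, Set.indicator, h]
  have hF2 : ∀ r, (fun s => F s r) =
      fun s => (Set.Iio r).indicator (fun s => α * (t - s) ^ (-α - 1)) s • v' r := by
    intro r
    funext s
    by_cases h : s < r <;> simp [F, Set.indicator, h]
  have hset : ∀ r ∈ Set.Ioo 0 t, Set.Ioo 0 t ∩ Set.Iio r = Set.Ioo 0 r := by
    intro r hr
    ext x
    simp only [Set.mem_inter_iff, Set.mem_Ioo, Set.mem_Iio] at *
    constructor
    · rintro ⟨⟨a, b⟩, c⟩; exact ⟨a, c⟩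
    · rintro ⟨a, b⟩; exact ⟨⟨a, b.trans hr.2⟩, b⟩
  have hset' : ∀ s ∈ Set.Ioo 0 t, Set.Ioo 0 t ∩ Set.Ioi s = Set.Ioo s t := by
    intro s hs
    ext x
    simp only [Set.mem_inter_iff, Set.mem_Ioo, Set.mem_Ioi] at *
    constructor
    · rintro ⟨⟨a, b⟩, c⟩; exact ⟨c, b⟩
    · rintro ⟨a, b⟩; exact ⟨⟨hs.1.trans a, b⟩, a⟩
  have hI1 : ∀ s ∈ Set.Ioo 0 t, ∫ r, F s r ∂μ = (α * (t - s) ^ (-α - 1)) • (v t - v s) := by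
    intro s hs
    rw [hF1, integral_smul, hμ, setIntegral_indicator measurableSet_Ioi, hset' s hs,
      hftc s ⟨hs.1.le, hs.2⟩]
  have hI2 : ∀ r ∈ Set.Ioo 0 t, ∫ s, F s r ∂μ = ((t - r) ^ (-α) - t ^ (-α)) • v' r := by
    intro r hr
    rw [hF2, integral_smul_const, hμ, setIntegral_indicator measurableSet_Iio, hset r hr,
      (caputo_aux_kernel α t r hr.1 hr.2).2]
  have hFm : AEStronglyMeasurable (Function.uncurry F) (μ.prod μ) := by
    have : AEStronglyMeasurable (fun p : ℝ × ℝ => (α * (t - p.1) ^ (-α - 1)) • v' p.2)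
        (μ.prod μ) :=
      AEStronglyMeasurable.smul (hkm.comp measurable_fst).aestronglyMeasurable hv'm.comp_snd
    exact this.indicator (measurableSet_lt measurable_fst measurable_snd)
  have hFi : Integrable (Function.uncurry F) (μ.prod μ) := by
    rw [integrable_prod_iff' hFm]
    constructor
    · filter_upwards [hmem] with r hr
      change Integrable (fun s => F s r) μ
      rw [hF2]
      refine Integrable.smul_const ?_ _
      rw [integrable_indicator_iff measurableSet_Iio, IntegrableOn, hμ,
        Measure.restrict_restrict measurableSet_Iio, Set.inter_comm, hset r hr]
      exact (caputo_aux_kernel α t r hr.1 hr.2).1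
    · have hD : Integrable (fun r => (t - r) ^ (-α) * ‖v' r‖ - t ^ (-α) * ‖v' r‖) μ :=
        Integrable.sub hint (hv'i.norm.const_mul _)
      refine hD.congr ?_
      filter_upwards [hmem] with r hr
      change _ = ∫ s, ‖F s r‖ ∂μ
      have : ∫ s, ‖F s r‖ ∂μ =
          ∫ s, (Set.Iio r).indicator (fun s => α * (t - s) ^ (-α - 1)) s * ‖v' r‖ ∂μ := by
        refine integral_congr_ae ?_
        filter_upwards [hmem] with s hs
        have : F s r = (Set.Iio r).indicator (fun s => α * (t - s) ^ (-α - 1)) s • v' r :=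
          congrFun (hF2 r) s
        rw [this, norm_smul, Real.norm_of_nonneg]
        refine Set.indicator_apply_nonneg fun _ => ?_
        exact mul_nonneg hα0.le (rpow_nonneg (by linarith [hs.2]) _)
      rw [this, integral_mul_const, hμ, setIntegral_indicator measurableSet_Iio, hset r hr,
        (caputo_aux_kernel α t r hr.1 hr.2).2]
      ring
  have hA1 : (fun s => ∫ r, F s r ∂μ) =ᵐ[μ]
      fun s => (α * (t - s) ^ (-α - 1)) • (v t - v s) := by
    filter_upwards [hmem] with s hs using hI1 s hs
  have hA2 : (fun r => ∫ s, F s r ∂μ) =ᵐ[μ]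
      fun r => (t - r) ^ (-α) • v' r - t ^ (-α) • v' r := by
    filter_upwards [hmem] with r hr
    rw [hI2 r hr, sub_smul]
  refine ⟨hFi.integral_prod_left.congr hA1, ?_⟩
  have hM : Integrable (fun r => t ^ (-α) • v' r) μ := hv'i.smul _
  have hswap := integral_integral_swap hFi
  rw [integral_congr_ae hA1, integral_congr_ae hA2,
    integral_sub hL hM, integral_smul] at hswap
  have h0 : ∫ r, v' r ∂μ = v t := by
    rw [hμ, hftc 0 ⟨le_rfl, ht⟩, hv0, sub_zero]
  rw [h0] at hswap
  rw [hswap]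
  abel
end

section
/- Let H be a real Hilbert space, α ∈ (0,1), and t > 0. Let v : [0,t] → H be continuous with v(0) = 0, differentiable on the open interval (0,t), and suppose that s ↦ (t−s)^{−α}‖v′(s)‖ is integrable on (0,t). Then the real-valued function s ↦ α(t−s)^{−α−1}(‖v(t)‖ − ‖v(s)‖) is integrable on (0,t), and ⟨∫_0^t (t−s)^{−α} v′(s) ds, v(t)⟩ ≥ ( t^{−α} ‖v(t)‖ + ∫_0^t α (t−s)^{−α−1} (‖v(t)‖ − ‖v(s)‖) ds ) · ‖v(t)‖. -/
open MeasureTheory Real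
open scoped RealInnerProductSpace

/-- The kernel is integrable away from the singularity, with explicit integral. -/
lemma caputo_kernel_integral (α t r : ℝ) (hr : r ∈ Set.Ioo 0 t) :
    IntervalIntegrable (fun s => α * (t - s) ^ (-α - 1)) volume 0 r ∧
    ∫ s in (0:ℝ)..r, α * (t - s) ^ (-α - 1) = (t - r) ^ (-α) - t ^ (-α) := by
  have hI : IntervalIntegrable (fun s => α * (t - s) ^ (-α - 1)) volume 0 r := by
    apply ContinuousOn.intervalIntegrable
    rw [Set.uIcc_of_le hr.1.le]
    refine continuousOn_const.mul (ContinuousOn.rpow_const (by fun_prop) ?_)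
    intro s hs
    left
    have := hs.2
    have := hr.2
    linarith
  refine ⟨hI, ?_⟩
  have h := intervalIntegral.integral_eq_sub_of_hasDerivAt
    (f := fun s => (t - s) ^ (-α)) (f' := fun s => α * (t - s) ^ (-α - 1)) (a := 0) (b := r)
    (fun s hs => by
      rw [Set.uIcc_of_le hr.1.le] at hs
      have hne : t - s ≠ 0 := by
        have := hs.2
        have := hr.2
        linarith
      have h1 : HasDerivAt (fun s : ℝ => t - s) (-1) s := by
        simpa using (hasDerivAt_id s).const_sub t
      have h2 := h1.rpow_const (p := -α) (Or.inl hne)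
      exact h2.congr_deriv (by ring)) hI
  rw [h]
  simp

theorem caputo_fubini
    {H : Type*} [NormedAddCommGroup H] [InnerProductSpace ℝ H] [CompleteSpace H]
    (α t : ℝ) (hα : α ∈ Set.Ioo (0 : ℝ) 1) (ht : 0 < t)
    (v v' : ℝ → H)
    (hv_cont : ContinuousOn v (Set.Icc 0 t))
    (hv0 : v 0 = 0)
    (hderiv : ∀ s ∈ Set.Ioo 0 t, HasDerivAt v (v' s) s)
    (hint : IntegrableOn (fun s => (t - s) ^ (-α) * ‖v' s‖) (Set.Ioo 0 t)) :
    IntegrableOn (fun s => (α * (t - s) ^ (-α - 1)) • (v t - v s)) (Set.Ioo 0 t) ∧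
    ∫ s in Set.Ioo 0 t, (t - s) ^ (-α) • v' s =
      t ^ (-α) • v t + ∫ s in Set.Ioo 0 t, (α * (t - s) ^ (-α - 1)) • (v t - v s) := by
  set μ := volume.restrict (Set.Ioo 0 t) with hμ
  have hmem : ∀ᵐ s ∂μ, s ∈ Set.Ioo 0 t := ae_restrict_mem measurableSet_Ioo
  have hmeas : AEStronglyMeasurable v' μ := by
    refine (stronglyMeasurable_deriv v).aestronglyMeasurable.congr ?_
    filter_upwards [hmem] with s hs using (hderiv s hs).deriv
  have hK : Integrable (fun s => (t - s) ^ (-α) • v' s) μ := by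
    refine Integrable.mono' hint ?_ ?_
    · exact AEStronglyMeasurable.smul
        (Measurable.aestronglyMeasurable (by fun_prop)) hmeas
    · filter_upwards [hmem] with s hs
      rw [norm_smul, Real.norm_of_nonneg (rpow_nonneg (by linarith [hs.2]) _)]
  have hv' : Integrable v' μ := by
    refine Integrable.mono' (hint.const_mul (t ^ α)) hmeas ?_
    filter_upwards [hmem] with s hs
    have hs2 : 0 < t - s := by linarith [hs.2]
    have h1 : 1 ≤ t ^ α * (t - s) ^ (-α) := by
      rw [rpow_neg hs2.le, ← div_eq_mul_inv, one_le_div (rpow_pos_of_pos hs2 _)]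
      exact rpow_le_rpow hs2.le (by linarith [hs.1]) hα.1.le
    calc ‖v' s‖ = 1 * ‖v' s‖ := by ring
      _ ≤ (t ^ α * (t - s) ^ (-α)) * ‖v' s‖ := by gcongr
      _ = _ := by ring
  have hv'I : IntervalIntegrable v' volume 0 t := by
    rw [intervalIntegrable_iff_integrableOn_Ioo_of_le ht.le]
    exact hv'
  have hftc : ∀ s ∈ Set.Icc 0 t, ∫ r in Set.Ioo s t, v' r = v t - v s := by
    intro s hs
    rw [← integral_Ioc_eq_integral_Ioo, ← intervalIntegral.integral_of_le hs.2]
    refine intervalIntegral.integral_eq_sub_of_hasDerivAt_of_le hs.2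
      (hv_cont.mono (Set.Icc_subset_Icc_left hs.1))
      (fun x hx => hderiv x ⟨hs.1.trans_lt hx.1, hx.2⟩) ?_
    refine hv'I.mono_set ?_
    rw [Set.uIcc_of_le hs.2, Set.uIcc_of_le ht.le]
    exact Set.Icc_subset_Icc_left hs.1
  -- the two-variable function
  let k : ℝ × ℝ → ℝ :=
    Set.indicator {p : ℝ × ℝ | p.1 < p.2} (fun p => α * (t - p.1) ^ (-α - 1))
  have hkm : Measurable k := by
    refine Measurable.indicator (by fun_prop) ?_
    exact measurableSet_lt measurable_fst measurable_snd
  let f : ℝ × ℝ → H := fun p => k p • v' p.2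
  have hksec : ∀ r, (fun s => k (s, r)) =
      Set.indicator (Set.Iio r) (fun s => α * (t - s) ^ (-α - 1)) := by
    intro r
    ext s
    simp [k, Set.indicator]
  have hinter : ∀ r ∈ Set.Ioo 0 t, Set.Iio r ∩ Set.Ioo 0 t = Set.Ioo 0 r := by
    intro r hr
    ext s
    simp only [Set.mem_inter_iff, Set.mem_Iio, Set.mem_Ioo]
    have := hr.2
    constructor
    · rintro ⟨h1, h2, h3⟩; exact ⟨h2, h1⟩
    · rintro ⟨h1, h2⟩; exact ⟨h2, h1, h2.trans this⟩
  have hkint : ∀ r ∈ Set.Ioo 0 t, Integrable (fun s => k (s, r)) μ := by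
    intro r hr
    rw [hksec, integrable_indicator_iff measurableSet_Iio, IntegrableOn, hμ,
      Measure.restrict_restrict measurableSet_Iio, hinter r hr]
    have := (caputo_kernel_integral α t r hr).1
    rwa [intervalIntegrable_iff_integrableOn_Ioo_of_le hr.1.le] at this
  have hkval : ∀ r ∈ Set.Ioo 0 t, ∫ s, k (s, r) ∂μ = (t - r) ^ (-α) - t ^ (-α) := by
    intro r hr
    rw [hksec, integral_indicator measurableSet_Iio, hμ,
      Measure.restrict_restrict measurableSet_Iio, hinter r hr,
      ← integral_Ioc_eq_integral_Ioo, ← intervalIntegral.integral_of_le hr.1.le]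
    exact (caputo_kernel_integral α t r hr).2
  have hknn : ∀ r, ∀ s ∈ Set.Ioo 0 t, 0 ≤ k (s, r) := by
    intro r s hs
    refine Set.indicator_apply_nonneg fun _ => ?_
    exact mul_nonneg hα.1.le (rpow_nonneg (by simpa using hs.2.le) _)
  have hfm : AEStronglyMeasurable f (μ.prod μ) :=
    hkm.aestronglyMeasurable.smul hmeas.comp_snd
  have hfint : Integrable f (μ.prod μ) := by
    rw [integrable_prod_iff' hfm]
    constructor
    · filter_upwards [hmem] with r hr
      exact (hkint r hr).smul_const (v' r)
    · have h1 : Integrable (fun r => (t - r) ^ (-α) * ‖v' r‖ - t ^ (-α) * ‖v' r‖) μ :=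
        Integrable.sub hint (hv'.norm.const_mul _)
      refine h1.congr ?_
      filter_upwards [hmem] with r hr
      rw [← sub_mul, ← hkval r hr, ← integral_mul_const]
      refine integral_congr_ae ?_
      filter_upwards [hmem] with s hs
      simp only [f]
      rw [norm_smul, Real.norm_of_nonneg (hknn r s hs)]
  have hinner : ∀ s ∈ Set.Ioo 0 t,
      ∫ r, f (s, r) ∂μ = (α * (t - s) ^ (-α - 1)) • (v t - v s) := by
    intro s hs
    have h1 : (fun r => f (s, r)) =
        Set.indicator (Set.Ioi s) (fun r => (α * (t - s) ^ (-α - 1)) • v' r) := by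
      ext r
      by_cases h : s < r <;> simp [f, k, Set.indicator, h]
    have h2 : Set.Ioi s ∩ Set.Ioo 0 t = Set.Ioo s t := by
      ext r
      simp only [Set.mem_inter_iff, Set.mem_Ioi, Set.mem_Ioo]
      have := hs.1
      constructor
      · rintro ⟨h1, h2, h3⟩; exact ⟨h1, h3⟩
      · rintro ⟨h1, h2⟩; exact ⟨h1, this.trans h1, h2⟩
    rw [h1, integral_indicator measurableSet_Ioi, hμ,
      Measure.restrict_restrict measurableSet_Ioi, h2, integral_smul,
      hftc s ⟨hs.1.le, hs.2.le⟩]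
  have hinner_ae : (fun s => ∫ r, f (s, r) ∂μ) =ᵐ[μ]
      fun s => (α * (t - s) ^ (-α - 1)) • (v t - v s) := by
    filter_upwards [hmem] with s hs using hinner s hs
  refine ⟨hfint.integral_prod_left.congr hinner_ae, ?_⟩
  rw [← integral_congr_ae hinner_ae,
    integral_integral_swap (f := fun s r => f (s, r)) hfint]
  have h3 : ∫ r, (∫ s, f (s, r) ∂μ) ∂μ =
      ∫ r, ((t - r) ^ (-α) • v' r - t ^ (-α) • v' r) ∂μ := by
    refine integral_congr_ae ?_
    filter_upwards [hmem] with r hr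
    simp only [f]
    rw [integral_smul_const, hkval r hr, sub_smul]
  have h4 : ∫ r, v' r ∂μ = v t := by
    rw [hμ, hftc 0 ⟨le_rfl, ht.le⟩, hv0, sub_zero]
  have h5 : Integrable (fun r => t ^ (-α) • v' r) μ := hv'.smul _
  rw [h3, integral_sub hK h5, integral_smul, h4]
  abel

/-- Testing the Caputo derivative of a Hilbert-space-valued function vanishing at `0`
with the function itself is bounded below by the (integrated-by-parts) Caputo
derivative of its norm, times the norm. -/
theorem inner_caputo_ge_caputo_norm
    {H : Type*} [NormedAddCommGroup H] [InnerProductSpace ℝ H] [CompleteSpace H]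
    (α t : ℝ) (hα : α ∈ Set.Ioo (0 : ℝ) 1) (ht : 0 < t)
    (v v' : ℝ → H)
    (hv_cont : ContinuousOn v (Set.Icc 0 t))
    (hv0 : v 0 = 0)
    (hderiv : ∀ s ∈ Set.Ioo 0 t, HasDerivAt v (v' s) s)
    (hint : IntegrableOn (fun s => (t - s) ^ (-α) * ‖v' s‖) (Set.Ioo 0 t)) :
    IntegrableOn (fun s => α * (t - s) ^ (-α - 1) * (‖v t‖ - ‖v s‖)) (Set.Ioo 0 t) ∧
    ⟪(∫ s in Set.Ioo 0 t, (t - s) ^ (-α) • v' s), v t⟫ ≥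
      (t ^ (-α) * ‖v t‖ + ∫ s in Set.Ioo 0 t, α * (t - s) ^ (-α - 1) * (‖v t‖ - ‖v s‖)) * ‖v t‖ := by

  obtain ⟨hI, hE⟩ := caputo_fubini α t hα ht v v' hv_cont hv0 hderiv hint
  have hmem : ∀ᵐ s ∂(volume.restrict (Set.Ioo 0 t)), s ∈ Set.Ioo 0 t :=
    ae_restrict_mem measurableSet_Ioo
  have hnn : ∀ s ∈ Set.Ioo 0 t, 0 ≤ α * (t - s) ^ (-α - 1) := fun s hs =>
    mul_nonneg hα.1.le (rpow_nonneg (by linarith [hs.2]) _)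
  have hJ : IntegrableOn (fun s => α * (t - s) ^ (-α - 1) * (‖v t‖ - ‖v s‖)) (Set.Ioo 0 t) := by
    refine Integrable.mono hI ?_ ?_
    · refine AEStronglyMeasurable.mul
        (Measurable.aestronglyMeasurable (by fun_prop)) (aestronglyMeasurable_const.sub ?_)
      exact ((hv_cont.mono Set.Ioo_subset_Icc_self).aestronglyMeasurable measurableSet_Ioo).norm
    · filter_upwards [hmem] with s hs
      rw [norm_mul, norm_smul]
      exact mul_le_mul_of_nonneg_left (abs_norm_sub_norm_le _ _) (norm_nonneg _)
  refine ⟨hJ, ?_⟩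
  rw [hE, inner_add_left, real_inner_smul_left, real_inner_self_eq_norm_sq, add_mul,
    real_inner_comm, ← integral_inner hI, ← integral_mul_const]
  have h : ∫ s in Set.Ioo 0 t, α * (t - s) ^ (-α - 1) * (‖v t‖ - ‖v s‖) * ‖v t‖ ≤
      ∫ s in Set.Ioo 0 t, ⟪v t, (α * (t - s) ^ (-α - 1)) • (v t - v s)⟫ := by
    refine integral_mono_ae (hJ.mul_const _) (hI.const_inner _) ?_
    filter_upwards [hmem] with s hs
    rw [real_inner_smul_right, inner_sub_right, real_inner_self_eq_norm_sq, mul_assoc]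
    refine mul_le_mul_of_nonneg_left ?_ (hnn s hs)
    nlinarith [real_inner_le_norm (v t) (v s)]
  nlinarith [h]
end

section
/- Let α ∈ (0,1), β := 1−α, τ > 0, and t > 0. Define E₁ : [0,∞) → ℝ by E₁(0) := 0 and E₁(s) := max{τ, s}^{α−1} for s > 0, and define ρ(s) := s^{−β}(1 − (max{1−s, 0})^β) for s > 0. Then t^{−α} E₁(t) + ∫_0^t α (t−s)^{−α−1} (E₁(t) − E₁(s)) ds = t^{−1} ρ(τ/t), where the integral on the left-hand side converges. -/
open MeasureTheory Real

/-- Continuity up to the endpoint of the antiderivative. -/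
lemma aux_cont (α τ t : ℝ) (hα : α ∈ Set.Ioo (0 : ℝ) 1) (hτ : 0 < τ) :
    ContinuousOn (fun s : ℝ => (t - s) ^ (-α) * ((t ^ α - s ^ α) / t)) (Set.Icc τ t) := by
  obtain ⟨h0, h1⟩ := hα
  have hc : ContinuousOn (fun s : ℝ => (t - s) ^ (1 - α) * (dslope (fun x : ℝ => x ^ α) t s / t))
      (Set.Icc τ t) := by
    intro s hs
    have hs0 : 0 < s := lt_of_lt_of_le hτ hs.1
    have ht : 0 < t := lt_of_lt_of_le hs0 hs.2
    apply ContinuousAt.continuousWithinAt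
    apply ContinuousAt.mul
    · exact ContinuousAt.rpow_const (by fun_prop) (Or.inr (by linarith))
    · apply ContinuousAt.div_const
      rcases eq_or_ne s t with rfl | hne
      · rw [continuousAt_dslope_same]
        exact (Real.hasDerivAt_rpow_const (Or.inl ht.ne')).differentiableAt
      · rw [continuousAt_dslope_of_ne hne]
        exact Real.continuousAt_rpow_const _ _ (Or.inl hs0.ne')
  refine hc.congr ?_
  intro s hs
  rcases eq_or_lt_of_le hs.2 with rfl | hlt
  · have : (1 - α) ≠ 0 := by linarith
    simp [Real.zero_rpow this]
  · have hp : 0 < t - s := by linarith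
    have e : (t - s) ^ (1 - α) = (t - s) * (t - s) ^ (-α) := by
      rw [sub_eq_add_neg 1 α, Real.rpow_add hp, Real.rpow_one]
    simp only [dslope_of_ne _ hlt.ne, slope_def_field, e]
    have : s - t ≠ 0 := by linarith
    have : t ≠ 0 := by linarith [hs.1]
    field_simp
    ring

lemma aux_deriv (α s t : ℝ) (hs : 0 < s) (hst : s < t) :
    HasDerivAt (fun s : ℝ => (t - s) ^ (-α) * ((t ^ α - s ^ α) / t))
      (α * (t - s) ^ (-α - 1) * (t ^ (α - 1) - s ^ (α - 1))) s := by
  have hp : 0 < t - s := by linarith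
  have ht : 0 < t := by linarith
  have d1 : HasDerivAt (fun s : ℝ => (t - s) ^ (-α)) ((-1) * (-α) * (t - s) ^ (-α - 1)) s :=
    ((hasDerivAt_id s).const_sub t).rpow_const (Or.inl hp.ne')
  have d2 : HasDerivAt (fun s : ℝ => (t ^ α - s ^ α) / t) (-(α * s ^ (α - 1)) / t) s :=
    ((Real.hasDerivAt_rpow_const (Or.inl hs.ne')).const_sub _).div_const _
  refine (d1.mul d2).congr_deriv ?_
  have e1 : (t - s) ^ (-α) = (t - s) ^ (-α - 1) * (t - s) := by
    rw [← Real.rpow_add_one hp.ne']; ring_nf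
  have e2 : s ^ α = s ^ (α - 1) * s := by
    rw [← Real.rpow_add_one hs.ne']; ring_nf
  have e3 : t ^ α = t ^ (α - 1) * t := by
    rw [← Real.rpow_add_one ht.ne']; ring_nf
  rw [e1, e2, e3]
  field_simp
  ring

lemma aux_second (α τ t : ℝ) (hα : α ∈ Set.Ioo (0 : ℝ) 1) (hτ : 0 < τ) (hτt : τ < t) :
    IntervalIntegrable (fun s => α * (t - s) ^ (-α - 1) * (t ^ (α - 1) - s ^ (α - 1)))
      volume τ t ∧
    ∫ s in τ..t, α * (t - s) ^ (-α - 1) * (t ^ (α - 1) - s ^ (α - 1))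
      = -((t - τ) ^ (-α) * ((t ^ α - τ ^ α) / t)) := by
  have hc := aux_cont α τ t hα hτ
  have hd : ∀ s ∈ Set.Ioo τ t, HasDerivAt (fun s : ℝ => (t - s) ^ (-α) * ((t ^ α - s ^ α) / t))
      (α * (t - s) ^ (-α - 1) * (t ^ (α - 1) - s ^ (α - 1))) s :=
    fun s hs => aux_deriv α s t (hτ.trans hs.1) hs.2
  have hi : IntervalIntegrable (fun s => α * (t - s) ^ (-α - 1) * (t ^ (α - 1) - s ^ (α - 1)))
      volume τ t := by
    rw [intervalIntegrable_iff_integrableOn_Ioc_of_le hτt.le]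
    have := intervalIntegral.integrableOn_deriv_of_nonneg hc.neg (fun s hs => (hd s hs).neg) ?_
    · simpa using this.neg
    · intro s hs
      have h1 : t ^ (α - 1) ≤ s ^ (α - 1) :=
        Real.rpow_le_rpow_of_nonpos (hτ.trans hs.1) hs.2.le (by linarith [hα.2])
      have h2 : 0 ≤ α * (t - s) ^ (-α - 1) :=
        mul_nonneg hα.1.le (Real.rpow_nonneg (by linarith [hs.2]) _)
      have := mul_nonneg h2 (sub_nonneg.2 h1)
      linarith
  refine ⟨hi, ?_⟩
  rw [intervalIntegral.integral_eq_sub_of_hasDerivAt_of_le hτt.le hc hd hi]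
  simp

lemma aux_first (α τ t c : ℝ) (hτ : 0 < τ) (hτt : τ < t) :
    IntervalIntegrable (fun s => α * (t - s) ^ (-α - 1) * c) volume 0 τ ∧
    ∫ s in (0:ℝ)..τ, α * (t - s) ^ (-α - 1) * c = ((t - τ) ^ (-α) - t ^ (-α)) * c := by
  have hp : ∀ s ∈ Set.uIcc 0 τ, 0 < t - s := by
    intro s hs
    rw [Set.uIcc_of_le hτ.le] at hs
    linarith [hs.2]
  have hi : IntervalIntegrable (fun s => α * (t - s) ^ (-α - 1) * c) volume 0 τ := by
    apply ContinuousOn.intervalIntegrable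
    intro s hs
    apply ContinuousAt.continuousWithinAt
    refine (ContinuousAt.mul continuousAt_const ?_).mul continuousAt_const
    exact ContinuousAt.rpow_const (by fun_prop) (Or.inl (hp s hs).ne')
  refine ⟨hi, ?_⟩
  rw [intervalIntegral.integral_eq_sub_of_hasDerivAt (f := fun s => (t - s) ^ (-α) * c) _ hi]
  · simp; ring
  · intro s hs
    have d1 : HasDerivAt (fun s : ℝ => (t - s) ^ (-α)) ((-1) * (-α) * (t - s) ^ (-α - 1)) s :=
      ((hasDerivAt_id s).const_sub t).rpow_const (Or.inl (hp s hs).ne')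
    refine (d1.mul_const c).congr_deriv ?_
    ring

/-- The Caputo derivative (in integrated-by-parts form) of the barrier function
`E₁(t) = max{τ, t}^(α-1)` (with `E₁(0) = 0`) equals `t⁻¹ ρ(τ/t)`, where
`ρ(s) = s^(-β) (1 - ((1-s)⁺)^β)` and `β = 1 - α`. -/
theorem caputo_barrier_E1 (α β τ t : ℝ) (hα : α ∈ Set.Ioo (0 : ℝ) 1) (hβ : β = 1 - α)
    (hτ : 0 < τ) (ht : 0 < t)
    (E₁ : ℝ → ℝ) (hE₁0 : E₁ 0 = 0)
    (hE₁ : ∀ s : ℝ, 0 < s → E₁ s = max τ s ^ (α - 1))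
    (ρ : ℝ → ℝ) (hρ : ∀ s : ℝ, 0 < s → ρ s = s ^ (-β) * (1 - max (1 - s) 0 ^ β)) :
    IntegrableOn (fun s => α * (t - s) ^ (-α - 1) * (E₁ t - E₁ s)) (Set.Ioo 0 t) ∧
    t ^ (-α) * E₁ t + ∫ s in Set.Ioo 0 t, α * (t - s) ^ (-α - 1) * (E₁ t - E₁ s)
      = t⁻¹ * ρ (τ / t) := by
  have hta : t ^ (-α) = t⁻¹ * t ^ (1 - α) := by
    rw [← Real.rpow_neg_one, ← Real.rpow_add ht]; ring_nf
  have hdiv : (τ / t) ^ (-β) = τ ^ (α - 1) * t ^ (1 - α) := by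
    rw [Real.div_rpow hτ.le ht.le, hβ, neg_sub, div_eq_mul_inv, ← Real.rpow_neg ht.le, neg_sub]
  rw [hρ _ (div_pos hτ ht), hdiv, hE₁ t ht]
  rcases le_or_gt t τ with h | h
  · have hz : Set.EqOn (fun s => α * (t - s) ^ (-α - 1) * (max τ t ^ (α - 1) - E₁ s))
        (fun _ => 0) (Set.Ioo 0 t) := by
      intro s hs
      simp only [hE₁ s hs.1, max_eq_left h, max_eq_left (hs.2.le.trans h), sub_self, mul_zero]
    refine ⟨(integrableOn_congr_fun hz measurableSet_Ioo).2 integrableOn_zero, ?_⟩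
    rw [setIntegral_congr_fun measurableSet_Ioo hz]
    have h1 : max (1 - τ / t) 0 = 0 := by
      apply max_eq_right
      have := (one_le_div ht).2 h
      linarith
    have h2 : β ≠ 0 := by linarith [hα.2]
    rw [h1, Real.zero_rpow h2, max_eq_left h, hta]
    simp
    ring
  · obtain ⟨i2, v2⟩ := aux_second α τ t hα hτ h
    obtain ⟨i1, v1⟩ := aux_first α τ t (t ^ (α - 1) - τ ^ (α - 1)) hτ h
    rw [max_eq_right h.le]
    have c1 : Set.EqOn (fun s => α * (t - s) ^ (-α - 1) * (t ^ (α - 1) - τ ^ (α - 1)))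
        (fun s => α * (t - s) ^ (-α - 1) * (t ^ (α - 1) - E₁ s)) (Set.uIoc 0 τ) := by
      intro s hs
      rw [Set.uIoc_of_le hτ.le] at hs
      simp only [hE₁ s hs.1, max_eq_left hs.2]
    have c2 : Set.EqOn (fun s => α * (t - s) ^ (-α - 1) * (t ^ (α - 1) - s ^ (α - 1)))
        (fun s => α * (t - s) ^ (-α - 1) * (t ^ (α - 1) - E₁ s)) (Set.uIoc τ t) := by
      intro s hs
      rw [Set.uIoc_of_le h.le] at hs
      simp only [hE₁ s (hτ.trans hs.1), max_eq_right hs.1.le]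
    have j1 := i1.congr c1
    have j2 := i2.congr c2
    rw [intervalIntegral.integral_congr_ae (Filter.Eventually.of_forall fun s hs => c1 hs)] at v1
    rw [intervalIntegral.integral_congr_ae (Filter.Eventually.of_forall fun s hs => c2 hs)] at v2
    have j := j1.trans j2
    have v := intervalIntegral.integral_add_adjacent_intervals j1 j2
    rw [intervalIntegrable_iff_integrableOn_Ioo_of_le ht.le] at j
    refine ⟨j, ?_⟩
    rw [← integral_Ioc_eq_integral_Ioo, ← intervalIntegral.integral_of_le ht.le, ← v, v1, v2]
    have hp : 0 < t - τ := by linarith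
    have hm : max (1 - τ / t) 0 = (t - τ) / t := by
      rw [max_eq_left]
      · field_simp
      · have := (div_le_one ht).2 h.le
        linarith
    have e1 : (t - τ) ^ (1 - α) = (t - τ) * (t - τ) ^ (-α) := by
      rw [sub_eq_add_neg 1 α, Real.rpow_add hp, Real.rpow_one]
    have e2 : τ ^ α = τ ^ (α - 1) * τ := by
      rw [← Real.rpow_add_one hτ.ne']; ring_nf
    have e3 : t ^ α = t ^ (α - 1) * t := by
      rw [← Real.rpow_add_one ht.ne']; ring_nf
    have e4 : t ^ (1 - α) = (t ^ (α - 1))⁻¹ := by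
      rw [← Real.rpow_neg ht.le, neg_sub]
    have hpos : 0 < t ^ (α - 1) := Real.rpow_pos_of_pos ht _
    rw [hm, hβ, Real.div_rpow hp.le ht.le, hta, e1, e2, e3, e4]
    generalize t ^ (α - 1) = A at *
    generalize τ ^ (α - 1) = B at *
    generalize (t - τ) ^ (-α) = C at *
    field_simp
    ring
end

section
/- Let α ∈ (0,1), β := 1−α, and let 0 < τ < t. Then β ∫_τ^t s^{−β−1} (t−s)^{−α} ds = τ^{−β} (t−τ)^β / t. -/
open MeasureTheory Real

/-- Explicit evaluation of the integral underlying the Caputo derivative of the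
barrier function `max{τ, t}^(α-1)`: for `β = 1 - α` and `0 < τ < t`,
`β ∫_τ^t s^(-β-1) (t-s)^(-α) ds = τ^(-β) (t-τ)^β / t`. -/
theorem barrier_integral_eval (α β τ t : ℝ) (hα : α ∈ Set.Ioo (0 : ℝ) 1) (hβ : β = 1 - α)
    (hτ : 0 < τ) (hτt : τ < t) :
    β * ∫ s in Set.Ioo τ t, s ^ (-β - 1) * (t - s) ^ (-α)
      = τ ^ (-β) * (t - τ) ^ β / t := by
  obtain ⟨hα0, hα1⟩ := hα
  have hβ0 : 0 < β := by linarith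
  have ht : 0 < t := hτ.trans hτt
  have hαβ : -α = β - 1 := by linarith
  rw [hαβ, ← integral_const_mul, ← integral_Ioc_eq_integral_Ioo,
    ← intervalIntegral.integral_of_le hτt.le]
  have hcont : ContinuousOn (fun s : ℝ => -(s ^ (-β) * (t - s) ^ β / t)) (Set.Icc τ t) := by
    refine ContinuousOn.neg (ContinuousOn.div_const (ContinuousOn.mul ?_ ?_) _)
    · exact continuousOn_id.rpow_const fun x hx => Or.inl (hτ.trans_le hx.1).ne'
    · exact (continuousOn_const.sub continuousOn_id).rpow_const fun x hx => Or.inr hβ0.le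
  have hderiv : ∀ x ∈ Set.Ioo τ t, HasDerivAt (fun s : ℝ => -(s ^ (-β) * (t - s) ^ β / t))
      (β * (x ^ (-β - 1) * (t - x) ^ (β - 1))) x := by
    intro x hx
    have hx0 : 0 < x := hτ.trans hx.1
    have htx : 0 < t - x := sub_pos.2 hx.2
    have h1 : HasDerivAt (fun s : ℝ => s ^ (-β)) (-β * x ^ (-β - 1)) x :=
      Real.hasDerivAt_rpow_const (Or.inl hx0.ne')
    have h2 : HasDerivAt (fun s : ℝ => (t - s) ^ β) (-1 * β * (t - x) ^ (β - 1)) x :=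
      ((hasDerivAt_id x).const_sub t).rpow_const (Or.inl htx.ne')
    have e1 : x ^ (-β) = x ^ (-β - 1) * x := by
      rw [← Real.rpow_add_one hx0.ne']; ring_nf
    have e2 : (t - x) ^ β = (t - x) ^ (β - 1) * (t - x) := by
      rw [← Real.rpow_add_one htx.ne']; ring_nf
    refine ((h1.mul h2).div_const t).neg.congr_deriv ?_
    rw [e1, e2]
    field_simp
    ring
  have hint : IntervalIntegrable (fun x : ℝ => β * (x ^ (-β - 1) * (t - x) ^ (β - 1)))
      volume τ t := by
    rw [intervalIntegrable_iff_integrableOn_Ioc_of_le hτt.le]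
    refine intervalIntegral.integrableOn_deriv_of_nonneg hcont hderiv fun x hx => ?_
    have hx0 : 0 < x := hτ.trans hx.1
    have htx : 0 < t - x := sub_pos.2 hx.2
    positivity
  rw [intervalIntegral.integral_eq_sub_of_hasDerivAt_of_le hτt.le hcont hderiv hint]
  simp [Real.zero_rpow hβ0.ne']
end

section
/- Let α ∈ (0,1), λ ∈ ℝ, and T > 0. Let φ : [0,T] → ℝ be continuous, nonnegative, with φ(0) = 0, and Lipschitz continuous on [ε, T] for every ε ∈ (0,T). Let r : (0,T] → ℝ be nonnegative and continuous, with s ↦ (t−s)^{α−1} E_{α,α}(−λ(t−s)^α) r(s) integrable on (0,t) for every t ∈ (0,T]. Suppose that for every t ∈ (0,T]: (1/Γ(1−α)) ( t^{−α} φ(t) + ∫_0^t α (t−s)^{−α−1} (φ(t) − φ(s)) ds ) + λ φ(t) ≤ r(t). Then for every t ∈ (0,T]: φ(t) ≤ ∫_0^t (t−s)^{α−1} E_{α,α}(−λ(t−s)^α) r(s) ds. -/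
open MeasureTheory Real

/-- The generalized Mittag-Leffler function `E_{a,b}(z) = ∑_{k≥0} z^k / Γ(ak + b)`. -/
noncomputable def mittagLeffler (a b z : ℝ) : ℝ := ∑' k : ℕ, z ^ k / Real.Gamma (a * k + b)

open MeasureTheory Real


/-- The fractional integration kernel. -/
noncomputable def kk (b t : ℝ) : ℝ := t ^ (b - 1) / Real.Gamma b

lemma kk_pos {b t : ℝ} (hb : 0 < b) (ht : 0 < t) : 0 < kk b t :=
  div_pos (Real.rpow_pos_of_pos ht _) (Real.Gamma_pos_of_pos hb)

lemma kk_conv_integral {a b t : ℝ} (ha : 0 < a) (hb : 0 < b) (ht : 0 < t) :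
    ∫ s in Set.Ioo 0 t, kk b (t - s) * kk a s = kk (a + b) t := by
  have h1 := Complex.betaIntegral_scaled (a : ℂ) (b : ℂ) ht
  rw [Complex.betaIntegral_eq_Gamma_mul_div (a : ℂ) (b : ℂ) (by simpa) (by simpa)] at h1
  rw [intervalIntegral.integral_of_le ht.le, integral_Ioc_eq_integral_Ioo] at h1
  have h2 : ∫ x in Set.Ioo 0 t, (x : ℂ) ^ ((a : ℂ) - 1) * ((t : ℂ) - x) ^ ((b : ℂ) - 1)
      = ((∫ x in Set.Ioo 0 t, x ^ (a - 1) * (t - x) ^ (b - 1) : ℝ) : ℂ) := by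
    rw [← integral_complex_ofReal]
    refine setIntegral_congr_fun measurableSet_Ioo fun x hx => ?_
    rw [Complex.ofReal_mul, Complex.ofReal_cpow hx.1.le, Complex.ofReal_cpow (by linarith [hx.2])]
    push_cast
    rfl
  rw [h2] at h1
  have h3 : (t : ℂ) ^ ((a : ℂ) + b - 1) = ((t ^ (a + b - 1) : ℝ) : ℂ) := by
    rw [Complex.ofReal_cpow ht.le]; push_cast; rfl
  rw [h3, ← Complex.ofReal_add, Complex.Gamma_ofReal, Complex.Gamma_ofReal,
    Complex.Gamma_ofReal] at h1
  norm_cast at h1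
  have hga := (Real.Gamma_pos_of_pos ha).ne'
  have hgb := (Real.Gamma_pos_of_pos hb).ne'
  have : ∀ s, kk b (t - s) * kk a s
      = (1 / (Gamma a * Gamma b)) * (s ^ (a - 1) * (t - s) ^ (b - 1)) := by
    intro s; unfold kk; field_simp
  simp_rw [this]
  rw [integral_const_mul, h1]
  unfold kk
  field_simp

lemma kk_conv_integrable {a b t : ℝ} (ha : 0 < a) (hb : 0 < b) (ht : 0 < t) :
    IntegrableOn (fun s => kk b (t - s) * kk a s) (Set.Ioo 0 t) := by
  by_contra h
  have h1 := kk_conv_integral ha hb ht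
  rw [integral_undef h] at h1
  exact (kk_pos (add_pos ha hb) ht).ne h1

lemma Gamma_lower {A x : ℝ} (hA : 0 < A) (hx : 1 ≤ x) :
    A ^ (x - 1) * exp (-A) ≤ Real.Gamma x := by
  rw [Real.Gamma_eq_integral (by linarith)]
  have hGint := Real.GammaIntegral_convergent (s := x) (by linarith)
  calc A ^ (x - 1) * exp (-A) = ∫ t in Set.Ioi A, A ^ (x - 1) * exp (-t) := by
        rw [integral_const_mul, integral_exp_neg_Ioi]
    _ ≤ ∫ t in Set.Ioi A, exp (-t) * t ^ (x - 1) := by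
        refine setIntegral_mono_on ?_ (hGint.mono_set (Set.Ioi_subset_Ioi hA.le))
          measurableSet_Ioi ?_
        · exact (integrableOn_exp_neg_Ioi A).const_mul _
        · intro t ht
          rw [mul_comm]
          have : A ≤ t := le_of_lt ht
          gcongr
    _ ≤ _ := by
        refine setIntegral_mono_set hGint ?_ (Set.Ioi_subset_Ioi hA.le).eventuallyLE
        refine (ae_restrict_iff' measurableSet_Ioi).2 (Filter.Eventually.of_forall fun t ht => ?_)
        have : (0:ℝ) < t := ht
        simp only [Pi.zero_apply]; positivity

lemma ML_summable {α b : ℝ} (hα : 0 < α) (hb : 0 < b) (z : ℝ) :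
    Summable (fun n : ℕ => |z| ^ n / Real.Gamma (α * n + b)) := by
  obtain ⟨A, hA, hAz⟩ : ∃ A : ℝ, 0 < A ∧ A ^ α = 2 * (|z| + 1) :=
    ⟨(2 * (|z| + 1)) ^ (1 / α), by positivity, by
      rw [← Real.rpow_mul (by positivity)]; field_simp; simp⟩
  obtain ⟨N, hN⟩ := exists_nat_gt (1 / α)
  rw [← summable_nat_add_iff N]
  have hg : Summable (fun n : ℕ => (exp A * A ^ (1 - b)) * (1/2 : ℝ) ^ n) :=
    (summable_geometric_of_lt_one (by norm_num) (by norm_num)).mul_left _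
  have hg' := (summable_nat_add_iff N).2 hg
  refine Summable.of_nonneg_of_le (fun n => ?_) (fun n => ?_) hg'
  · have : 0 < Gamma (α * ((n + N : ℕ):ℝ) + b) := Gamma_pos_of_pos (by positivity)
    positivity
  · set m := n + N with hm
    have hmN : (N : ℝ) ≤ m := by rw [hm]; push_cast; linarith [Nat.cast_nonneg (α := ℝ) n]
    have h1 : 1 ≤ α * m + b := by
      have : 1 < α * N := by rw [div_lt_iff₀ hα] at hN; linarith
      nlinarith
    have h2 := Gamma_lower hA h1
    have h3 : A ^ (α * m + b - 1) = (2 * (|z| + 1)) ^ m / A ^ (1 - b) := by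
      rw [← hAz, ← Real.rpow_natCast, ← Real.rpow_mul hA.le, ← Real.rpow_sub hA]; ring_nf
    have hp : 0 < A ^ (α * m + b - 1) * exp (-A) := by positivity
    calc |z| ^ m / Gamma (α * m + b) ≤ |z| ^ m / (A ^ (α * m + b - 1) * exp (-A)) := by gcongr
      _ ≤ (|z| + 1) ^ m / (A ^ (α * m + b - 1) * exp (-A)) := by gcongr; linarith
      _ = _ := by
        rw [h3, exp_neg, mul_pow]
        field_simp
        rw [← mul_pow]; norm_num

lemma ML_continuous {α b : ℝ} (hα : 0 < α) (hb : 0 < b) :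
    Continuous (mittagLeffler α b) := by
  rw [continuous_iff_continuousAt]
  intro z
  have h : ContinuousOn (mittagLeffler α b) (Set.Ioo (-(|z|+1)) (|z|+1)) := by
    unfold mittagLeffler
    refine continuousOn_tsum (fun n => by fun_prop) (ML_summable hα hb (|z| + 1)) ?_
    intro n x hx
    have hg : 0 < Gamma (α * n + b) := Gamma_pos_of_pos (by positivity)
    rw [norm_div, norm_pow, Real.norm_eq_abs, Real.norm_eq_abs, abs_of_pos hg,
      abs_of_nonneg (show 0 ≤ |z| + 1 by positivity)]
    have : |x| ≤ |z| + 1 := (abs_lt.2 ⟨hx.1, hx.2⟩).le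
    gcongr
  refine h.continuousAt (Ioo_mem_nhds ?_ ?_)
  · linarith [neg_abs_le z]
  · linarith [le_abs_self z]

/-- Generalized Mittag-Leffler kernels. -/
noncomputable def SS (α lam b t : ℝ) : ℝ := ∑' n : ℕ, (-lam) ^ n * kk (α * n + b) t

lemma SS_term {α lam b t : ℝ} (ht : 0 < t) (n : ℕ) :
    lam ^ n * kk (α * n + b) t
      = t ^ (b - 1) * ((lam * t ^ α) ^ n / Gamma (α * n + b)) := by
  unfold kk
  rw [mul_pow, ← Real.rpow_natCast (t ^ α), ← Real.rpow_mul ht.le,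
    show α * n + b - 1 = (b - 1) + α * n by ring, Real.rpow_add ht]
  ring

lemma SS_summable {α b t : ℝ} (lam : ℝ) (hα : 0 < α) (hb : 0 < b) (ht : 0 < t) :
    Summable (fun n : ℕ => |lam| ^ n * kk (α * n + b) t) := by
  simp_rw [SS_term ht]
  have := (ML_summable hα hb (|lam| * t ^ α)).mul_left (t ^ (b - 1))
  rw [abs_of_nonneg (by positivity)] at this
  exact this

lemma SS_summable' {α b t : ℝ} (lam : ℝ) (hα : 0 < α) (hb : 0 < b) (ht : 0 < t) :
    Summable (fun n : ℕ => (-lam) ^ n * kk (α * n + b) t) := by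
  refine Summable.of_norm ?_
  refine (SS_summable lam hα hb ht).congr fun n => ?_
  rw [norm_mul, norm_pow, norm_neg, Real.norm_eq_abs, Real.norm_eq_abs,
    abs_of_pos (kk_pos (by positivity) ht)]

lemma SS_eq_ML {α lam b t : ℝ} (ht : 0 < t) :
    t ^ (b - 1) * mittagLeffler α b (-lam * t ^ α) = SS α lam b t := by
  unfold SS mittagLeffler
  simp_rw [SS_term ht]
  rw [tsum_mul_left]

lemma SS_continuousOn {α b : ℝ} (lam : ℝ) (hα : 0 < α) (hb : 0 < b) :
    ContinuousOn (SS α lam b) (Set.Ioi 0) := by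
  have h : ContinuousOn (fun t : ℝ => t ^ (b - 1) * mittagLeffler α b (-lam * t ^ α))
      (Set.Ioi 0) := by
    have h1 : ∀ c : ℝ, ContinuousOn (fun t : ℝ => t ^ c) (Set.Ioi 0) := fun c t ht =>
      (Real.continuousAt_rpow_const t c (Or.inl (ne_of_gt ht))).continuousWithinAt
    exact (h1 _).mul ((ML_continuous hα hb).comp_continuousOn (continuousOn_const.mul (h1 _)))
  exact h.congr fun t ht => (SS_eq_ML ht).symm

lemma kk_continuousOn (b : ℝ) : ContinuousOn (kk b) (Set.Ioi 0) := fun t ht =>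
  ((Real.continuousAt_rpow_const t (b - 1) (Or.inl (ne_of_gt ht))).div_const _).continuousWithinAt

lemma SS_abs_le {α b t : ℝ} (lam : ℝ) (hα : 0 < α) (hb : 0 < b) (ht : 0 < t) :
    |SS α lam b t| ≤ SS α (-|lam|) b t := by
  have h : ∀ n : ℕ, ‖(-lam) ^ n * kk (α * n + b) t‖ = |lam| ^ n * kk (α * n + b) t := fun n => by
    rw [norm_mul, norm_pow, norm_neg, Real.norm_eq_abs, Real.norm_eq_abs,
      abs_of_pos (kk_pos (by positivity) ht)]
  unfold SS
  rw [← Real.norm_eq_abs, neg_neg]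
  refine (norm_tsum_le_tsum_norm ?_).trans (le_of_eq ?_)
  · simp_rw [h]; exact SS_summable lam hα hb ht
  · simp_rw [h]

lemma SS_neg_pos {α b t lam : ℝ} (hlam : lam ≤ 0) (hα : 0 < α) (hb : 0 < b) (ht : 0 < t) :
    0 < SS α lam b t := by
  unfold SS
  have hl : 0 ≤ -lam := by linarith
  refine (SS_summable' lam hα hb ht).tsum_pos (fun n => ?_) 0 ?_
  · have := kk_pos (b := α * n + b) (by positivity) ht
    positivity
  · simpa using kk_pos hb ht

lemma SS_rec {α b t : ℝ} (lam : ℝ) (hα : 0 < α) (hb : 0 < b) (ht : 0 < t) :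
    SS α lam b t = kk b t - lam * SS α lam (b + α) t := by
  have h := (SS_summable' lam hα hb ht).tsum_eq_zero_add
  unfold SS
  rw [h, ← tsum_mul_left, sub_eq_add_neg, ← tsum_neg]
  congr 1
  · simp
  · congr 1; ext n
    push_cast
    rw [show α * (n + 1) + b = α * n + (b + α) by ring, pow_succ]
    ring

lemma SS_conv_integral {α a b t : ℝ} (lam : ℝ) (hα : 0 < α) (ha : 0 < a) (hb : 0 < b) (ht : 0 < t) :
    ∫ s in Set.Ioo 0 t, kk b (t - s) * SS α lam a s = SS α lam (a + b) t := by
  let F : ℕ → ℝ → ℝ := fun n s => (-lam) ^ n * (kk b (t - s) * kk (α * n + a) s)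
  have hFi : ∀ n, IntegrableOn (F n) (Set.Ioo 0 t) := fun n =>
    (kk_conv_integrable (a := α * n + a) (by positivity) hb ht).const_mul _
  have hFn : ∀ n, ∫ s in Set.Ioo 0 t, F n s = (-lam) ^ n * kk (α * n + (a + b)) t := by
    intro n
    simp only [F]
    rw [integral_const_mul, kk_conv_integral (by positivity) hb ht, add_assoc]
  have hFnorm : ∀ n, ∫ s in Set.Ioo 0 t, ‖F n s‖ = |lam| ^ n * kk (α * n + (a + b)) t := by
    intro n
    rw [← add_assoc, ← kk_conv_integral (by positivity) hb ht, ← integral_const_mul]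
    refine setIntegral_congr_fun measurableSet_Ioo fun s hs => ?_
    simp only [F]
    rw [norm_mul, norm_pow, norm_neg, Real.norm_eq_abs, Real.norm_eq_abs,
      abs_of_pos (mul_pos (kk_pos hb (by linarith [hs.2])) (kk_pos (by positivity) hs.1))]
  have hsum : Summable fun n => ∫ s in Set.Ioo 0 t, ‖F n s‖ := by
    simp_rw [hFnorm]
    exact SS_summable lam hα (add_pos ha hb) ht
  have hF : ∀ s ∈ Set.Ioo 0 t, ∑' n, F n s = kk b (t - s) * SS α lam a s := by
    intro s hs
    unfold SS
    rw [← tsum_mul_left]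
    congr 1; ext n; simp only [F]; ring
  rw [← setIntegral_congr_fun measurableSet_Ioo hF, ← integral_tsum_of_summable_integral_norm hFi hsum]
  simp_rw [hFn]
  rfl

lemma SS_conv_integrable {α a b t : ℝ} (lam : ℝ) (hα : 0 < α) (ha : 0 < a) (hb : 0 < b)
    (ht : 0 < t) :
    IntegrableOn (fun s => kk b (t - s) * SS α lam a s) (Set.Ioo 0 t) := by
  have h1 : IntegrableOn (fun s => kk b (t - s) * SS α (-|lam|) a s) (Set.Ioo 0 t) := by
    by_contra h
    have h1 := SS_conv_integral (-|lam|) hα ha hb ht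
    rw [integral_undef h] at h1
    exact (SS_neg_pos (by simp) hα (add_pos ha hb) ht).ne h1
  refine Integrable.mono' h1 ?_ ?_
  · refine ContinuousOn.aestronglyMeasurable ?_ measurableSet_Ioo
    refine ContinuousOn.mul ?_ ((SS_continuousOn lam hα ha).mono fun s hs => hs.1)
    exact (kk_continuousOn b).comp (by fun_prop) fun s hs => by
      simpa using hs.2
  · refine (ae_restrict_iff' measurableSet_Ioo).2 (Filter.Eventually.of_forall fun s hs => ?_)
    have hk := kk_pos hb (show 0 < t - s by linarith [hs.2])
    rw [norm_mul, Real.norm_eq_abs, Real.norm_eq_abs, abs_of_pos hk]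
    exact mul_le_mul_of_nonneg_left (SS_abs_le lam hα ha hs.1) hk.le
open MeasureTheory Real

lemma SS_pos_near_zero {α : ℝ} (lam : ℝ) (hα : 0 < α) :
    ∃ δ > 0, ∀ t, 0 < t → t < δ → 0 < SS α lam α t := by
  have hc : ContinuousAt (fun t : ℝ => mittagLeffler α α (-lam * t ^ α)) 0 := by
    refine (ML_continuous hα hα).continuousAt.comp ?_
    exact continuousAt_const.mul (Real.continuousAt_rpow_const 0 α (Or.inr hα.le))
  have h0 : 0 < mittagLeffler α α (-lam * (0:ℝ) ^ α) := by
    rw [Real.zero_rpow hα.ne', mul_zero]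
    unfold mittagLeffler
    rw [tsum_eq_single 0 (fun n hn => by simp [hn])]
    simp [Gamma_pos_of_pos hα]
  obtain ⟨δ, hδ, h⟩ := Metric.eventually_nhds_iff.1 (hc.eventually (lt_mem_nhds h0))
  refine ⟨δ, hδ, fun t ht htd => ?_⟩
  rw [← SS_eq_ML ht]
  exact mul_pos (rpow_pos_of_pos ht _) (h (by simpa [abs_of_pos ht] using htd))

lemma kk_tail_integral {α t t0 : ℝ} (hα : 0 < α) (h : t ≤ t0) :
    IntegrableOn (fun s => kk α (t0 - s)) (Set.Ioo t t0) ∧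
    ∫ s in Set.Ioo t t0, kk α (t0 - s) = (t0 - t) ^ α / (α * Gamma α) := by
  constructor
  · have h1 : IntervalIntegrable (fun s : ℝ => s ^ (α - 1)) volume (t0 - t) (t0 - t0) :=
      intervalIntegral.intervalIntegrable_rpow' (by linarith)
    have h2 := (h1.comp_sub_left t0).div_const (Gamma α)
    simp only [sub_sub_cancel] at h2
    exact ((intervalIntegrable_iff_integrableOn_Ioo_of_le h).1 h2)
  · rw [← integral_Ioc_eq_integral_Ioo, ← intervalIntegral.integral_of_le h]
    rw [intervalIntegral.integral_comp_sub_left (fun s => kk α s)]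
    unfold kk
    rw [intervalIntegral.integral_div, integral_rpow (Or.inl (by linarith))]
    simp [hα.ne']
    field_simp

lemma kk_logconvex {α s t t0 : ℝ} (hα : α ∈ Set.Ioo (0:ℝ) 1) (hs : 0 < s) (hst : s < t)
    (ht : t < t0) : kk α (t0 - s) ≤ kk α t0 / kk α t * kk α (t - s) := by
  have hg := Gamma_pos_of_pos hα.1
  have ht' : 0 < t := hs.trans hst
  have ht0' : 0 < t0 := ht'.trans ht
  have h1 : ((t0 - s) * t) ^ (α - 1) ≤ ((t - s) * t0) ^ (α - 1) := by
    refine Real.rpow_le_rpow_of_nonpos (mul_pos (by linarith) ht0') ?_ (by linarith [hα.2])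
    nlinarith
  rw [Real.mul_rpow (by linarith) ht'.le, Real.mul_rpow (by linarith) ht0'.le] at h1
  have hp : 0 < t ^ (α - 1) := rpow_pos_of_pos ht' _
  unfold kk
  rw [div_div_div_cancel_right₀ hg.ne', ← mul_div_assoc]
  gcongr
  rw [div_mul_eq_mul_div, le_div_iff₀ hp]
  linarith

lemma SS_pos {α lam t : ℝ} (hα : α ∈ Set.Ioo (0:ℝ) 1) (ht : 0 < t) : 0 < SS α lam α t := by
  rcases le_or_gt lam 0 with hl | hl
  · exact SS_neg_pos hl hα.1 hα.1 ht
  by_contra hneg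
  push Not at hneg
  have hα0 := hα.1
  have hg := Gamma_pos_of_pos hα0
  obtain ⟨δ, hδ, hδK⟩ := SS_pos_near_zero lam hα0
  have hcont := SS_continuousOn lam hα0 hα0
  set K := SS α lam α with hK
  -- first zero
  obtain ⟨t0, ht0, hKt0, hlt⟩ : ∃ t0, 0 < t0 ∧ K t0 ≤ 0 ∧ ∀ s, 0 < s → s < t0 → 0 < K s := by
    let S := Set.Ici δ ∩ K ⁻¹' Set.Iic 0
    have hSc : IsClosed S :=
      (hcont.mono fun x (hx : δ ≤ x) => lt_of_lt_of_le hδ hx).preimage_isClosed_of_isClosed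
        isClosed_Ici isClosed_Iic
    have hSb : BddBelow S := ⟨δ, fun x hx => hx.1⟩
    have hSn : S.Nonempty := ⟨t, by
      by_contra h
      exact absurd (hδK t ht (not_le.1 h)) (not_lt.2 hneg), hneg⟩
    have hm := hSc.csInf_mem hSn hSb
    refine ⟨sInf S, lt_of_lt_of_le hδ hm.1, hm.2, fun s hs hsl => ?_⟩
    by_contra h
    rcases lt_or_ge s δ with h1 | h1
    · exact h (hδK s hs h1)
    · exact absurd (csInf_le hSb ⟨h1, not_lt.1 h⟩) (not_le.2 hsl)
  -- choose t1
  have hev : ∀ᶠ t in nhds t0, lam * ((t0 - t) ^ α / (α * Gamma α)) < kk α t0 / kk α t := by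
    have hc1 : ContinuousAt (fun t => lam * ((t0 - t) ^ α / (α * Gamma α))) t0 := by
      refine continuousAt_const.mul (ContinuousAt.div_const ?_ _)
      exact (continuousAt_const.sub continuousAt_id).rpow_const (Or.inr hα0.le)
    have hkp := kk_pos hα0 ht0
    have hc2 : ContinuousAt (fun t => kk α t0 / kk α t) t0 :=
      continuousAt_const.div ((kk_continuousOn α).continuousAt (Ioi_mem_nhds ht0)) hkp.ne'
    refine hc1.eventually_lt hc2 ?_
    simp only [sub_self]
    rw [Real.zero_rpow hα0.ne', div_self hkp.ne']; simp
  obtain ⟨ε, hε, hev⟩ := Metric.eventually_nhds_iff.1 hev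
  set t1 := max (t0 / 2) (t0 - ε / 2) with ht1
  have ht1pos : 0 < t1 := lt_of_lt_of_le (by linarith) (le_max_left _ _)
  have ht1lt : t1 < t0 := max_lt (by linarith) (by linarith)
  obtain ⟨tm, htm, hmax⟩ := isCompact_Icc.exists_isMaxOn (Set.nonempty_Icc.2 ht1lt.le)
    (hcont.mono fun x (hx : x ∈ Set.Icc t1 t0) => lt_of_lt_of_le ht1pos hx.1)
  have hKtm : 0 < K tm := lt_of_lt_of_le (hlt t1 ht1pos ht1lt) (hmax ⟨le_rfl, ht1lt.le⟩)
  have htm0 : tm < t0 := lt_of_le_of_ne htm.2 (by rintro rfl; linarith)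
  have htmpos : 0 < tm := lt_of_lt_of_le ht1pos htm.1
  have hineq := hev (y := tm) (by
    rw [Real.dist_eq, abs_lt]
    have : t0 - ε / 2 ≤ tm := (le_max_right _ _).trans htm.1
    constructor <;> linarith)

  have e0 : K t0 = kk α t0 - lam * ∫ s in Set.Ioo 0 t0, kk α (t0 - s) * K s := by
    rw [SS_conv_integral lam hα0 hα0 hα0 ht0, ← SS_rec lam hα0 hα0 ht0]
  have em : K tm = kk α tm - lam * ∫ s in Set.Ioo 0 tm, kk α (tm - s) * K s := by
    rw [SS_conv_integral lam hα0 hα0 hα0 htmpos, ← SS_rec lam hα0 hα0 htmpos]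
  have i0 := SS_conv_integrable lam hα0 hα0 hα0 ht0
  have im := SS_conv_integrable lam hα0 hα0 hα0 htmpos
  have hsplit : ∫ s in Set.Ioo 0 t0, kk α (t0 - s) * K s
      = (∫ s in Set.Ioo 0 tm, kk α (t0 - s) * K s)
        + ∫ s in Set.Ioo tm t0, kk α (t0 - s) * K s := by
    rw [← integral_Ioc_eq_integral_Ioo (x := (0:ℝ)) (y := tm), ← setIntegral_union]
    · rw [Set.Ioc_union_Ioo_eq_Ioo htmpos.le htm0]
    · exact Set.disjoint_left.2 fun x hx hx' => absurd hx.2 (not_le.2 hx'.1)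
    · exact measurableSet_Ioo
    · exact i0.mono_set fun x hx => ⟨hx.1, lt_of_le_of_lt hx.2 htm0⟩
    · exact i0.mono_set fun x hx => ⟨htmpos.trans hx.1, hx.2⟩
  have b1 : ∫ s in Set.Ioo 0 tm, kk α (t0 - s) * K s
      ≤ kk α t0 / kk α tm * ∫ s in Set.Ioo 0 tm, kk α (tm - s) * K s := by
    rw [← integral_const_mul]
    refine setIntegral_mono_on ?_ (im.const_mul _) measurableSet_Ioo ?_
    · exact i0.mono_set fun x hx => ⟨hx.1, hx.2.trans htm0⟩
    · intro s hs
      have h1 := kk_logconvex hα hs.1 hs.2 htm0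
      have h2 := hlt s hs.1 (hs.2.trans htm0)
      calc kk α (t0 - s) * K s ≤ (kk α t0 / kk α tm * kk α (tm - s)) * K s := by gcongr
        _ = _ := by ring
  have b2 : ∫ s in Set.Ioo tm t0, kk α (t0 - s) * K s
      ≤ K tm * ((t0 - tm) ^ α / (α * Gamma α)) := by
    obtain ⟨ht1, ht2⟩ := kk_tail_integral hα0 htm.2
    rw [← ht2, ← integral_const_mul]
    refine setIntegral_mono_on ?_ (ht1.const_mul _) measurableSet_Ioo ?_
    · exact i0.mono_set fun x hx => ⟨htmpos.trans hx.1, hx.2⟩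
    · intro s hs
      have h1 := kk_pos hα0 (show 0 < t0 - s by linarith [hs.2])
      have h2 : K s ≤ K tm := hmax ⟨htm.1.trans hs.1.le, hs.2.le⟩
      rw [mul_comm]; gcongr
  have hk0 := kk_pos hα0 ht0
  have hkm := kk_pos hα0 htmpos
  set q := kk α t0 / kk α tm with hq
  have hqk : q * kk α tm = kk α t0 := by rw [hq]; field_simp
  set I1 := ∫ s in Set.Ioo 0 tm, kk α (tm - s) * K s
  set R := (t0 - tm) ^ α / (α * Gamma α)
  have c1 : lam * (∫ s in Set.Ioo 0 t0, kk α (t0 - s) * K s) ≤ lam * (q * I1 + K tm * R) := by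
    gcongr; linarith
  have c2 : lam * (q * I1) = q * (kk α tm - K tm) := by rw [em]; ring
  have c3 : K tm * (lam * R) < K tm * q := by gcongr
  nlinarith
open MeasureTheory Real

lemma kk_mul_integrable {b x T : ℝ} (hb : 0 < b) {a : ℝ} (ha : 0 ≤ a) (hax : a ≤ x) (hx : x ≤ T)
    {f : ℝ → ℝ} (hf : ContinuousOn f (Set.Icc 0 T)) :
    IntegrableOn (fun s => kk b (x - s) * f s) (Set.Ioo a x) := by
  have h := (kk_tail_integral hb hax).1
  rw [← integrableOn_Icc_iff_integrableOn_Ioo] at h ⊢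
  exact h.mul_continuousOn (hf.mono (Set.Icc_subset_Icc ha hx)) isCompact_Icc

lemma lip_at {T t : ℝ} {φ : ℝ → ℝ} (ht : t ∈ Set.Ioo 0 T)
    (hφ_cont : ContinuousOn φ (Set.Icc 0 T))
    (hφ_lip : ∀ ε ∈ Set.Ioo 0 T, ∃ K : NNReal, LipschitzOnWith K φ (Set.Icc ε T)) :
    ∃ C, 0 ≤ C ∧ ∀ s ∈ Set.Icc 0 T, |φ t - φ s| ≤ C * |t - s| := by
  obtain ⟨M, hM⟩ := isCompact_Icc.exists_bound_of_continuousOn hφ_cont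
  have ht2 : t / 2 ∈ Set.Ioo 0 T := ⟨by linarith [ht.1], by linarith [ht.1, ht.2]⟩
  obtain ⟨L, hL⟩ := hφ_lip _ ht2
  have hM0 : 0 ≤ M := (norm_nonneg _).trans (hM t ⟨ht.1.le, ht.2.le⟩)
  have ht0 : 0 < t := ht.1
  refine ⟨L + 4 * M / t, by positivity, fun s hs => ?_⟩
  have hd : 0 ≤ 4 * M / t := by positivity
  rcases le_or_gt (t / 2) s with h | h
  · have h1 := hL.dist_le_mul t ⟨by linarith, ht.2.le⟩ s ⟨h, hs.2⟩
    rw [Real.dist_eq, Real.dist_eq] at h1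
    have := abs_nonneg (t - s)
    nlinarith
  · have h1 : |φ t - φ s| ≤ M + M :=
      (abs_sub _ _).trans (add_le_add (hM t ⟨ht.1.le, ht.2.le⟩) (hM s hs))
    have h2 : t / 2 ≤ |t - s| := by rw [abs_of_pos (by linarith)]; linarith
    calc |φ t - φ s| ≤ 4 * M / t * (t / 2) := by
          refine h1.trans (le_of_eq ?_); field_simp; ring
      _ ≤ 4 * M / t * |t - s| := by gcongr
      _ ≤ _ := by gcongr; linarith [L.2]

lemma kk_hasDerivAt {α y : ℝ} (hy : 0 < y) :
    HasDerivAt (kk (1 - α)) (-(1 / Gamma (1 - α) * (α * y ^ (-α - 1)))) y := by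
  have h := (Real.hasDerivAt_rpow_const (x := y) (p := 1 - α - 1) (Or.inl hy.ne')).div_const
    (Gamma (1 - α))
  refine h.congr_deriv ?_
  rw [show (1 - α - 1 - 1) = -α - 1 by ring]; ring

lemma kk_slope_bound {α y z : ℝ} (hα : α ∈ Set.Ioo (0:ℝ) 1) (hy : 0 < y) (hyz : y ≤ z) :
    |kk (1 - α) z - kk (1 - α) y| ≤ (1 / Gamma (1 - α) * (α * y ^ (-α - 1))) * (z - y) := by
  have hα0 := hα.1
  have hg : 0 < Gamma (1 - α) := Gamma_pos_of_pos (by linarith [hα.2])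
  have h := Convex.norm_image_sub_le_of_norm_hasDerivWithin_le (f := kk (1 - α))
    (f' := fun y => (-(1 / Gamma (1 - α) * (α * y ^ (-α - 1))))) (s := Set.Ici y)
    (C := (1 / Gamma (1 - α) * (α * y ^ (-α - 1)))) (x := y) (y := z)
    (fun x hx => (kk_hasDerivAt (lt_of_lt_of_le hy hx)).hasDerivWithinAt) ?_ (convex_Ici y)
    (Set.mem_Ici.2 le_rfl) hyz
  · rw [Real.norm_eq_abs, Real.norm_eq_abs, abs_of_nonneg (sub_nonneg.2 hyz)] at h
    exact h
  · intro x hx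
    have hx' : y ≤ x := hx
    have hx0 : 0 < x := lt_of_lt_of_le hy hx
    have : 0 ≤ 1 / Gamma (1 - α) * (α * x ^ (-α - 1)) := by positivity
    rw [norm_neg, Real.norm_eq_abs, abs_of_nonneg this]
    have h5 : x ^ (-α - 1) ≤ y ^ (-α - 1) := Real.rpow_le_rpow_of_nonpos hy hx' (by linarith)
    gcongr

noncomputable def JJ (α : ℝ) (φ : ℝ → ℝ) (x : ℝ) : ℝ :=
  ∫ s in Set.Ioo 0 x, kk (1 - α) (x - s) * φ s

lemma JJ_deriv {α T t : ℝ} {φ : ℝ → ℝ} (hα : α ∈ Set.Ioo (0:ℝ) 1) (ht : t ∈ Set.Ioo 0 T)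
    (hφ_cont : ContinuousOn φ (Set.Icc 0 T))
    (hφ_lip : ∀ ε ∈ Set.Ioo 0 T, ∃ K : NNReal, LipschitzOnWith K φ (Set.Icc ε T)) :
    HasDerivWithinAt (JJ α φ) ((1 / Real.Gamma (1 - α)) * (t ^ (-α) * φ t
          + ∫ s in Set.Ioo 0 t, α * (t - s) ^ (-α - 1) * (φ t - φ s))) (Set.Ioi t) t := by
  obtain ⟨C, hC0, hC⟩ := lip_at ht hφ_cont hφ_lip
  have hα0 := hα.1
  have hα1 : 0 < 1 - α := by linarith [hα.2]
  have hg : 0 < Gamma (1 - α) := Gamma_pos_of_pos hα1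
  have ht0 : 0 < t := ht.1
  have htT : t < T := ht.2
  have hφt : ContinuousOn (fun s => φ t - φ s) (Set.Icc 0 T) := continuousOn_const.sub hφ_cont
  let P : ℝ → ℝ := fun x => ∫ s in Set.Ioo 0 t, kk (1 - α) (x - s) * (φ t - φ s)
  let Q : ℝ → ℝ := fun x => ∫ s in Set.Ioo t x, kk (1 - α) (x - s) * (φ t - φ s)
  let R : ℝ → ℝ := fun x => x ^ (1 - α) / ((1 - α) * Gamma (1 - α)) * φ t
  have hmem : Set.Ioo t T ∈ nhdsWithin t (Set.Ioi t) := Ioo_mem_nhdsGT htT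

  have hdec : ∀ x ∈ Set.Icc t T, JJ α φ x = R x - P x - Q x := by
    intro x hx
    have hx0 : 0 ≤ x := ht0.le.trans hx.1
    have i1 := kk_mul_integrable hα1 le_rfl hx0 hx.2 (continuousOn_const (c := φ t))
    have i2 := kk_mul_integrable hα1 le_rfl hx0 hx.2 hφt
    have e1 : JJ α φ x = R x - ∫ s in Set.Ioo 0 x, kk (1 - α) (x - s) * (φ t - φ s) := by
      have : R x = ∫ s in Set.Ioo 0 x, kk (1 - α) (x - s) * φ t := by
        rw [integral_mul_const, (kk_tail_integral hα1 hx0).2, sub_zero]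
      rw [this, ← integral_sub i1 i2]
      unfold JJ
      congr 1; ext s; ring
    rw [e1, sub_sub]
    congr 1
    rcases hx.1.eq_or_lt with rfl | hlt
    · simp [P, Q]
    simp only [P, Q]
    rw [← integral_Ioc_eq_integral_Ioo (x := (0:ℝ)) (y := t), ← setIntegral_union]
    · rw [Set.Ioc_union_Ioo_eq_Ioo ht0.le hlt]
    · exact Set.disjoint_left.2 fun x hx hx' => absurd hx.2 (not_le.2 hx'.1)
    · exact measurableSet_Ioo
    · exact i2.mono_set fun x hx => ⟨hx.1, lt_of_le_of_lt hx.2 hlt⟩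
    · exact i2.mono_set fun x hx => ⟨ht0.trans hx.1, hx.2⟩
  have hR : HasDerivWithinAt R (1 / Gamma (1 - α) * (t ^ (-α) * φ t)) (Set.Ioi t) t := by
    have h := (((Real.hasDerivAt_rpow_const (x := t) (p := 1 - α) (Or.inl ht0.ne')).div_const
      ((1 - α) * Gamma (1 - α))).mul_const (φ t)).hasDerivWithinAt (s := Set.Ioi t)
    refine h.congr_deriv ?_
    rw [show (1 - α - 1) = -α by ring]; field_simp
  have hQ : HasDerivWithinAt Q 0 (Set.Ioi t) t := by
    rw [hasDerivWithinAt_iff_tendsto_slope' (by simp)]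
    have hQt : Q t = 0 := by simp [Q]
    refine squeeze_zero_norm' (a := fun x => C * ((x - t) ^ (1 - α) / ((1 - α) * Gamma (1 - α)))) ?_ ?_
    · filter_upwards [hmem] with x hx
      have hxt : 0 < x - t := by linarith [hx.1]
      rw [slope_def_field, hQt, sub_zero, norm_div, Real.norm_eq_abs (x - t), abs_of_pos hxt,
        div_le_iff₀ hxt]
      obtain ⟨j1, j2⟩ := kk_tail_integral hα1 hx.1.le
      rw [← j2, ← integral_const_mul, mul_comm, ← integral_const_mul]
      refine norm_integral_le_of_norm_le ((j1.const_mul _).const_mul _) ?_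
      refine (ae_restrict_iff' measurableSet_Ioo).2 (Filter.Eventually.of_forall fun s hs => ?_)
      have hk := kk_pos hα1 (show 0 < x - s by linarith [hs.2])
      have hc := hC s ⟨by linarith [hs.1], by linarith [hs.2, hx.2]⟩
      rw [abs_of_neg (show t - s < 0 by linarith [hs.1])] at hc
      rw [norm_mul, Real.norm_eq_abs, Real.norm_eq_abs, abs_of_pos hk]
      have : |φ t - φ s| ≤ C * (x - t) := hc.trans (by gcongr; linarith [hs.2])
      calc kk (1 - α) (x - s) * |φ t - φ s| ≤ kk (1 - α) (x - s) * (C * (x - t)) := by gcongr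
        _ = _ := by ring
    · have : ContinuousAt (fun x => C * ((x - t) ^ (1 - α) / ((1 - α) * Gamma (1 - α)))) t := by
        refine continuousAt_const.mul (ContinuousAt.div_const ?_ _)
        exact (continuousAt_id.sub continuousAt_const).rpow_const (Or.inr hα1.le)
      have h2 := this.tendsto
      simp only [sub_self] at h2
      rw [Real.zero_rpow hα1.ne'] at h2
      simp only [zero_div, mul_zero] at h2
      exact h2.mono_left nhdsWithin_le_nhds
  have hP : HasDerivWithinAt P (∫ s in Set.Ioo 0 t,
      -(1 / Gamma (1 - α) * (α * (t - s) ^ (-α - 1))) * (φ t - φ s)) (Set.Ioi t) t := by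
    rw [hasDerivWithinAt_iff_tendsto_slope' (by simp)]
    have hsl : ∀ᶠ x in nhdsWithin t (Set.Ioi t), slope P t x = ∫ s in Set.Ioo 0 t,
        (kk (1 - α) (x - s) - kk (1 - α) (t - s)) / (x - t) * (φ t - φ s) := by
      filter_upwards [hmem] with x hx
      rw [slope_def_field]
      simp only [P]
      rw [← integral_sub, ← integral_div]
      · congr 1; ext s; ring
      · exact (kk_mul_integrable hα1 le_rfl (ht0.le.trans hx.1.le) hx.2.le hφt).mono_set
          fun s hs => ⟨hs.1, hs.2.trans hx.1⟩
      · exact kk_mul_integrable hα1 le_rfl ht0.le htT.le hφt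
    refine Filter.Tendsto.congr' (Filter.EventuallyEq.symm hsl) ?_
    refine tendsto_integral_filter_of_dominated_convergence
      (fun s => C * α * kk (1 - α) (t - s)) ?_ ?_ ?_ ?_
    · filter_upwards [hmem] with x hx
      refine ContinuousOn.aestronglyMeasurable ?_ measurableSet_Ioo
      refine ContinuousOn.mul (ContinuousOn.div_const (ContinuousOn.sub ?_ ?_) _)
        (hφt.mono fun s hs => ⟨hs.1.le, hs.2.le.trans htT.le⟩)
      · exact (kk_continuousOn _).comp (by fun_prop) fun s hs => by
          have := hs.2; have := hx.1; simp; linarith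
      · exact (kk_continuousOn _).comp (by fun_prop) fun s hs => by
          have := hs.2; simp; linarith
    · filter_upwards [hmem] with x hx
      refine (ae_restrict_iff' measurableSet_Ioo).2 (Filter.Eventually.of_forall fun s hs => ?_)
      have hxt : 0 < x - t := by linarith [hx.1]
      have hts : 0 < t - s := by linarith [hs.2]
      have hb := kk_slope_bound hα hts (show t - s ≤ x - s by linarith)
      have hc := hC s ⟨hs.1.le, by linarith [hs.2]⟩
      rw [abs_of_pos hts] at hc
      rw [norm_mul, norm_div, Real.norm_eq_abs, Real.norm_eq_abs, Real.norm_eq_abs,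
        abs_of_pos hxt]
      calc |kk (1 - α) (x - s) - kk (1 - α) (t - s)| / (x - t) * |φ t - φ s|
          ≤ (1 / Gamma (1 - α) * (α * (t - s) ^ (-α - 1))) * (C * (t - s)) := by
            gcongr
            rw [div_le_iff₀ hxt]
            refine hb.trans (le_of_eq ?_); ring
        _ = _ := by
            unfold kk
            rw [show 1 - α - 1 = (-α - 1) + 1 by ring, Real.rpow_add_one hts.ne']
            ring
    · exact ((kk_tail_integral hα1 ht0.le).1.const_mul _)
    · refine (ae_restrict_iff' measurableSet_Ioo).2 (Filter.Eventually.of_forall fun s hs => ?_)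
      have hts : 0 < t - s := by linarith [hs.2]
      have hd : HasDerivAt (fun x => kk (1 - α) (x - s))
          (-(1 / Gamma (1 - α) * (α * (t - s) ^ (-α - 1)))) t := by
        simpa using (kk_hasDerivAt (α := α) hts).comp_sub_const t s
      have := hd.hasDerivWithinAt (s := Set.Ioi t)
      rw [hasDerivWithinAt_iff_tendsto_slope' (by simp)] at this
      simp_rw [slope_fun_def_field] at this
      exact this.mul_const _
  have hall := (hR.sub hP).sub hQ
  have hfin := hall.congr_of_eventuallyEq (f₁ := JJ α φ) (by
    filter_upwards [hmem] with x hx using hdec x ⟨hx.1.le, hx.2.le⟩) (hdec t ⟨le_rfl, htT.le⟩)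
  refine hfin.congr_deriv ?_
  have : ∀ s, -(1 / Gamma (1 - α) * (α * (t - s) ^ (-α - 1))) * (φ t - φ s)
      = -(1 / Gamma (1 - α)) * (α * (t - s) ^ (-α - 1) * (φ t - φ s)) := fun s => by ring
  simp_rw [this]
  rw [integral_const_mul]
  ring

lemma JJ_continuousOn {α T : ℝ} {φ : ℝ → ℝ} (hα : α ∈ Set.Ioo (0:ℝ) 1) (hT : 0 < T)
    (hφ_cont : ContinuousOn φ (Set.Icc 0 T)) (hφ0 : φ 0 = 0) :
    ContinuousOn (JJ α φ) (Set.Icc 0 T) := by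
  have hα1 : 0 < 1 - α := by linarith [hα.2]
  let f : ℝ → ℝ := Set.IccExtend hT.le ((Set.Icc 0 T).domRestrict φ)
  have hfc : Continuous f := (continuousOn_iff_continuous_domRestrict.1 hφ_cont).Icc_extend'
  have hf1 : ∀ s ∈ Set.Icc 0 T, f s = φ s := fun s hs => by
    simp only [f]; rw [Set.IccExtend_of_mem _ _ hs]; rfl
  have hf0 : ∀ s ≤ 0, f s = 0 := fun s hs => by
    simp only [f]; rw [Set.IccExtend_of_le_left _ _ hs]; exact hφ0
  obtain ⟨M, hM⟩ := isCompact_Icc.exists_bound_of_continuousOn hφ_cont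
  have hbd : BddAbove (Set.range fun x => ‖f x‖) := by
    refine ⟨M, ?_⟩
    rintro _ ⟨x, rfl⟩
    simp only [f, Set.IccExtend, Function.comp]
    exact hM _ (Set.projIcc 0 T hT.le x).2
  let k : ℝ → ℝ := (Set.Ioo 0 T).indicator (kk (1 - α))
  have hk : Integrable k := by
    rw [integrable_indicator_iff measurableSet_Ioo]
    have h := kk_conv_integrable hα1 one_pos hT
    refine h.congr_fun (fun s hs => ?_) measurableSet_Ioo
    simp [kk]
  have hconv := hbd.continuous_convolution_right_of_integrable (ContinuousLinearMap.mul ℝ ℝ) hk hfc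
  refine hconv.continuousOn.congr fun x hx => ?_
  rw [convolution_def]
  unfold JJ
  rw [← integral_Ioc_eq_integral_Ioo, ← intervalIntegral.integral_of_le hx.1]
  have := intervalIntegral.integral_comp_sub_left (a := 0) (b := x)
    (fun s => kk (1 - α) (x - s) * φ s) x
  simp only [sub_sub_cancel, sub_self, sub_zero] at this
  rw [← this, intervalIntegral.integral_of_le hx.1, integral_Ioc_eq_integral_Ioo,
    ← integral_indicator measurableSet_Ioo]
  congr 1; ext s
  simp only [ContinuousLinearMap.mul_apply', k]
  by_cases h1 : s ∈ Set.Ioo 0 x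
  · rw [Set.indicator_of_mem h1, Set.indicator_of_mem (show s ∈ Set.Ioo 0 T from ⟨h1.1, h1.2.trans_le hx.2⟩), hf1]
    exact ⟨by linarith [h1.2], by linarith [h1.1, hx.2]⟩
  · rw [Set.indicator_of_notMem h1]
    by_cases h2 : 0 < s
    · rw [hf0, mul_zero]
      have : x ≤ s := not_lt.1 fun h => h1 ⟨h2, h⟩
      linarith
    · rw [Set.indicator_of_notMem (fun h => h2 h.1), zero_mul]

lemma JJ_incr {α lam T : ℝ} {φ r : ℝ → ℝ} (hα : α ∈ Set.Ioo (0:ℝ) 1) (hT : 0 < T)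
    (hφ_cont : ContinuousOn φ (Set.Icc 0 T)) (hφ0 : φ 0 = 0)
    (hφ_lip : ∀ ε ∈ Set.Ioo 0 T, ∃ K : NNReal, LipschitzOnWith K φ (Set.Icc ε T))
    (hr : IntegrableOn r (Set.Icc 0 T))
    (hineq : ∀ t ∈ Set.Ioc 0 T,
      (1 / Real.Gamma (1 - α)) * (t ^ (-α) * φ t
          + ∫ s in Set.Ioo 0 t, α * (t - s) ^ (-α - 1) * (φ t - φ s))
        + lam * φ t ≤ r t)
    {a b : ℝ} (ha : 0 ≤ a) (hab : a ≤ b) (hb : b ≤ T) :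
    JJ α φ b - JJ α φ a ≤ ∫ s in a..b, (r s - lam * φ s) := by
  refine intervalIntegral.sub_le_integral_of_hasDeriv_right_of_le hab
    ((JJ_continuousOn hα hT hφ_cont hφ0).mono (Set.Icc_subset_Icc ha hb))
    (fun x hx => JJ_deriv hα ⟨lt_of_le_of_lt ha hx.1, lt_of_lt_of_le hx.2 hb⟩ hφ_cont hφ_lip)
    ?_ ?_
  · have : IntegrableOn (fun s => r s - lam * φ s) (Set.Icc 0 T) :=
      hr.sub ((hφ_cont.integrableOn_Icc).const_mul lam)
    exact this.mono_set (Set.Icc_subset_Icc ha hb)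
  · intro x hx
    have := hineq x ⟨lt_of_le_of_lt ha hx.1, hx.2.le.trans hb⟩
    linarith
open MeasureTheory Real

lemma SS_integrable {α lam t : ℝ} (hα : 0 < α) (ht : 0 < t) :
    IntegrableOn (SS α lam α) (Set.Ioo 0 t) := by
  refine (SS_conv_integrable lam hα hα one_pos ht).congr_fun (fun s hs => ?_) measurableSet_Ioo
  simp [kk]

lemma r_integrable {α lam T : ℝ} {r : ℝ → ℝ} (hα : α ∈ Set.Ioo (0:ℝ) 1) (hT : 0 < T)
    (hr_cont : ContinuousOn r (Set.Ioc 0 T))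
    (hr_int : IntegrableOn (fun s => SS α lam α (T - s) * r s) (Set.Ioo 0 T)) :
    IntegrableOn r (Set.Icc 0 T) := by
  have h1 : IntegrableOn r (Set.Icc (T/2) T) :=
    (hr_cont.mono fun x hx => ⟨by linarith [hx.1], hx.2⟩).integrableOn_Icc
  have h2 : IntegrableOn r (Set.Icc 0 (T/2)) := by
    have hc : ContinuousOn (fun s => (SS α lam α (T - s))⁻¹) (Set.Icc 0 (T/2)) := by
      refine ContinuousOn.inv₀ ?_ ?_
      · exact (SS_continuousOn lam hα.1 hα.1).comp (by fun_prop) fun s hs => by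
          have := hs.2; simp; linarith
      · intro s hs; exact (SS_pos hα (by linarith [hs.2])).ne'
    have h3 : IntegrableOn (fun s => SS α lam α (T - s) * r s) (Set.Icc 0 (T/2)) := by
      rw [integrableOn_Icc_iff_integrableOn_Ioo]
      exact hr_int.mono_set (Set.Ioo_subset_Ioo le_rfl (by linarith))
    refine (h3.mul_continuousOn hc isCompact_Icc).congr_fun (fun s hs => ?_) measurableSet_Icc
    have := (SS_pos (lam := lam) hα (show 0 < T - s by linarith [hs.2])).ne'
    field_simp
  have := h2.union h1
  rwa [Set.Icc_union_Icc_eq_Icc (by linarith) (by linarith)] at this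

noncomputable def clampf (a b x : ℝ) : ℝ := max a (min b x)

lemma clampf_cont (a b : ℝ) : Continuous (clampf a b) := by unfold clampf; fun_prop
lemma clampf_mem {a b : ℝ} (h : a ≤ b) (x : ℝ) : clampf a b x ∈ Set.Icc a b :=
  ⟨le_max_left _ _, max_le h (min_le_left _ _)⟩
lemma clampf_eq {a b x : ℝ} (h : x ∈ Set.Icc a b) : clampf a b x = x := by
  unfold clampf; rw [min_eq_right h.2, max_eq_right h.1]
lemma clampf_left {a b x : ℝ} (h : x ≤ a) : clampf a b x = a := by
  unfold clampf; exact max_eq_left ((min_le_right _ _).trans h)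
lemma clampf_right {a b x : ℝ} (hab : a ≤ b) (h : b ≤ x) : clampf a b x = b := by
  unfold clampf; rw [min_eq_left h, max_eq_right hab]

lemma psi_cont {α lam T t : ℝ} {r : ℝ → ℝ} (hα : α ∈ Set.Ioo (0:ℝ) 1) (ht : t ∈ Set.Ioc 0 T)
    (hr_cont : ContinuousOn r (Set.Ioc 0 T)) (hr : IntegrableOn r (Set.Icc 0 T))
    (hr_int : ∀ x ∈ Set.Ioc 0 T,
      IntegrableOn (fun s => SS α lam α (x - s) * r s) (Set.Ioo 0 x)) :
    ContinuousWithinAt (fun x => ∫ s in Set.Ioo 0 x, SS α lam α (x - s) * r s)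
      (Set.Ioc 0 T) t := by
  have hα0 := hα.1
  obtain ⟨ht0, htT⟩ := ht
  have hT : 0 < T := ht0.trans_le htT
  obtain ⟨ε, hε, hεt⟩ : ∃ ε, 0 < ε ∧ 4 * ε = t := ⟨t / 4, by linarith, by ring⟩
  have hεT : ε ≤ T := by linarith
  let c : ℝ → ℝ := fun s => clampf 0 1 ((s - ε) / ε)
  have hc : Continuous c := (clampf_cont 0 1).comp (by fun_prop)
  have hc01 : ∀ s, c s ∈ Set.Icc (0:ℝ) 1 := fun s => clampf_mem zero_le_one _
  have hc0 : ∀ s ≤ ε, c s = 0 := fun s hs =>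
    clampf_left (div_nonpos_of_nonpos_of_nonneg (by linarith) hε.le)
  have hc1 : ∀ s, 2 * ε ≤ s → c s = 1 := fun s hs =>
    clampf_right zero_le_one (by rw [le_div_iff₀ hε]; linarith)
  let r2 : ℝ → ℝ := fun s => c s * r (clampf ε T s)
  let r1 : ℝ → ℝ := (Set.Ioc 0 T).indicator (fun s => (1 - c s) * r s)
  let K1 : ℝ → ℝ := (Set.Ioo 0 T).indicator (SS α lam α)
  let K2 : ℝ → ℝ := fun u => SS α lam α (clampf ε T u)
  have hsub : Set.Icc ε T ⊆ Set.Ioc 0 T := fun x hx => ⟨hε.trans_le hx.1, hx.2⟩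
  have hr2c : Continuous r2 := hc.mul
    ((hr_cont.mono hsub).comp_continuous (clampf_cont _ _) fun s => clampf_mem hεT s)
  have hK2c : Continuous K2 :=
    ((SS_continuousOn lam hα0 hα0).mono fun x (hx : x ∈ Set.Icc ε T) =>
      (hsub hx).1).comp_continuous (clampf_cont _ _) fun s => clampf_mem hεT s
  have hr2b : BddAbove (Set.range fun x => ‖r2 x‖) := by
    obtain ⟨M, hM⟩ := isCompact_Icc.exists_bound_of_continuousOn (hr_cont.mono hsub)
    refine ⟨M, ?_⟩
    rintro _ ⟨x, rfl⟩
    simp only [r2]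
    rw [norm_mul, Real.norm_eq_abs, abs_of_nonneg (hc01 x).1]
    have h1 := hM _ (clampf_mem hεT x)
    have h2 := (hc01 x).2
    have h3 := norm_nonneg (r (clampf ε T x))
    nlinarith
  have hK2b : BddAbove (Set.range fun x => ‖K2 x‖) := by
    obtain ⟨M, hM⟩ := isCompact_Icc.exists_bound_of_continuousOn
      ((SS_continuousOn lam hα0 hα0).mono fun x (hx : x ∈ Set.Icc ε T) => (hsub hx).1)
    refine ⟨M, ?_⟩
    rintro _ ⟨x, rfl⟩
    exact hM _ (clampf_mem hεT x)
  have hK1i : Integrable K1 := by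
    rw [integrable_indicator_iff measurableSet_Ioo]; exact SS_integrable hα0 hT
  have hr1i : Integrable r1 := by
    rw [integrable_indicator_iff measurableSet_Ioc]
    have h := (hr.continuousOn_mul (g := fun s => 1 - c s) (by fun_prop) isCompact_Icc)
    exact h.mono_set Set.Ioc_subset_Icc_self
  have C1 := hr2b.continuous_convolution_right_of_integrable (ContinuousLinearMap.mul ℝ ℝ) hK1i hr2c
  have C2 := hK2b.continuous_convolution_right_of_integrable (ContinuousLinearMap.mul ℝ ℝ) hr1i hK2c
  have key : ∀ x ∈ Set.Ioc (3 * ε) T, ∫ s in Set.Ioo 0 x, SS α lam α (x - s) * r s =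
      (convolution K1 r2 (ContinuousLinearMap.mul ℝ ℝ) volume
        + convolution r1 K2 (ContinuousLinearMap.mul ℝ ℝ) volume) x := by
    intro x hx
    have hx0 : 0 < x := by linarith [hx.1]
    have hxT := hx.2
    have hi := hr_int x ⟨hx0, hx.2⟩
    have e1 : convolution K1 r2 (ContinuousLinearMap.mul ℝ ℝ) volume x =
        ∫ s in Set.Ioo 0 x, c s * (SS α lam α (x - s) * r s) := by
      rw [convolution_def, ← integral_sub_left_eq_self _ volume x,
        ← integral_indicator measurableSet_Ioo]
      congr 1; ext s
      simp only [ContinuousLinearMap.mul_apply', sub_sub_cancel, K1, r2]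
      by_cases h1 : s ∈ Set.Ioo 0 x
      · rw [Set.indicator_of_mem h1, Set.indicator_of_mem (show x - s ∈ Set.Ioo 0 T from
          ⟨by linarith [h1.2], by linarith [h1.1]⟩)]
        rcases le_or_gt s ε with h2 | h2
        · rw [hc0 s h2]; ring
        · rw [clampf_eq ⟨h2.le, by linarith [h1.2]⟩]; ring
      · rw [Set.indicator_of_notMem h1]
        by_cases h2 : 0 < s
        · rw [Set.indicator_of_notMem, zero_mul]
          intro h
          exact h1 ⟨h2, by linarith [h.1]⟩
        · rw [hc0 s (by linarith)]; ring
    have e2 : convolution r1 K2 (ContinuousLinearMap.mul ℝ ℝ) volume x =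
        ∫ s in Set.Ioo 0 x, (1 - c s) * (SS α lam α (x - s) * r s) := by
      rw [convolution_def, ← integral_indicator measurableSet_Ioo]
      congr 1; ext s
      simp only [ContinuousLinearMap.mul_apply', r1, K2]
      rcases le_or_gt (2 * ε) s with h2 | h2
      · have : 1 - c s = 0 := by rw [hc1 s h2]; ring
        simp [Set.indicator, this]
      by_cases h1 : 0 < s
      · rw [Set.indicator_of_mem (show s ∈ Set.Ioc 0 T from ⟨h1, by linarith⟩),
          Set.indicator_of_mem (show s ∈ Set.Ioo 0 x from ⟨h1, by linarith [hx.1]⟩),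
          clampf_eq ⟨by linarith [hx.1], by linarith⟩]
        ring
      · rw [Set.indicator_of_notMem (fun h => h1 h.1), Set.indicator_of_notMem (fun h => h1 h.1),
          zero_mul]
    have ic : IntegrableOn (fun s => c s * (SS α lam α (x - s) * r s)) (Set.Ioo 0 x) := by
      refine Integrable.bdd_mul (c := 1) hi hc.aestronglyMeasurable
        (Filter.Eventually.of_forall fun s => ?_)
      rw [Real.norm_eq_abs, abs_of_nonneg (hc01 s).1]; exact (hc01 s).2
    have ic' : IntegrableOn (fun s => (1 - c s) * (SS α lam α (x - s) * r s)) (Set.Ioo 0 x) := by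
      refine (hi.sub ic).congr (Filter.Eventually.of_forall fun s => ?_)
      simp; ring
    rw [Pi.add_apply, e1, e2, ← integral_add ic ic']
    congr 1; ext s; ring
  have hcw := (C1.add C2).continuousWithinAt (s := Set.Ioc 0 T) (x := t)
  refine hcw.congr_of_eventuallyEq ?_ (key t ⟨by linarith, htT⟩)
  have : Set.Ioi (3 * ε) ∈ nhdsWithin t (Set.Ioc 0 T) :=
    mem_nhdsWithin_of_mem_nhds (Ioi_mem_nhds (by linarith))
  filter_upwards [this, self_mem_nhdsWithin] with x h1 h2
  exact key x ⟨h1, h2.2⟩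
open MeasureTheory Real
open scoped ENNReal

/-- Extension by zero, with values in `ℝ≥0∞`. -/
noncomputable def eS (S : Set ℝ) (f : ℝ → ℝ) : ℝ → ℝ≥0∞ := S.indicator (fun s => ENNReal.ofReal (f s))

lemma eS_measurable {S : Set ℝ} {f : ℝ → ℝ} (hS : MeasurableSet S) (hf : ContinuousOn f S) :
    Measurable (eS S f) := by
  classical
  unfold eS
  rw [← Set.piecewise_eq_indicator]
  exact (ENNReal.continuous_ofReal.comp_continuousOn hf).measurable_piecewise
    continuousOn_const hS

/-- Evaluate a convolution of two such extensions. -/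
lemma eS_conv {S : Set ℝ} {f g : ℝ → ℝ} {x : ℝ} (hS : S ∩ Set.Iio x = Set.Ioo 0 x)
    (hf : ∀ u, 0 < u → 0 ≤ f u) (hg : ∀ u ∈ Set.Ioo 0 x, 0 ≤ g u)
    (hi : IntegrableOn (fun s => f (x - s) * g s) (Set.Ioo 0 x)) :
    lconvolution (eS S g) (eS (Set.Ioi 0) f) volume x
      = ENNReal.ofReal (∫ s in Set.Ioo 0 x, f (x - s) * g s) := by
  rw [ofReal_integral_eq_lintegral_ofReal hi, ← lintegral_indicator measurableSet_Ioo,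
    lconvolution_def]
  · congr 1; ext s
    by_cases h : s ∈ Set.Ioo 0 x
    · have h' := h
      rw [← hS] at h'
      unfold eS
      rw [Set.indicator_of_mem h, Set.indicator_of_mem h'.1, Set.indicator_of_mem
        (show -s + x ∈ Set.Ioi 0 by have := h.2; simp; linarith),
        ENNReal.ofReal_mul (hf _ (by linarith [h.2])), mul_comm]
      congr 3; ring
    · rw [Set.indicator_of_notMem h]
      unfold eS
      by_cases h1 : s ∈ S
      · rw [Set.indicator_of_notMem (a := -s + x), mul_zero]
        intro h2
        apply h
        rw [← hS]
        exact ⟨h1, by have : 0 < -s + x := h2; simp; linarith⟩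
      · rw [Set.indicator_of_notMem h1, zero_mul]
  · refine (ae_restrict_iff' measurableSet_Ioo).2 (Filter.Eventually.of_forall fun s hs => ?_)
    exact mul_nonneg (hf _ (by linarith [hs.2])) (hg s hs)

lemma Ioi_inter_Iio' (x : ℝ) : Set.Ioi (0:ℝ) ∩ Set.Iio x = Set.Ioo 0 x := Set.Ioi_inter_Iio

lemma Ioc_inter_Iio' {x T : ℝ} (hx : x ≤ T) : Set.Ioc (0:ℝ) T ∩ Set.Iio x = Set.Ioo 0 x := by
  ext s; simp only [Set.mem_inter_iff, Set.mem_Ioc, Set.mem_Iio, Set.mem_Ioo]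
  constructor
  · rintro ⟨⟨h1, _⟩, h2⟩; exact ⟨h1, h2⟩
  · rintro ⟨h1, h2⟩; exact ⟨⟨h1, h2.le.trans hx⟩, h2⟩

lemma kk_nonneg_all {b : ℝ} (hb : 0 < b) : ∀ u, 0 < u → 0 ≤ kk b u := fun _ hu => (kk_pos hb hu).le

lemma kk_one (u : ℝ) : kk 1 u = 1 := by simp [kk]

lemma eK_conv {α lam b x : ℝ} (hα : α ∈ Set.Ioo (0:ℝ) 1) (hb : 0 < b) (hx : 0 < x) :
    lconvolution (eS (Set.Ioi 0) (SS α lam α)) (eS (Set.Ioi 0) (kk b)) volume x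
      = ENNReal.ofReal (SS α lam (α + b) x) := by
  rw [eS_conv (Ioi_inter_Iio' x) (kk_nonneg_all hb) (fun u hu => (SS_pos hα hu.1).le)
    (SS_conv_integrable lam hα.1 hα.1 hb hx), SS_conv_integral lam hα.1 hα.1 hb hx]

lemma conv_nonpos {S : Set ℝ} {f g : ℝ → ℝ} {x : ℝ} (hS : S ⊆ Set.Ioi 0) (hx : x ≤ 0) :
    lconvolution (eS S g) (eS (Set.Ioi 0) f) volume x = 0 := by
  rw [lconvolution_def, ← lintegral_zero (μ := volume) (α := ℝ)]
  congr 1; ext s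
  unfold eS
  by_cases h : s ∈ S
  · have h1 : 0 < s := hS h
    rw [Set.indicator_of_notMem (a := -s + x) (by simp; linarith), mul_zero]
  · rw [Set.indicator_of_notMem h, zero_mul]

lemma SS_nonneg {α lam b x : ℝ} (hα : α ∈ Set.Ioo (0:ℝ) 1) (hb : 0 < b) (hx : 0 < x) :
    0 ≤ SS α lam (α + b) x := by
  rw [← SS_conv_integral lam hα.1 hα.1 hb hx]
  refine setIntegral_nonneg measurableSet_Ioo fun s hs => ?_
  exact mul_nonneg (kk_pos hb (by linarith [hs.2])).le (SS_pos hα hs.1).le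

lemma eK_identity {α lam : ℝ} (hα : α ∈ Set.Ioo (0:ℝ) 1) (x : ℝ) :
    lconvolution (eS (Set.Ioi 0) (SS α lam α)) (eS (Set.Ioi 0) (kk (1 - α))) volume x
      + ENNReal.ofReal lam *
        lconvolution (eS (Set.Ioi 0) (SS α lam α)) (eS (Set.Ioi 0) (kk 1)) volume x
    = eS (Set.Ioi 0) (kk 1) x + ENNReal.ofReal (-lam) *
        lconvolution (eS (Set.Ioi 0) (SS α lam α)) (eS (Set.Ioi 0) (kk 1)) volume x := by
  rcases le_or_gt x 0 with hx | hx
  · rw [conv_nonpos subset_rfl hx, conv_nonpos subset_rfl hx]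
    simp [eS, hx]
  · have h1 : 0 < 1 - α := by linarith [hα.2]
    rw [eK_conv hα h1 hx, eK_conv hα one_pos hx]
    have n1 := SS_nonneg (lam := lam) hα h1 hx
    have n2 := SS_nonneg (lam := lam) hα one_pos hx
    have hrec := SS_rec lam hα.1 one_pos hx
    rw [kk_one, add_comm 1 α] at hrec
    rw [add_sub_cancel] at n1 ⊢
    have e3 : eS (Set.Ioi 0) (kk 1) x = ENNReal.ofReal 1 := by
      unfold eS; rw [Set.indicator_of_mem (Set.mem_Ioi.2 hx), kk_one]
    rw [e3]
    rcases le_total lam 0 with hl | hl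
    · rw [ENNReal.ofReal_of_nonpos hl, zero_mul, add_zero, ← ENNReal.ofReal_mul (by linarith),
        ← ENNReal.ofReal_add zero_le_one (mul_nonneg (by linarith) n2)]
      congr 1; linarith
    · rw [ENNReal.ofReal_of_nonpos (p := -lam) (by linarith), zero_mul, add_zero,
        ← ENNReal.ofReal_mul hl, ← ENNReal.ofReal_add n1 (mul_nonneg hl n2)]
      congr 1; linarith
open MeasureTheory Real
open scoped ENNReal

lemma lconv_add {f g h : ℝ → ℝ≥0∞} (hf : Measurable f) (hg : Measurable g) (x : ℝ) :
    lconvolution f (fun y => g y + h y) volume x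
      = lconvolution f g volume x + lconvolution f h volume x := by
  simp only [lconvolution_def, mul_add]
  rw [lintegral_add_left]
  fun_prop

lemma lconv_smul {f g : ℝ → ℝ≥0∞} (hf : Measurable f) (hg : Measurable g) (c : ℝ≥0∞) (x : ℝ) :
    lconvolution f (fun y => c * g y) volume x = c * lconvolution f g volume x := by
  simp only [lconvolution_def]
  rw [← lintegral_const_mul _ (by fun_prop)]
  congr 1; ext y; ring

lemma lconv_H (f : ℝ → ℝ≥0∞) (x : ℝ) :
    lconvolution f (eS (Set.Ioi 0) (kk 1)) volume x = ∫⁻ s in Set.Iio x, f s := by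
  rw [lconvolution_def, ← lintegral_indicator measurableSet_Iio]
  congr 1; ext s
  unfold eS
  by_cases h : s < x
  · rw [Set.indicator_of_mem (a := s) (s := Set.Iio x) h, Set.indicator_of_mem (a := -s + x) (by simp; linarith), kk_one]
    simp
  · rw [Set.indicator_of_notMem (a := s) (s := Set.Iio x) h, Set.indicator_of_notMem (a := -s + x)
      (by simp; linarith), mul_zero]

/-- `eK * (g * H)` is finite whenever `g` is integrable and supported on the positive axis. -/
lemma lconv_finite {α lam : ℝ} (hα : α ∈ Set.Ioo (0:ℝ) 1) {g : ℝ → ℝ≥0∞}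
    (hg0 : ∀ s ≤ 0, g s = 0) (hgi : ∫⁻ s, g s ≠ ∞) (x : ℝ) :
    lconvolution (eS (Set.Ioi 0) (SS α lam α))
      (lconvolution g (eS (Set.Ioi 0) (kk 1)) volume) volume x ≠ ∞ := by
  have mK : Measurable (eS (Set.Ioi 0) (SS α lam α)) :=
    eS_measurable measurableSet_Ioi (SS_continuousOn lam hα.1 hα.1)
  have mH : Measurable (eS (Set.Ioi 0) (kk 1)) :=
    eS_measurable measurableSet_Ioi (kk_continuousOn 1)
  have h1 : ∀ z, lconvolution g (eS (Set.Ioi 0) (kk 1)) volume z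
      ≤ (∫⁻ s, g s) * eS (Set.Ioi 0) (kk 1) z := by
    intro z
    rw [lconv_H]
    rcases le_or_gt z 0 with hz | hz
    · rw [setLIntegral_congr_fun (g := fun _ => 0) measurableSet_Iio
        (fun s (hs : s < z) => hg0 s (by linarith))]
      simp
    · have : eS (Set.Ioi 0) (kk 1) z = 1 := by
        unfold eS; rw [Set.indicator_of_mem (Set.mem_Ioi.2 hz), kk_one]; simp
      rw [this, mul_one]
      exact setLIntegral_le_lintegral _ _
  have h2 : lconvolution (eS (Set.Ioi 0) (SS α lam α))
      (lconvolution g (eS (Set.Ioi 0) (kk 1)) volume) volume x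
      ≤ (∫⁻ s, g s) * lconvolution (eS (Set.Ioi 0) (SS α lam α)) (eS (Set.Ioi 0) (kk 1)) volume x := by
    rw [← lconv_smul mK mH, lconvolution_def, lconvolution_def]
    exact lintegral_mono fun y => mul_le_mul_right (h1 _) _
  refine ne_top_of_le_ne_top (ENNReal.mul_ne_top hgi ?_) h2
  rcases le_or_gt x 0 with hx | hx
  · rw [conv_nonpos subset_rfl hx]; simp
  · rw [eK_conv hα one_pos hx]; simp

lemma abstract_ineq {α lam T : ℝ} (hα : α ∈ Set.Ioo (0:ℝ) 1) {f r : ℝ → ℝ≥0∞}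
    (mf : Measurable f) (mr : Measurable r) (hf0 : ∀ s ≤ 0, f s = 0) (hr0 : ∀ s ≤ 0, r s = 0)
    (hfi : ∫⁻ s, f s ≠ ∞) (hri : ∫⁻ s, r s ≠ ∞)
    (hmono : ∀ y y', y ≤ y' → y' ≤ T →
      (lconvolution r (eS (Set.Ioi 0) (kk 1)) volume y
          + ENNReal.ofReal (-lam) * lconvolution f (eS (Set.Ioi 0) (kk 1)) volume y)
        + (lconvolution f (eS (Set.Ioi 0) (kk (1 - α))) volume y'
          + ENNReal.ofReal lam * lconvolution f (eS (Set.Ioi 0) (kk 1)) volume y')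
      ≤ (lconvolution r (eS (Set.Ioi 0) (kk 1)) volume y'
          + ENNReal.ofReal (-lam) * lconvolution f (eS (Set.Ioi 0) (kk 1)) volume y')
        + (lconvolution f (eS (Set.Ioi 0) (kk (1 - α))) volume y
          + ENNReal.ofReal lam * lconvolution f (eS (Set.Ioi 0) (kk 1)) volume y))
    {x x' : ℝ} (hxx : x ≤ x') (hx : x' ≤ T) :
    ∫⁻ s in Set.Ico x x', f s
      ≤ ∫⁻ s in Set.Ico x x', lconvolution r (eS (Set.Ioi 0) (SS α lam α)) volume s := by
  have hα1 : 0 < 1 - α := by linarith [hα.2]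
  have mK : Measurable (eS (Set.Ioi 0) (SS α lam α)) :=
    eS_measurable measurableSet_Ioi (SS_continuousOn lam hα.1 hα.1)
  have mH : Measurable (eS (Set.Ioi 0) (kk 1)) :=
    eS_measurable measurableSet_Ioi (kk_continuousOn 1)
  have mk : Measurable (eS (Set.Ioi 0) (kk (1 - α))) :=
    eS_measurable measurableSet_Ioi (kk_continuousOn _)
  have hK0 : ∀ y ≤ 0, eS (Set.Ioi 0) (SS α lam α) y = 0 := fun y hy => by simp [eS, hy]
  have hid := eK_identity (lam := lam) hα
  have hWf := lconv_finite (lam := lam) hα hf0 hfi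
  have hWr := lconv_finite (lam := lam) hα hr0 hri
  set K := eS (Set.Ioi 0) (SS α lam α) with hKdef
  set H := eS (Set.Ioi 0) (kk 1) with hHdef
  set k := eS (Set.Ioi 0) (kk (1 - α)) with hkdef
  set p := ENNReal.ofReal lam
  set n := ENNReal.ofReal (-lam)
  have mfH : Measurable (lconvolution f H volume) := measurable_lconvolution _ mf mH
  have mrH : Measurable (lconvolution r H volume) := measurable_lconvolution _ mr mH
  have mfk : Measurable (lconvolution f k volume) := measurable_lconvolution _ mf mk
  let A : ℝ → ℝ≥0∞ := fun y => lconvolution r H volume y + n * lconvolution f H volume y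
  let B : ℝ → ℝ≥0∞ := fun y => lconvolution f k volume y + p * lconvolution f H volume y
  have mA : Measurable A := mrH.add (mfH.const_mul _)
  have mB : Measurable B := mfk.add (mfH.const_mul _)

  have h1 : lconvolution K A volume x + lconvolution K B volume x'
      ≤ lconvolution K A volume x' + lconvolution K B volume x := by
    simp only [lconvolution_def]
    rw [← lintegral_add_left (by fun_prop), ← lintegral_add_left (by fun_prop)]
    refine lintegral_mono fun y => ?_
    rcases le_or_gt y 0 with hy | hy
    · simp [hK0 y hy]
    · simp only [← mul_add]
      exact mul_le_mul_right (hmono (-y + x) (-y + x') (by linarith) (by linarith)) _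
  have hA : ∀ y, lconvolution K A volume y = lconvolution K (lconvolution r H volume) volume y
      + n * lconvolution K (lconvolution f H volume) volume y := fun y => by
    rw [lconv_add mK mrH, lconv_smul mK mfH]
  have hB : ∀ y, lconvolution K B volume y = lconvolution f H volume y
      + n * lconvolution K (lconvolution f H volume) volume y := fun y => by
    have e1 : ∀ g : ℝ → ℝ≥0∞, Measurable g → lconvolution K (lconvolution f g volume) volume
        = lconvolution f (lconvolution K g volume) volume := fun g hg => by
      rw [lconvolution_assoc mK mf hg, lconvolution_comm (f := K) (g := f),
        ← lconvolution_assoc mf mK hg]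
    have mKH : Measurable (lconvolution K H volume) := measurable_lconvolution _ mK mH
    have mKk : Measurable (lconvolution K k volume) := measurable_lconvolution _ mK mk
    rw [lconv_add mK mfk, lconv_smul mK mfH, e1 k mk, e1 H mH, ← lconv_smul mf mKH,
      ← lconv_add mf mKk, ← lconv_smul mf mKH, ← lconv_add mf mH]
    congr 1
    ext z; exact hid z
  have e2 : ∀ y, lconvolution K (lconvolution r H volume) volume y
      = lconvolution (lconvolution r K volume) H volume y := fun y => by
    rw [lconvolution_assoc mK mr mH, lconvolution_comm (f := K) (g := r)]
  rw [hA, hA, hB, hB] at h1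
  have hn : ∀ y, n * lconvolution K (lconvolution f H volume) volume y ≠ ∞ := fun y =>
    ENNReal.mul_ne_top ENNReal.ofReal_ne_top (hWf y)
  have h2 : lconvolution K (lconvolution r H volume) volume x + lconvolution f H volume x'
      ≤ lconvolution K (lconvolution r H volume) volume x' + lconvolution f H volume x := by
    refine (ENNReal.add_le_add_iff_right (ENNReal.add_ne_top.2 ⟨hn x, hn x'⟩)).1 ?_
    convert h1 using 1 <;> ring
  have hsp : ∀ g : ℝ → ℝ≥0∞, lconvolution g H volume x'
      = lconvolution g H volume x + ∫⁻ s in Set.Ico x x', g s := fun g => by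
    rw [lconv_H, lconv_H, ← lintegral_union measurableSet_Ico, Set.Iio_union_Ico_eq_Iio hxx]
    exact Set.disjoint_left.2 fun s hs hs' => absurd hs (not_lt.2 hs'.1)
  have f1 := hWr x
  have f2 : lconvolution f H volume x ≠ ∞ := by
    rw [lconv_H]; exact ne_top_of_le_ne_top hfi (setLIntegral_le_lintegral _ _)
  rw [hsp f, e2 x, e2 x', hsp] at h2
  rw [e2 x] at f1
  refine (ENNReal.add_le_add_iff_right (ENNReal.add_ne_top.2 ⟨f1, f2⟩)).1 ?_
  convert h2 using 1 <;> ring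
open MeasureTheory Real
open scoped ENNReal

lemma eS_lintegral_ne_top {T : ℝ} {g : ℝ → ℝ} (hg : IntegrableOn g (Set.Icc 0 T)) :
    ∫⁻ s, eS (Set.Ioc 0 T) g s ≠ ∞ := by
  unfold eS
  rw [lintegral_indicator measurableSet_Ioc]
  exact (hg.mono_set Set.Ioc_subset_Icc_self).lintegral_lt_top.ne

lemma mono_real {α lam T : ℝ} {φ r : ℝ → ℝ} (hα : α ∈ Set.Ioo (0:ℝ) 1) (hT : 0 < T)
    (hφ_cont : ContinuousOn φ (Set.Icc 0 T)) (hφ0 : φ 0 = 0)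
    (hφ_lip : ∀ ε ∈ Set.Ioo 0 T, ∃ K : NNReal, LipschitzOnWith K φ (Set.Icc ε T))
    (hr : IntegrableOn r (Set.Icc 0 T))
    (hineq : ∀ t ∈ Set.Ioc 0 T,
      (1 / Real.Gamma (1 - α)) * (t ^ (-α) * φ t
          + ∫ s in Set.Ioo 0 t, α * (t - s) ^ (-α - 1) * (φ t - φ s))
        + lam * φ t ≤ r t)
    {y y' : ℝ} (hyy : y ≤ y') (hy : y' ≤ T) :
    (∫ s in Set.Ioo 0 y, r s) - lam * (∫ s in Set.Ioo 0 y, φ s) - JJ α φ y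
      ≤ (∫ s in Set.Ioo 0 y', r s) - lam * (∫ s in Set.Ioo 0 y', φ s) - JJ α φ y' := by
  have hφi : IntegrableOn φ (Set.Icc 0 T) := hφ_cont.integrableOn_Icc
  have key : ∀ a b, 0 ≤ a → a ≤ b → b ≤ T →
    (∫ s in Set.Ioo 0 a, r s) - lam * (∫ s in Set.Ioo 0 a, φ s) - JJ α φ a
      ≤ (∫ s in Set.Ioo 0 b, r s) - lam * (∫ s in Set.Ioo 0 b, φ s) - JJ α φ b := by
    intro a b ha hab hb
    have h := JJ_incr hα hT hφ_cont hφ0 hφ_lip hr hineq ha hab hb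
    have ii : ∀ g : ℝ → ℝ, IntegrableOn g (Set.Icc 0 T) → ∀ c d, 0 ≤ c → c ≤ d → d ≤ T →
        IntervalIntegrable g volume c d := fun g hg c d hc hcd hd =>
      (intervalIntegrable_iff_integrableOn_Icc_of_le hcd).2
        (hg.mono_set (Set.Icc_subset_Icc hc hd))
    rw [intervalIntegral.integral_sub (ii r hr a b ha hab hb)
      ((ii φ hφi a b ha hab hb).const_mul _), intervalIntegral.integral_const_mul] at h
    have sp : ∀ g : ℝ → ℝ, IntegrableOn g (Set.Icc 0 T) →
        ∫ s in Set.Ioo 0 b, g s = (∫ s in Set.Ioo 0 a, g s) + ∫ s in a..b, g s := fun g hg => by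
      rw [← integral_Ioc_eq_integral_Ioo, ← integral_Ioc_eq_integral_Ioo,
        ← intervalIntegral.integral_of_le ha, ← intervalIntegral.integral_of_le (ha.trans hab),
        intervalIntegral.integral_add_adjacent_intervals (ii g hg 0 a le_rfl ha (hab.trans hb))
          (ii g hg a b ha hab hb)]
    rw [sp r hr, sp φ hφi]
    linarith
  have z : ∀ x ≤ (0:ℝ), (∫ s in Set.Ioo 0 x, r s) - lam * (∫ s in Set.Ioo 0 x, φ s) - JJ α φ x = 0 := by
    intro x hx
    simp [JJ, Set.Ioo_eq_empty (not_lt.2 hx)]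
  rcases le_or_gt 0 y with h0 | h0
  · exact key y y' h0 hyy hy
  · rw [z y h0.le]
    rcases le_or_gt 0 y' with h1 | h1
    · have h5 := key 0 y' le_rfl h1 hy
      rw [z 0 le_rfl] at h5
      exact h5
    · rw [z y' h1.le]

theorem scalar_comparison_principle
    (α lam T : ℝ) (hα : α ∈ Set.Ioo (0 : ℝ) 1) (hT : 0 < T)
    (φ r : ℝ → ℝ)
    (hφ_cont : ContinuousOn φ (Set.Icc 0 T))
    (hφ_nonneg : ∀ t ∈ Set.Icc 0 T, 0 ≤ φ t)
    (hφ0 : φ 0 = 0)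
    (hφ_lip : ∀ ε ∈ Set.Ioo 0 T, ∃ K : NNReal, LipschitzOnWith K φ (Set.Icc ε T))
    (hr_nonneg : ∀ t ∈ Set.Ioc 0 T, 0 ≤ r t)
    (hr_cont : ContinuousOn r (Set.Ioc 0 T))
    (hr_int : ∀ t ∈ Set.Ioc 0 T,
      IntegrableOn (fun s => (t - s) ^ (α - 1) * mittagLeffler α α (-lam * (t - s) ^ α) * r s)
        (Set.Ioo 0 t))
    (hineq : ∀ t ∈ Set.Ioc 0 T,
      (1 / Real.Gamma (1 - α)) * (t ^ (-α) * φ t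
          + ∫ s in Set.Ioo 0 t, α * (t - s) ^ (-α - 1) * (φ t - φ s))
        + lam * φ t ≤ r t) :
    ∀ t ∈ Set.Ioc 0 T,
      φ t ≤ ∫ s in Set.Ioo 0 t,
        (t - s) ^ (α - 1) * mittagLeffler α α (-lam * (t - s) ^ α) * r s := by
  have hα1 : 0 < 1 - α := by linarith [hα.2]
  have hcongr : ∀ t, Set.EqOn
      (fun s => (t - s) ^ (α - 1) * mittagLeffler α α (-lam * (t - s) ^ α) * r s)
      (fun s => SS α lam α (t - s) * r s) (Set.Ioo 0 t) := fun t s hs => by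
    simp only
    rw [SS_eq_ML (by linarith [hs.2])]
  have hr_int' : ∀ t ∈ Set.Ioc 0 T,
      IntegrableOn (fun s => SS α lam α (t - s) * r s) (Set.Ioo 0 t) := fun t ht =>
    (hr_int t ht).congr_fun (hcongr t) measurableSet_Ioo
  have hr := r_integrable hα hT hr_cont (hr_int' T ⟨hT, le_rfl⟩)
  have hφi : IntegrableOn φ (Set.Icc 0 T) := hφ_cont.integrableOn_Icc
  intro t ht
  rw [setIntegral_congr_fun measurableSet_Ioo (hcongr t)]
  have hψc := psi_cont hα ht hr_cont hr hr_int'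
  set ψ : ℝ → ℝ := fun x => ∫ s in Set.Ioo 0 x, SS α lam α (x - s) * r s with hψ
  have hφIoc : ContinuousOn φ (Set.Ioc 0 T) := hφ_cont.mono Set.Ioc_subset_Icc_self

  have nr : ∀ x ≤ T, ∀ u ∈ Set.Ioo 0 x, 0 ≤ r u := fun x hx u hu =>
    hr_nonneg u ⟨hu.1, hu.2.le.trans hx⟩
  have nφ : ∀ x ≤ T, ∀ u ∈ Set.Ioo 0 x, 0 ≤ φ u := fun x hx u hu =>
    hφ_nonneg u ⟨hu.1.le, hu.2.le.trans hx⟩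
  have io : ∀ g : ℝ → ℝ, IntegrableOn g (Set.Icc 0 T) → ∀ x ≤ T, IntegrableOn g (Set.Ioo 0 x) :=
    fun g hg x hx => hg.mono_set fun s hs => ⟨hs.1.le, hs.2.le.trans hx⟩
  have vr : ∀ x ≤ T, lconvolution (eS (Set.Ioc 0 T) r) (eS (Set.Ioi 0) (kk 1)) volume x
      = ENNReal.ofReal (∫ s in Set.Ioo 0 x, r s) := fun x hx => by
    rw [eS_conv (Ioc_inter_Iio' hx) (kk_nonneg_all one_pos) (nr x hx)]
    · simp only [kk_one, one_mul]
    · simp only [kk_one, one_mul]; exact io r hr x hx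
  have vφ : ∀ x ≤ T, lconvolution (eS (Set.Ioc 0 T) φ) (eS (Set.Ioi 0) (kk 1)) volume x
      = ENNReal.ofReal (∫ s in Set.Ioo 0 x, φ s) := fun x hx => by
    rw [eS_conv (Ioc_inter_Iio' hx) (kk_nonneg_all one_pos) (nφ x hx)]
    · simp only [kk_one, one_mul]
    · simp only [kk_one, one_mul]; exact io φ hφi x hx
  have vJ : ∀ x ≤ T, lconvolution (eS (Set.Ioc 0 T) φ) (eS (Set.Ioi 0) (kk (1 - α))) volume x
      = ENNReal.ofReal (JJ α φ x) := fun x hx => by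
    rw [eS_conv (Ioc_inter_Iio' hx) (kk_nonneg_all hα1) (nφ x hx)]
    · rfl
    · rcases le_or_gt 0 x with h | h
      · exact kk_mul_integrable hα1 le_rfl h hx hφ_cont
      · rw [Set.Ioo_eq_empty (not_lt.2 h.le)]; exact integrableOn_empty
  have vψ : ∀ x ∈ Set.Ioc 0 T, lconvolution (eS (Set.Ioc 0 T) r)
      (eS (Set.Ioi 0) (SS α lam α)) volume x = ENNReal.ofReal (ψ x) := fun x hx => by
    rw [eS_conv (Ioc_inter_Iio' hx.2) (fun u hu => (SS_pos hα hu).le) (nr x hx.2) (hr_int' x hx)]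
  have main := fun (x x' : ℝ) (hxx : x ≤ x') (hx' : x' ≤ T) => abstract_ineq (α := α) (lam := lam) (T := T) (f := eS (Set.Ioc 0 T) φ)
    (r := eS (Set.Ioc 0 T) r) hα
    (eS_measurable measurableSet_Ioc hφIoc) (eS_measurable measurableSet_Ioc hr_cont)
    (fun s hs => by simp [eS, hs.not_gt]) (fun s hs => by simp [eS, hs.not_gt])
    (eS_lintegral_ne_top hφi) (eS_lintegral_ne_top hr) (by
      intro y y' hyy hy'
      have hy := hyy.trans hy'
      rw [vr y hy, vr y' hy', vφ y hy, vφ y' hy', vJ y hy, vJ y' hy']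
      have hm := mono_real hα hT hφ_cont hφ0 hφ_lip hr hineq hyy hy'
      have pr : ∀ x ≤ T, 0 ≤ ∫ s in Set.Ioo 0 x, r s := fun x hx =>
        setIntegral_nonneg measurableSet_Ioo (nr x hx)
      have pφ : ∀ x ≤ T, 0 ≤ ∫ s in Set.Ioo 0 x, φ s := fun x hx =>
        setIntegral_nonneg measurableSet_Ioo (nφ x hx)
      have pJ : ∀ x ≤ T, 0 ≤ JJ α φ x := fun x hx =>
        setIntegral_nonneg measurableSet_Ioo fun s hs =>
          mul_nonneg (kk_pos hα1 (by linarith [hs.2])).le (nφ x hx s hs)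
      have q1 := pr y hy
      have q2 := pr y' hy'
      have q3 := pφ y hy
      have q4 := pφ y' hy'
      have q5 := pJ y hy
      have q6 := pJ y' hy'
      rcases le_total lam 0 with hl | hl
      · have hl' : 0 ≤ -lam := by linarith
        rw [ENNReal.ofReal_of_nonpos hl]
        simp only [zero_mul, add_zero]
        rw [← ENNReal.ofReal_mul hl', ← ENNReal.ofReal_mul hl',
          ← ENNReal.ofReal_add q1 (by positivity), ← ENNReal.ofReal_add q2 (by positivity),
          ← ENNReal.ofReal_add (by positivity) q6, ← ENNReal.ofReal_add (by positivity) q5]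
        apply ENNReal.ofReal_le_ofReal
        linarith
      · rw [ENNReal.ofReal_of_nonpos (p := -lam) (by linarith)]
        simp only [zero_mul, add_zero]
        rw [← ENNReal.ofReal_mul hl, ← ENNReal.ofReal_mul hl,
          ← ENNReal.ofReal_add q6 (by positivity), ← ENNReal.ofReal_add q5 (by positivity),
          ← ENNReal.ofReal_add q1 (by positivity), ← ENNReal.ofReal_add q2 (by positivity)]
        apply ENNReal.ofReal_le_ofReal
        linarith) hxx hx'

  by_contra hcon
  have hcon' : ψ t < φ t := not_le.1 hcon
  have hψ0 : 0 ≤ ψ t := setIntegral_nonneg measurableSet_Ioo fun s hs =>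
    mul_nonneg (SS_pos hα (by linarith [hs.2])).le (nr t ht.2 s hs)
  obtain ⟨c1, h1, h1'⟩ := exists_between hcon'
  obtain ⟨c2, h2, h2'⟩ := exists_between h1'
  have ev : ∀ᶠ s in nhdsWithin t (Set.Ioc 0 T), ψ s < c1 ∧ c2 < φ s :=
    (hψc.eventually (gt_mem_nhds h1)).and ((hφIoc t ht).eventually (lt_mem_nhds h2'))
  rw [eventually_nhdsWithin_iff, Metric.eventually_nhds_iff] at ev
  obtain ⟨δ, hδ, ev⟩ := ev
  have ht0 := ht.1
  obtain ⟨x, hx0, hxt, hxδ⟩ : ∃ x, 0 < x ∧ x < t ∧ t - δ < x := by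
    obtain ⟨x, hx, hx'⟩ := exists_between (show max 0 (t - δ) < t from max_lt ht0 (by linarith))
    exact ⟨x, (le_max_left _ _).trans_lt hx, hx', (le_max_right _ _).trans_lt hx⟩
  have hs : ∀ s ∈ Set.Ico x t, s ∈ Set.Ioc 0 T ∧ ψ s < c1 ∧ c2 < φ s := fun s hs => by
    have hm : s ∈ Set.Ioc 0 T := ⟨hx0.trans_le hs.1, hs.2.le.trans ht.2⟩
    refine ⟨hm, ev ?_ hm⟩
    rw [Real.dist_eq, abs_lt]
    constructor <;> linarith [hs.1, hs.2]
  have hfin := main x t hxt.le ht.2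
  have l1 : ENNReal.ofReal c2 * volume (Set.Ico x t) ≤ ∫⁻ s in Set.Ico x t, eS (Set.Ioc 0 T) φ s := by
    rw [← setLIntegral_const]
    refine setLIntegral_mono' measurableSet_Ico fun s h => ?_
    unfold eS
    rw [Set.indicator_of_mem (hs s h).1]
    exact ENNReal.ofReal_le_ofReal (hs s h).2.2.le
  have l2 : ∫⁻ s in Set.Ico x t, lconvolution (eS (Set.Ioc 0 T) r)
      (eS (Set.Ioi 0) (SS α lam α)) volume s ≤ ENNReal.ofReal c1 * volume (Set.Ico x t) := by
    rw [← setLIntegral_const]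
    refine setLIntegral_mono' measurableSet_Ico fun s h => ?_
    rw [vψ s (hs s h).1]
    exact ENNReal.ofReal_le_ofReal (hs s h).2.1.le
  have l3 := (l1.trans hfin).trans l2
  have hc1 : 0 ≤ c1 := hψ0.trans h1.le
  rw [Real.volume_Ico, ← ENNReal.ofReal_mul (hc1.trans h2.le), ← ENNReal.ofReal_mul hc1,
    ENNReal.ofReal_le_ofReal_iff (mul_nonneg hc1 (by linarith))] at l3
  nlinarith
end

section
/- Let H be a real Hilbert space, α ∈ (0,1), λ ∈ ℝ, and T > 0. Let e : [0,T] → H be continuous with e(0) = 0, differentiable on (0,T), such that s ↦ (t−s)^{−α}‖e′(s)‖ is integrable on (0,t) for every t ∈ (0,T], and such that t ↦ ‖e(t)‖ is Lipschitz continuous on [ε, T] for every ε ∈ (0,T). Let r : (0,T] → ℝ be nonnegative and continuous, with s ↦ (t−s)^{α−1} E_{α,α}(−λ(t−s)^α) r(s) integrable on (0,t) for every t ∈ (0,T]. Suppose that for every t ∈ (0,T]: (1/Γ(1−α)) ⟨∫_0^t (t−s)^{−α} e′(s) ds, e(t)⟩ + λ ‖e(t)‖² ≤ r(t) ‖e(t)‖.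 Then for every t ∈ (0,T]: ‖e(t)‖ ≤ ∫_0^t (t−s)^{α−1} E_{α,α}(−λ(t−s)^α) r(s) ds. -/
open MeasureTheory Real
open scoped RealInnerProductSpace

lemma beta_int_aux {a b t : ℝ} (ha : 0 < a) (hb : 0 < b) (ht : 0 < t) :
    ∫ s in Set.Ioo 0 t, (t - s) ^ (a - 1) * s ^ (b - 1)
      = t ^ (a + b - 1) * (Real.Gamma a * Real.Gamma b / Real.Gamma (a + b)) := by
  have h := Complex.betaIntegral_scaled (b : ℂ) (a : ℂ) ht
  rw [Complex.betaIntegral_eq_Gamma_mul_div _ _ (by simpa) (by simpa)] at h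
  rw [intervalIntegral.integral_of_le ht.le, integral_Ioc_eq_integral_Ioo] at h
  have h2 : ∫ x in Set.Ioo 0 t, (x : ℂ) ^ ((b : ℂ) - 1) * ((t : ℂ) - x) ^ ((a : ℂ) - 1)
      = ∫ x in Set.Ioo 0 t, (((t - x) ^ (a - 1) * x ^ (b - 1) : ℝ) : ℂ) := by
    refine setIntegral_congr_fun measurableSet_Ioo fun x hx => ?_
    have h1 : 0 ≤ t - x := by linarith [hx.2]
    rw [Complex.ofReal_mul, Complex.ofReal_cpow h1, Complex.ofReal_cpow hx.1.le, mul_comm]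
    push_cast
    rfl
  rw [h2, integral_complex_ofReal] at h
  apply Complex.ofReal_injective
  rw [h]
  rw [Complex.ofReal_mul, Complex.ofReal_cpow ht.le, ← Complex.ofReal_add, Complex.Gamma_ofReal,
    Complex.Gamma_ofReal, Complex.Gamma_ofReal]
  push_cast
  rw [mul_comm (Complex.ofReal (Gamma b)), add_comm (b : ℂ), add_comm b a]

lemma beta_integrable_aux {a b t : ℝ} (ha : 0 < a) (hb : 0 < b) (ht : 0 < t) :
    IntegrableOn (fun s => (t - s) ^ (a - 1) * s ^ (b - 1)) (Set.Ioo 0 t) := by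
  by_contra hcon
  have h := beta_int_aux ha hb ht
  rw [integral_undef hcon] at h
  have h1 := Real.Gamma_pos_of_pos ha
  have h2 := Real.Gamma_pos_of_pos hb
  have h3 := Real.Gamma_pos_of_pos (add_pos ha hb)
  have : 0 < t ^ (a + b - 1) * (Real.Gamma a * Real.Gamma b / Real.Gamma (a + b)) := by positivity
  linarith

lemma gamma_ratio_aux {a x : ℝ} (ha : 0 < a) (hx : 1 < x) :
    (x - 1) ^ a * Real.Gamma x ≤ Real.Gamma (x + a) := by
  have hc := Real.convexOn_log_Gamma
  have h := hc.slope_mono_adjacent (x := x - 1) (y := x) (z := x + a)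
    (by simp; linarith) (by simp; linarith) (by linarith) (by linarith)
  have hG : Real.Gamma x = (x - 1) * Real.Gamma (x - 1) := by
    have := Real.Gamma_add_one (s := x - 1) (by linarith)
    rwa [sub_add_cancel] at this
  have hp : 0 < x - 1 := by linarith
  have hG1 := Real.Gamma_pos_of_pos hp
  have hG2 := Real.Gamma_pos_of_pos (show 0 < x by linarith)
  have hG3 := Real.Gamma_pos_of_pos (show 0 < x + a by linarith)
  have e1 : Real.log (Real.Gamma x) - Real.log (Real.Gamma (x - 1)) = Real.log (x - 1) := by
    rw [hG, Real.log_mul hp.ne' hG1.ne']; ring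
  simp only [Function.comp, sub_sub_cancel, div_one, add_sub_cancel_left, e1] at h
  rw [le_div_iff₀ ha] at h
  have h2 : Real.log ((x - 1) ^ a * Real.Gamma x) ≤ Real.log (Real.Gamma (x + a)) := by
    rw [Real.log_mul (by positivity) hG2.ne', Real.log_rpow hp]
    linarith
  exact (Real.log_le_log_iff (by positivity) hG3).1 h2

lemma ml_summable_aux {a b : ℝ} (ha : 0 < a) (hb : 0 < b) (z : ℝ) :
    Summable (fun j : ℕ => z ^ j / Real.Gamma (a * j + b)) := by
  have htend : Filter.Tendsto (fun j : ℕ => ((a * j + b) - 1) ^ a) Filter.atTop Filter.atTop := by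
    refine (tendsto_rpow_atTop ha).comp ?_
    refine Filter.tendsto_atTop_add_const_right _ _ (Filter.tendsto_atTop_add_const_right _ _ ?_)
    exact tendsto_natCast_atTop_atTop.const_mul_atTop ha
  have htend2 : Filter.Tendsto (fun j : ℕ => a * j + b) Filter.atTop Filter.atTop := by
    refine Filter.tendsto_atTop_add_const_right _ _ ?_
    exact tendsto_natCast_atTop_atTop.const_mul_atTop ha
  refine summable_of_ratio_norm_eventually_le (r := 1 / 2) (by norm_num) ?_
  filter_upwards [htend.eventually_ge_atTop (2 * |z|), htend2.eventually_gt_atTop 1] with j h1 h2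
  have hr := gamma_ratio_aux ha h2
  have hG1 := Real.Gamma_pos_of_pos (show 0 < a * j + b by linarith)
  have hG2 := Real.Gamma_pos_of_pos (show 0 < a * j + b + a by linarith)
  have e1 : a * ((j + 1 : ℕ) : ℝ) + b = a * j + b + a := by push_cast; ring
  rw [e1, norm_div, norm_div, norm_pow, norm_pow, Real.norm_eq_abs, Real.norm_of_nonneg hG1.le,
    Real.norm_of_nonneg hG2.le, pow_succ, div_le_iff₀ hG2]
  have h3 : 2 * |z| * Real.Gamma (a * j + b) ≤ Real.Gamma (a * j + b + a) :=
    (mul_le_mul_of_nonneg_right h1 hG1.le).trans hr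
  have h4 : 0 ≤ |z| ^ j / Real.Gamma (a * j + b) := by positivity
  calc |z| ^ j * |z| = 1 / 2 * (|z| ^ j / Real.Gamma (a * j + b)) * (2 * |z| * Real.Gamma (a * j + b)) := by
        field_simp
    _ ≤ _ := by gcongr

/-- The resolvent kernel. -/
noncomputable def mlKer (α lam x : ℝ) : ℝ := x ^ (α - 1) * mittagLeffler α α (-lam * x ^ α)

lemma ml_continuous_aux {a b : ℝ} (ha : 0 < a) (hb : 0 < b) :
    Continuous (mittagLeffler a b) := by
  rw [continuous_iff_continuousAt]
  intro z
  have hc : ContinuousOn (mittagLeffler a b) (Metric.ball 0 (|z| + 1)) := by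
    refine continuousOn_tsum (u := fun j : ℕ => (|z| + 1) ^ j / Real.Gamma (a * j + b))
      (fun j => by fun_prop) (ml_summable_aux ha hb _) ?_
    intro j x hx
    have hG1 := Real.Gamma_pos_of_pos (show 0 < a * j + b by positivity)
    rw [mem_ball_zero_iff] at hx
    rw [norm_div, norm_pow, Real.norm_of_nonneg hG1.le]
    gcongr
  exact hc.continuousAt (Metric.isOpen_ball.mem_nhds (by simp))

lemma mlKer_measurable {α : ℝ} (hα : 0 < α) (lam : ℝ) : Measurable (mlKer α lam) := by
  have := (ml_continuous_aux hα hα).measurable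
  unfold mlKer
  exact (measurable_id.pow_const _).mul (this.comp ((measurable_id.pow_const _).const_mul _))

lemma mlKer_continuousOn {α : ℝ} (hα : 0 < α) (lam : ℝ) :
    ContinuousOn (mlKer α lam) (Set.Ioi 0) := by
  have := (ml_continuous_aux hα hα)
  unfold mlKer
  refine ContinuousOn.mul ?_ ?_
  · exact continuousOn_id.rpow_const fun x hx => Or.inl (ne_of_gt hx)
  · refine this.comp_continuousOn (continuousOn_const.mul ?_)
    exact continuousOn_id.rpow_const fun x hx => Or.inl (ne_of_gt hx)

lemma mlKer_bound {α : ℝ} (hα : 0 < α) (lam T : ℝ) :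
    ∃ C : ℝ, 0 ≤ C ∧ ∀ x, 0 < x → x ≤ T → |mlKer α lam x| ≤ C * x ^ (α - 1) := by
  have hc : ContinuousOn (fun x : ℝ => mittagLeffler α α (-lam * x ^ α)) (Set.Icc 0 T) := by
    refine (ml_continuous_aux hα hα).comp_continuousOn (continuousOn_const.mul ?_)
    exact continuousOn_id.rpow_const fun x hx => Or.inr hα.le
  obtain ⟨C, hC⟩ := isCompact_Icc.exists_bound_of_continuousOn hc
  refine ⟨|C|, abs_nonneg _, fun x hx hxT => ?_⟩
  unfold mlKer
  rw [abs_mul, abs_of_nonneg (Real.rpow_nonneg hx.le _), mul_comm]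
  exact mul_le_mul_of_nonneg_right ((hC x ⟨hx.le, hxT⟩).trans (le_abs_self C))
    (Real.rpow_nonneg hx.le _)

lemma mlKer_hasSum {α : ℝ} (hα : 0 < α) (lam : ℝ) {x : ℝ} (hx : 0 < x) :
    HasSum (fun j : ℕ => (-lam) ^ j * (x ^ (α * (j + 1) - 1) / Real.Gamma (α * (j + 1))))
      (mlKer α lam x) := by
  have h := ((ml_summable_aux hα hα (-lam * x ^ α)).hasSum).mul_left (x ^ (α - 1))
  unfold mlKer mittagLeffler
  have hk : (fun j : ℕ => (-lam) ^ j * (x ^ (α * (j + 1) - 1) / Real.Gamma (α * (j + 1))))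
     = (fun j : ℕ => x ^ (α - 1) * ((-lam * x ^ α) ^ j / Real.Gamma (α * j + α))) := ?_
  · rw [hk]; exact h
  funext j
  rw [mul_pow, ← Real.rpow_natCast (x ^ α), ← Real.rpow_mul hx.le,
    show α * ((j : ℝ) + 1) - 1 = (α - 1) + α * j by ring, Real.rpow_add hx,
    show α * ((j : ℝ) + 1) = α * j + α by ring]
  ring

lemma mlKer_conv {α b t : ℝ} (hα : 0 < α) (hb : 0 < b) (lam : ℝ) (ht : 0 < t) :
    HasSum (fun j : ℕ => (-lam) ^ j * (t ^ (α * (j + 1) + b - 1) / Real.Gamma (α * (j + 1) + b)))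
      (∫ s in Set.Ioo 0 t, mlKer α lam (t - s) * (s ^ (b - 1) / Real.Gamma b)) := by
  set F : ℕ → ℝ → ℝ := fun j s =>
    ((-lam) ^ j / (Real.Gamma (α * (j + 1)) * Real.Gamma b))
      * ((t - s) ^ (α * (j + 1) - 1) * s ^ (b - 1)) with hF
  have hpos : ∀ j : ℕ, 0 < α * ((j : ℝ) + 1) := fun j => by positivity
  have hGb := Real.Gamma_pos_of_pos hb
  have hint : ∀ j, Integrable (F j) (volume.restrict (Set.Ioo 0 t)) := fun j =>
    (beta_integrable_aux (hpos j) hb ht).const_mul _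
  have hval : ∀ j, ∫ s in Set.Ioo 0 t, F j s
      = (-lam) ^ j * (t ^ (α * (j + 1) + b - 1) / Real.Gamma (α * (j + 1) + b)) := by
    intro j
    have hG1 := Real.Gamma_pos_of_pos (hpos j)
    have hG2 := Real.Gamma_pos_of_pos (add_pos (hpos j) hb)
    simp only [hF]
    rw [integral_const_mul, beta_int_aux (hpos j) hb ht]
    field_simp
  have hnorm : ∀ j, ∫ s in Set.Ioo 0 t, ‖F j s‖
      = t ^ (α + b - 1) * ((|lam| * t ^ α) ^ j / Real.Gamma (α * j + (α + b))) := by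
    intro j
    have hG1 := Real.Gamma_pos_of_pos (hpos j)
    have hG2 := Real.Gamma_pos_of_pos (add_pos (hpos j) hb)
    have : ∫ s in Set.Ioo 0 t, ‖F j s‖ = ∫ s in Set.Ioo 0 t,
        (|lam| ^ j / (Real.Gamma (α * (j + 1)) * Real.Gamma b))
          * ((t - s) ^ (α * (j + 1) - 1) * s ^ (b - 1)) := by
      refine setIntegral_congr_fun measurableSet_Ioo fun s hs => ?_
      have h1 : 0 ≤ t - s := by linarith [hs.2]
      have h2 := hs.1.le
      simp only [hF, norm_mul, norm_div, norm_pow, norm_neg, Real.norm_eq_abs]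
      rw [abs_of_pos hG1, abs_of_pos hGb, abs_of_nonneg (Real.rpow_nonneg h1 _),
        abs_of_nonneg (Real.rpow_nonneg h2 _)]
    rw [this, integral_const_mul, beta_int_aux (hpos j) hb ht, mul_pow,
      ← Real.rpow_natCast (t ^ α), ← Real.rpow_mul ht.le,
      show α * ((j : ℝ) + 1) + b - 1 = (α + b - 1) + α * j by ring, Real.rpow_add ht,
      show α * (j : ℝ) + (α + b) = α * (j + 1) + b by ring]
    field_simp
  have hsum : Summable fun j => ∫ s in Set.Ioo 0 t, ‖F j s‖ := by
    simp_rw [hnorm]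
    exact (ml_summable_aux hα (add_pos hα hb) _).mul_left _
  have h := hasSum_integral_of_summable_integral_norm hint hsum
  simp_rw [hval] at h
  have hk : ∫ s in Set.Ioo 0 t, mlKer α lam (t - s) * (s ^ (b - 1) / Real.Gamma b)
      = ∫ s in Set.Ioo 0 t, ∑' j, F j s := ?_
  · rw [hk]; exact h
  refine setIntegral_congr_fun measurableSet_Ioo fun s hs => ?_
  have h1 : 0 < t - s := by linarith [hs.2]
  have h3 := (mlKer_hasSum hα lam h1).mul_right (s ^ (b - 1) / Real.Gamma b)
  change mlKer α lam (t - s) * _ = _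
  rw [← h3.tsum_eq]
  refine tsum_congr fun j => ?_
  simp only [hF]
  have hG1 := Real.Gamma_pos_of_pos (hpos j)
  field_simp

lemma mlKer_conv_integrable {α b t : ℝ} (hα : 0 < α) (hb : 0 < b) (lam : ℝ) (ht : 0 < t) :
    IntegrableOn (fun s => mlKer α lam (t - s) * s ^ (b - 1)) (Set.Ioo 0 t) := by
  obtain ⟨C, hC0, hC⟩ := mlKer_bound hα lam t
  refine Integrable.mono' ((beta_integrable_aux hα hb ht).const_mul C) ?_ ?_
  · exact (((mlKer_measurable hα lam).comp (measurable_const.sub measurable_id)).mul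
      (measurable_id.pow_const _)).aestronglyMeasurable
  · refine (ae_restrict_iff' measurableSet_Ioo).2 (Filter.Eventually.of_forall fun s hs => ?_)
    rw [norm_mul, Real.norm_eq_abs, Real.norm_of_nonneg (Real.rpow_nonneg hs.1.le _), ← mul_assoc]
    have := Real.rpow_nonneg hs.1.le (b - 1)
    exact mul_le_mul_of_nonneg_right (hC _ (by linarith [hs.2]) (by linarith [hs.1])) this

lemma mlKer_volterra {α t : ℝ} (hα : 0 < α) (lam : ℝ) (ht : 0 < t) :
    mlKer α lam t + lam * ∫ s in Set.Ioo 0 t, mlKer α lam (t - s) * (s ^ (α - 1) / Real.Gamma α)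
      = t ^ (α - 1) / Real.Gamma α := by
  have h1 := (mlKer_hasSum hα lam ht)
  have h2 := (mlKer_conv hα hα lam ht).mul_left (-lam)
  rw [← hasSum_nat_add_iff' 1] at h1
  have h3 : ∀ j : ℕ, (-lam) ^ (j + 1) * (t ^ (α * ((j + 1 : ℕ) + 1) - 1) / Real.Gamma (α * ((j + 1 : ℕ) + 1)))
    = -lam * ((-lam) ^ j * (t ^ (α * (j + 1) + α - 1) / Real.Gamma (α * (j + 1) + α))) := by
    intro j
    rw [pow_succ, show α * (((j + 1 : ℕ) : ℝ) + 1) = α * (j + 1) + α by push_cast; ring]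
    ring
  simp_rw [h3] at h1
  have h4 := h1.unique h2
  simp at h4
  linarith

lemma mlKer_identity {α t : ℝ} (hα : 0 < α) (hα1 : α < 1) (lam : ℝ) (ht : 0 < t) :
    ∫ s in Set.Ioo 0 t, mlKer α lam (t - s) * (s ^ (-α) / Real.Gamma (1 - α) + lam) = 1 := by
  have h1 := (mlKer_conv hα (sub_pos.2 hα1) lam ht)
  have h2 := (mlKer_conv hα one_pos lam ht).mul_left (-lam)
  rw [← hasSum_nat_add_iff' 1] at h1
  have h3 : ∀ j : ℕ, (-lam) ^ (j + 1) * (t ^ (α * ((j + 1 : ℕ) + 1) + (1 - α) - 1) / Real.Gamma (α * ((j + 1 : ℕ) + 1) + (1 - α)))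
    = -lam * ((-lam) ^ j * (t ^ (α * (j + 1) + 1 - 1) / Real.Gamma (α * (j + 1) + 1))) := by
    intro j
    rw [pow_succ, show α * (((j + 1 : ℕ) : ℝ) + 1) + (1 - α) = α * (j + 1) + 1 by push_cast; ring]
    ring
  simp_rw [h3] at h1
  have h4 := h1.unique h2
  simp at h4
  have i1 := (mlKer_conv_integrable hα (sub_pos.2 hα1) lam ht).mul_const (1 / Real.Gamma (1 - α))
  have i2 := (mlKer_conv_integrable hα one_pos lam ht).mul_const lam
  have h5 : ∫ s in Set.Ioo 0 t, mlKer α lam (t - s) * (s ^ (-α) / Real.Gamma (1 - α) + lam)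
     = ∫ s in Set.Ioo 0 t, (mlKer α lam (t - s) * s ^ (1 - α - 1) * (1 / Real.Gamma (1 - α))
        + mlKer α lam (t - s) * s ^ ((1 : ℝ) - 1) * lam) := by
    refine setIntegral_congr_fun measurableSet_Ioo fun s hs => ?_
    simp only [sub_self, Real.rpow_zero, show 1 - α - 1 = - α by ring]
    ring
  rw [h5, integral_add i1 i2, integral_mul_const, integral_mul_const]
  simp only [sub_self, Real.rpow_zero, show 1 - α - 1 = - α by ring, mul_one]
  simp only [← mul_div_assoc, integral_div] at h4
  rw [mul_one_div]
  linarith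

lemma reflect_integral_aux (f : ℝ → ℝ) {t : ℝ} (ht : 0 < t) :
    ∫ s in Set.Ioo 0 t, f (t - s) = ∫ s in Set.Ioo 0 t, f s := by
  rw [← integral_Ioc_eq_integral_Ioo, ← integral_Ioc_eq_integral_Ioo,
    ← intervalIntegral.integral_of_le ht.le, ← intervalIntegral.integral_of_le ht.le,
    intervalIntegral.integral_comp_sub_left]
  simp

lemma reflect_integrable_aux {f : ℝ → ℝ} {t : ℝ} (ht : 0 < t)
    (hf : IntegrableOn f (Set.Ioo 0 t)) :
    IntegrableOn (fun s => f (t - s)) (Set.Ioo 0 t) := by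
  rw [← intervalIntegrable_iff_integrableOn_Ioo_of_le ht.le] at hf ⊢
  simpa using (hf.comp_sub_left t).symm

lemma mlKer_nonneg {α : ℝ} (hα : 0 < α) (hα1 : α < 1) (lam : ℝ) {x : ℝ} (hx : 0 < x) :
    0 ≤ mlKer α lam x := by
  rcases le_or_gt lam 0 with hl | hl
  · refine (mlKer_hasSum hα lam hx).nonneg fun j => ?_
    have hG1 := Real.Gamma_pos_of_pos (show 0 < α * ((j : ℝ) + 1) by positivity)
    have : 0 ≤ (-lam) := by linarith
    positivity
  by_contra hneg
  push Not at hneg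
  set h : ℝ → ℝ := fun x => mittagLeffler α α (-lam * x ^ α) with hh
  have hG := Real.Gamma_pos_of_pos hα
  have hcont : Continuous h :=
    (ml_continuous_aux hα hα).comp (continuous_const.mul (Real.continuous_rpow_const hα.le))
  have h0 : 0 < h 0 := by
    have : h 0 = 1 / Real.Gamma α := by
      simp only [hh, mittagLeffler]
      rw [tsum_eq_single 0]
      · simp
      · intro j hj
        simp [Real.zero_rpow hα.ne', hj]
    rw [this]; positivity
  have hkh : ∀ y, mlKer α lam y = y ^ (α - 1) * h y := fun y => rfl
  set S : Set ℝ := {y | 0 ≤ y ∧ h y ≤ 0} with hS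
  have hSc : IsClosed S :=
    (isClosed_le continuous_const continuous_id).inter (isClosed_le hcont continuous_const)
  have hxS : x ∈ S := by
    refine ⟨hx.le, ?_⟩
    rw [hkh] at hneg
    by_contra hc
    push Not at hc
    have := Real.rpow_pos_of_pos hx (α - 1)
    have := mul_pos this hc
    linarith
  have hSb : BddBelow S := ⟨0, fun y hy => hy.1⟩
  set t0 := sInf S with ht0
  have ht0S : t0 ∈ S := hSc.csInf_mem ⟨x, hxS⟩ hSb
  have ht0pos : 0 < t0 := by
    rcases ht0S.1.lt_or_eq with h1 | h1
    · exact h1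
    · have := ht0S.2
      rw [← h1] at this
      linarith
  have hkpos : ∀ y, 0 < y → y < t0 → 0 < mlKer α lam y := by
    intro y hy hyt
    rw [hkh]
    refine mul_pos (Real.rpow_pos_of_pos hy _) ?_
    by_contra hc
    push Not at hc
    have : t0 ≤ y := csInf_le hSb ⟨hy.le, hc⟩
    linarith
  have hkt0 : mlKer α lam t0 ≤ 0 := by
    rw [hkh]
    exact mul_nonpos_of_nonneg_of_nonpos (Real.rpow_nonneg ht0pos.le _) ht0S.2
  -- integrability and Volterra equation in reflected form
  have hint : ∀ t, 0 < t → IntegrableOn (fun s => mlKer α lam s * (t - s) ^ (α - 1)) (Set.Ioo 0 t) := by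
    intro t ht
    have := reflect_integrable_aux ht (mlKer_conv_integrable hα hα lam ht)
    simpa using this
  have hvol : ∀ t, 0 < t → mlKer α lam t = t ^ (α - 1) / Real.Gamma α
      - lam / Real.Gamma α * ∫ s in Set.Ioo 0 t, mlKer α lam s * (t - s) ^ (α - 1) := by
    intro t ht
    have h1 := mlKer_volterra hα lam ht
    have h2 := reflect_integral_aux (fun s => mlKer α lam s * (t - s) ^ (α - 1)) ht
    simp only [sub_sub_cancel] at h2
    rw [← h2]
    simp only [← mul_div_assoc, integral_div] at h1
    rw [← h1]
    ring
  set c := lam / Real.Gamma α with hc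
  have hcpos : 0 < c := by positivity
  -- choice of t1
  obtain ⟨t1, ht1a, ht1b, ht1c⟩ : ∃ t1, t0 / 2 ≤ t1 ∧ t1 < t0 ∧ c * ((t0 - t1) ^ α / α) < 1 / 2 := by
    have hct : Continuous fun y : ℝ => c * ((t0 - y) ^ α / α) :=
      continuous_const.mul (((Real.continuous_rpow_const hα.le).comp
        (continuous_const.sub continuous_id)).div_const _)
    have h1 : ∀ᶠ y in nhds t0, c * ((t0 - y) ^ α / α) < 1 / 2 := by
      refine hct.continuousAt.eventually_lt_const ?_
      simp [Real.zero_rpow hα.ne']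
    have h2 : ∀ᶠ y in nhds t0, t0 / 2 ≤ y := eventually_ge_nhds (by linarith)
    obtain ⟨y, ⟨hy3, hy1⟩, hy2⟩ := (((h1.and h2).filter_mono nhdsWithin_le_nhds).and
      (self_mem_nhdsWithin : Set.Iio t0 ∈ nhdsWithin t0 (Set.Iio t0))).exists
    exact ⟨y, hy1, hy2, hy3⟩
  have ht1pos : 0 < t1 := by linarith
  obtain ⟨t, htm, htmax⟩ := isCompact_Icc.exists_isMaxOn (Set.nonempty_Icc.2 ht1b.le)
    ((mlKer_continuousOn hα lam).mono (fun y hy => lt_of_lt_of_le ht1pos hy.1 : Set.Icc t1 t0 ⊆ Set.Ioi 0))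
  have hkt : 0 < mlKer α lam t :=
    (hkpos t1 ht1pos ht1b).trans_le (htmax (Set.left_mem_Icc.2 ht1b.le))
  have htt0 : t < t0 := by
    refine lt_of_le_of_ne htm.2 fun he => ?_
    rw [he] at hkt
    linarith
  have htpos : 0 < t := ht1pos.trans_le htm.1
  set ρ := (t0 / t) ^ (α - 1) with hρ
  have hρhalf : 1 / 2 ≤ ρ := by
    have h1 : t0 / t ≤ 2 := by
      rw [div_le_iff₀ htpos]; linarith [htm.1]
    have h2 : (2 : ℝ) ^ (α - 1) ≤ ρ :=
      Real.rpow_le_rpow_of_nonpos (by positivity) h1 (by linarith)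
    have h3 : (2 : ℝ) ^ (-1 : ℝ) ≤ 2 ^ (α - 1) :=
      Real.rpow_le_rpow_of_exponent_le (by norm_num) (by linarith)
    rw [Real.rpow_neg_one] at h3
    linarith
  have hgt : t0 ^ (α - 1) = ρ * t ^ (α - 1) := by
    rw [hρ, ← Real.mul_rpow (by positivity) htpos.le, div_mul_cancel₀ _ htpos.ne']
  have hsplit : Set.Ioo 0 t0 = Set.Ioo 0 t ∪ Set.Ico t t0 :=
    (Set.Ioo_union_Ico_eq_Ioo htpos htt0.le).symm
  have hI := hint t0 ht0pos
  have hIa : IntegrableOn (fun s => mlKer α lam s * (t0 - s) ^ (α - 1)) (Set.Ioo 0 t) :=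
    hI.mono_set (by rw [hsplit]; exact Set.subset_union_left)
  have hIb : IntegrableOn (fun s => mlKer α lam s * (t0 - s) ^ (α - 1)) (Set.Ico t t0) :=
    hI.mono_set (by rw [hsplit]; exact Set.subset_union_right)
  have e1 : ∫ s in Set.Ioo 0 t0, mlKer α lam s * (t0 - s) ^ (α - 1)
      = (∫ s in Set.Ioo 0 t, mlKer α lam s * (t0 - s) ^ (α - 1))
        + ∫ s in Set.Ico t t0, mlKer α lam s * (t0 - s) ^ (α - 1) := by
    rw [hsplit, setIntegral_union _ measurableSet_Ico hIa hIb]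
    rw [Set.disjoint_left]
    intro y hy hy2
    exact absurd hy.2 (not_lt.2 hy2.1)
  have e2 : (∫ s in Set.Ioo 0 t, mlKer α lam s * (t0 - s) ^ (α - 1))
      ≤ ρ * ∫ s in Set.Ioo 0 t, mlKer α lam s * (t - s) ^ (α - 1) := by
    rw [← integral_const_mul]
    refine setIntegral_mono_on hIa ((hint t htpos).const_mul ρ) measurableSet_Ioo fun s hs => ?_
    have hk := hkpos s hs.1 (hs.2.trans htt0)
    have hts : 0 < t - s := by linarith [hs.2]
    have h1 : (t0 / t) * (t - s) ≤ t0 - s := by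
      rw [div_mul_eq_mul_div, div_le_iff₀ htpos]
      nlinarith [hs.1]
    have h2 : (t0 - s) ^ (α - 1) ≤ ρ * (t - s) ^ (α - 1) := by
      rw [hρ, ← Real.mul_rpow (by positivity) hts.le]
      exact Real.rpow_le_rpow_of_nonpos (by positivity) h1 (by linarith)
    calc mlKer α lam s * (t0 - s) ^ (α - 1) ≤ mlKer α lam s * (ρ * (t - s) ^ (α - 1)) := by gcongr
      _ = _ := by ring
  have hpow : IntervalIntegrable (fun s : ℝ => (t0 - s) ^ (α - 1)) volume t t0 := by
    have := (intervalIntegral.intervalIntegrable_rpow' (a := t0 - t) (b := 0) (r := α - 1)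
      (by linarith)).comp_sub_left t0
    simpa using this
  have hpowval : ∫ s in t..t0, (t0 - s) ^ (α - 1) = (t0 - t) ^ α / α := by
    rw [intervalIntegral.integral_comp_sub_left (fun s => s ^ (α - 1)), sub_self,
      integral_rpow (Or.inl (by linarith))]
    simp [Real.zero_rpow hα.ne']
  have e3 : (∫ s in Set.Ico t t0, mlKer α lam s * (t0 - s) ^ (α - 1))
      ≤ mlKer α lam t * ((t0 - t) ^ α / α) := by
    rw [← hpowval, intervalIntegral.integral_of_le htt0.le, integral_Ioc_eq_integral_Ioo,
      ← integral_Ico_eq_integral_Ioo, ← integral_const_mul]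
    refine setIntegral_mono_on hIb ?_ measurableSet_Ico fun s hs => ?_
    · exact ((intervalIntegrable_iff_integrableOn_Ico_of_le htt0.le).1 hpow).const_mul _
    · exact mul_le_mul_of_nonneg_right (htmax ⟨htm.1.trans hs.1, hs.2.le⟩)
        (Real.rpow_nonneg (by linarith [hs.2]) _)
  have v1 := hvol t htpos
  have v0 := hvol t0 ht0pos
  rw [e1, hgt] at v0
  have h5 : c * ((t0 - t) ^ α / α) < 1 / 2 := by
    refine lt_of_le_of_lt ?_ ht1c
    have : t0 - t ≤ t0 - t1 := by linarith [htm.1]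
    have : 0 ≤ t0 - t := by linarith
    gcongr
  set A := ∫ s in Set.Ioo 0 t, mlKer α lam s * (t - s) ^ (α - 1)
  have h6 := mul_le_mul_of_nonneg_left (add_le_add e2 e3) hcpos.le
  have h7 : ρ * mlKer α lam t = ρ * t ^ (α - 1) / Real.Gamma α - c * (ρ * A) := by
    rw [v1]; ring
  have h8 : 0 < mlKer α lam t * (ρ - c * ((t0 - t) ^ α / α)) := mul_pos hkt (by linarith)
  nlinarith

/-- Restriction of `F` to the triangle `p.1 < p.2`. -/
noncomputable def triF (F : ℝ → ℝ → ℝ) : ℝ × ℝ → ℝ :=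
  Set.indicator {p : ℝ × ℝ | p.1 < p.2} (fun p => F p.1 p.2)

lemma triF_left (F : ℝ → ℝ → ℝ) (τ : ℝ) :
    (fun s => triF F (τ, s)) = Set.indicator (Set.Ioi τ) (F τ) := by
  funext s
  simp only [triF, Set.indicator, Set.mem_ofPred_eq, Set.mem_Ioi]

lemma triF_right (F : ℝ → ℝ → ℝ) (s : ℝ) :
    (fun τ => triF F (τ, s)) = Set.indicator (Set.Iio s) (fun τ => F τ s) := by
  funext τ
  simp only [triF, Set.indicator, Set.mem_ofPred_eq, Set.mem_Iio]

lemma triF_norm (F : ℝ → ℝ → ℝ) (p : ℝ × ℝ) :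
    ‖triF F p‖ = triF (fun τ s => ‖F τ s‖) p := by
  simp only [triF, norm_indicator_eq_indicator_norm]

lemma triF_int_left (F : ℝ → ℝ → ℝ) {t τ : ℝ} (hτ : τ ∈ Set.Ioo 0 t) :
    ∫ s in Set.Ioo 0 t, triF F (τ, s) = ∫ s in Set.Ioo τ t, F τ s := by
  rw [triF_left, integral_indicator measurableSet_Ioi, Measure.restrict_restrict measurableSet_Ioi]
  congr 2
  ext y
  simp only [Set.mem_inter_iff, Set.mem_Ioi, Set.mem_Ioo]
  have := hτ.1
  constructor
  · rintro ⟨h1, h2, h3⟩; exact ⟨h1, h3⟩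
  · rintro ⟨h1, h2⟩; exact ⟨h1, by linarith, h2⟩

lemma triF_int_right (F : ℝ → ℝ → ℝ) {t s : ℝ} (hs : s ∈ Set.Ioo 0 t) :
    ∫ τ in Set.Ioo 0 t, triF F (τ, s) = ∫ τ in Set.Ioo 0 s, F τ s := by
  rw [triF_right, integral_indicator measurableSet_Iio, Measure.restrict_restrict measurableSet_Iio]
  congr 2
  ext y
  simp only [Set.mem_inter_iff, Set.mem_Iio, Set.mem_Ioo]
  have := hs.2
  constructor
  · rintro ⟨h1, h2, h3⟩; exact ⟨h2, h1⟩
  · rintro ⟨h1, h2⟩; exact ⟨h2, h1, by linarith⟩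

lemma tri_fubini {F : ℝ → ℝ → ℝ} {t : ℝ}
    (hF : Integrable (triF F)
      ((volume.restrict (Set.Ioo 0 t)).prod (volume.restrict (Set.Ioo 0 t)))) :
    IntegrableOn (fun s => ∫ τ in Set.Ioo 0 s, F τ s) (Set.Ioo 0 t) ∧
    ∫ s in Set.Ioo 0 t, ∫ τ in Set.Ioo 0 s, F τ s
      = ∫ τ in Set.Ioo 0 t, ∫ s in Set.Ioo τ t, F τ s := by
  constructor
  · refine (hF.integral_prod_right).congr ?_
    refine (ae_restrict_iff' measurableSet_Ioo).2 (Filter.Eventually.of_forall fun s hs => ?_)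
    exact triF_int_right F hs
  · have h := integral_integral_swap (f := fun τ s => triF F (τ, s)) hF
    rw [setIntegral_congr_fun measurableSet_Ioo (fun τ hτ => triF_int_left F hτ),
      setIntegral_congr_fun measurableSet_Ioo (fun τ hτ => triF_int_right F hτ)] at h
    exact h.symm

lemma triF_meas {F : ℝ → ℝ → ℝ} {μ : Measure (ℝ × ℝ)}
    (hF : AEStronglyMeasurable (fun p : ℝ × ℝ => F p.1 p.2) μ) :
    AEStronglyMeasurable (triF F) μ :=
  hF.indicator (measurableSet_lt measurable_fst measurable_snd)

lemma caputo_nonneg_aux {α t : ℝ} (hα : 0 < α) (ht : 0 < t) (ψ : ℝ → ℝ)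
    (hψm : AEStronglyMeasurable ψ (volume.restrict (Set.Ioo 0 t)))
    (hint : IntegrableOn (fun s => (t - s) ^ (-α) * ψ s) (Set.Ioo 0 t))
    (hint' : IntegrableOn ψ (Set.Ioo 0 t))
    (h0 : 0 ≤ ∫ s in Set.Ioo 0 t, ψ s)
    (hτ : ∀ τ ∈ Set.Ioo 0 t, 0 ≤ ∫ s in Set.Ioo τ t, ψ s) :
    0 ≤ ∫ s in Set.Ioo 0 t, (t - s) ^ (-α) * ψ s := by
  set h : ℝ → ℝ := fun τ => α * (t - τ) ^ (-α - 1) with hh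
  have hcomp : ∀ s ∈ Set.Ioo 0 t, IntegrableOn h (Set.Ioo 0 s) := by
    intro s hs
    have : ContinuousOn h (Set.Icc 0 s) := by
      refine continuousOn_const.mul ?_
      refine (continuousOn_const.sub continuousOn_id).rpow_const fun y hy => Or.inl ?_
      have := hy.2
      have := hs.2
      exact ne_of_gt (show 0 < t - y by linarith)
    exact this.integrableOn_Icc.mono_set Set.Ioo_subset_Icc_self
  have hval : ∀ s ∈ Set.Ioo 0 t, ∫ τ in Set.Ioo 0 s, h τ = (t - s) ^ (-α) - t ^ (-α) := by
    intro s hs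
    have h1 := hs.1
    have h2 := hs.2
    rw [← integral_Ioc_eq_integral_Ioo, ← intervalIntegral.integral_of_le h1.le]
    simp only [hh]
    rw [intervalIntegral.integral_const_mul,
      intervalIntegral.integral_comp_sub_left (fun x => x ^ (-α - 1)), integral_rpow]
    · simp only [sub_zero, sub_add_cancel]
      field_simp
      ring
    · right
      refine ⟨by linarith, ?_⟩
      rw [Set.uIcc_of_le (by linarith)]
      intro hm
      have := hm.1
      linarith
  have hnn : ∀ τ ∈ Set.Ioo 0 t, 0 ≤ h τ := fun τ hτ =>
    mul_nonneg hα.le (Real.rpow_nonneg (by linarith [hτ.2]) _)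
  set F : ℝ → ℝ → ℝ := fun τ s => h τ * ψ s with hF
  have hhm : Measurable h := (((measurable_const.sub measurable_id).pow_const _).const_mul _)
  have hmeas : AEStronglyMeasurable (triF F)
      ((volume.restrict (Set.Ioo 0 t)).prod (volume.restrict (Set.Ioo 0 t))) := by
    apply triF_meas
    exact (hhm.comp measurable_fst).aestronglyMeasurable.mul hψm.comp_snd
  have hFi : Integrable (triF F)
      ((volume.restrict (Set.Ioo 0 t)).prod (volume.restrict (Set.Ioo 0 t))) := by
    rw [integrable_prod_iff' hmeas]
    constructor
    · refine (ae_restrict_iff' measurableSet_Ioo).2 (Filter.Eventually.of_forall fun s hs => ?_)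
      rw [triF_right, integrable_indicator_iff measurableSet_Iio]
      rw [IntegrableOn, Measure.restrict_restrict measurableSet_Iio]
      refine IntegrableOn.mono_set ((hcomp s hs).mul_const _) ?_
      rintro y ⟨hy1, hy2⟩
      exact ⟨hy2.1, hy1⟩
    · have hi : IntegrableOn (fun s => ‖(t - s) ^ (-α) * ψ s‖ - t ^ (-α) * ‖ψ s‖) (Set.Ioo 0 t) :=
        hint.norm.sub (hint'.norm.const_mul _)
      refine hi.congr ?_
      refine (ae_restrict_iff' measurableSet_Ioo).2 (Filter.Eventually.of_forall fun s hs => ?_)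
      simp_rw [triF_norm]
      rw [triF_int_right _ hs]
      have : ∫ τ in Set.Ioo 0 s, ‖F τ s‖ = ∫ τ in Set.Ioo 0 s, h τ * ‖ψ s‖ := by
        refine setIntegral_congr_fun measurableSet_Ioo fun τ hτ => ?_
        simp only [hF, norm_mul]
        rw [Real.norm_of_nonneg (hnn τ ⟨hτ.1, hτ.2.trans hs.2⟩)]
      rw [this, integral_mul_const, hval s hs, norm_mul,
        Real.norm_of_nonneg (Real.rpow_nonneg (by linarith [hs.2]) _)]
      ring
  have hfub := (tri_fubini hFi).2
  have hR : 0 ≤ ∫ τ in Set.Ioo 0 t, ∫ s in Set.Ioo τ t, F τ s := by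
    refine setIntegral_nonneg measurableSet_Ioo fun τ hτ' => ?_
    simp only [hF]
    rw [integral_const_mul]
    exact mul_nonneg (hnn τ hτ') (hτ τ hτ')
  have hL : ∫ s in Set.Ioo 0 t, ∫ τ in Set.Ioo 0 s, F τ s
      = (∫ s in Set.Ioo 0 t, (t - s) ^ (-α) * ψ s) - t ^ (-α) * ∫ s in Set.Ioo 0 t, ψ s := by
    rw [← integral_const_mul, ← integral_sub hint (hint'.const_mul _)]
    refine setIntegral_congr_fun measurableSet_Ioo fun s hs => ?_
    simp only [hF]
    rw [integral_mul_const, hval s hs]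
    ring
  have := mul_nonneg (Real.rpow_nonneg ht.le (-α)) h0
  rw [hL] at hfub
  linarith

lemma shift_integral_aux (f : ℝ → ℝ) {τ t : ℝ} (ht : τ < t) :
    ∫ s in Set.Ioo τ t, f (s - τ) = ∫ x in Set.Ioo 0 (t - τ), f x := by
  rw [← integral_Ioc_eq_integral_Ioo, ← integral_Ioc_eq_integral_Ioo,
    ← intervalIntegral.integral_of_le ht.le, ← intervalIntegral.integral_of_le (by linarith),
    intervalIntegral.integral_comp_sub_right]
  simp

lemma shift_integrable_aux {f : ℝ → ℝ} {τ t : ℝ} (ht : τ < t)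
    (hf : IntegrableOn f (Set.Ioo 0 (t - τ))) :
    IntegrableOn (fun s => f (s - τ)) (Set.Ioo τ t) := by
  rw [← intervalIntegrable_iff_integrableOn_Ioo_of_le (by linarith)] at hf ⊢
  simpa using (hf.comp_sub_right τ)

lemma resolvent_fubini {α t : ℝ} (hα : 0 < α) (hα1 : α < 1) (lam : ℝ)
    (v : ℝ → ℝ) (hv : IntegrableOn v (Set.Ioo 0 t)) :
    IntegrableOn (fun s => mlKer α lam (t - s) *
      ∫ τ in Set.Ioo 0 s, ((s - τ) ^ (-α) / Real.Gamma (1 - α) + lam) * v τ) (Set.Ioo 0 t) ∧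
    ∫ s in Set.Ioo 0 t, mlKer α lam (t - s) *
      (∫ τ in Set.Ioo 0 s, ((s - τ) ^ (-α) / Real.Gamma (1 - α) + lam) * v τ)
      = ∫ τ in Set.Ioo 0 t, v τ := by
  have hG := Real.Gamma_pos_of_pos (sub_pos.2 hα1)
  obtain ⟨C, hC0, hC⟩ := mlKer_bound hα lam t
  set F : ℝ → ℝ → ℝ := fun τ s =>
    mlKer α lam (t - s) * (((s - τ) ^ (-α) / Real.Gamma (1 - α) + lam) * v τ) with hF
  set D := C * (1 / Real.Gamma (1 - α) + |lam| * t ^ α) with hD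
  set G : ℝ → ℝ → ℝ := fun τ s => D * ((t - s) ^ (α - 1) * (s - τ) ^ (1 - α - 1)) * ‖v τ‖ with hGdef
  have hFm : AEStronglyMeasurable (triF F)
      ((volume.restrict (Set.Ioo 0 t)).prod (volume.restrict (Set.Ioo 0 t))) := by
    apply triF_meas
    refine AEStronglyMeasurable.mul ?_ (AEStronglyMeasurable.mul ?_
      hv.aestronglyMeasurable.comp_fst)
    · exact ((mlKer_measurable hα lam).comp (measurable_const.sub measurable_snd)).aestronglyMeasurable
    · exact ((((measurable_snd.sub measurable_fst).pow_const _).div_const _).add_const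
        _).aestronglyMeasurable
  have hGm : AEStronglyMeasurable (triF G)
      ((volume.restrict (Set.Ioo 0 t)).prod (volume.restrict (Set.Ioo 0 t))) := by
    apply triF_meas
    refine AEStronglyMeasurable.mul ?_ hv.norm.aestronglyMeasurable.comp_fst
    exact ((((measurable_const.sub measurable_snd).pow_const _).mul
      ((measurable_snd.sub measurable_fst).pow_const _)).const_mul _).aestronglyMeasurable
  have hb : ∀ τ ∈ Set.Ioo 0 t, IntegrableOn
      (fun s => (t - s) ^ (α - 1) * (s - τ) ^ (1 - α - 1)) (Set.Ioo τ t) := by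
    intro τ hτ
    have := shift_integrable_aux hτ.2
      (beta_integrable_aux hα (sub_pos.2 hα1) (sub_pos.2 hτ.2))
    simpa only [sub_sub_sub_cancel_right] using this
  have hbv : ∀ τ ∈ Set.Ioo 0 t, ∫ s in Set.Ioo τ t, (t - s) ^ (α - 1) * (s - τ) ^ (1 - α - 1)
      = Real.Gamma α * Real.Gamma (1 - α) := by
    intro τ hτ
    have h1 := shift_integral_aux (fun x => (t - τ - x) ^ (α - 1) * x ^ (1 - α - 1)) hτ.2
    rw [beta_int_aux hα (sub_pos.2 hα1) (sub_pos.2 hτ.2)] at h1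
    simpa only [sub_sub_sub_cancel_right, add_sub_cancel, sub_self, Real.rpow_zero, one_mul,
      Real.Gamma_one, div_one] using h1
  have hGi : Integrable (triF G)
      ((volume.restrict (Set.Ioo 0 t)).prod (volume.restrict (Set.Ioo 0 t))) := by
    rw [integrable_prod_iff hGm]
    constructor
    · refine (ae_restrict_iff' measurableSet_Ioo).2 (Filter.Eventually.of_forall fun τ hτ => ?_)
      rw [triF_left, integrable_indicator_iff measurableSet_Ioi]
      rw [IntegrableOn, Measure.restrict_restrict measurableSet_Ioi]
      refine IntegrableOn.mono_set (((hb τ hτ).const_mul _).mul_const _) ?_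
      rintro y ⟨hy1, hy2⟩
      exact ⟨hy1, hy2.2⟩
    · refine (hv.norm.const_mul (|D| * (Real.Gamma α * Real.Gamma (1 - α)))).congr ?_
      refine (ae_restrict_iff' measurableSet_Ioo).2 (Filter.Eventually.of_forall fun τ hτ => ?_)
      simp_rw [triF_norm]
      rw [triF_int_left _ hτ]
      have : ∫ s in Set.Ioo τ t, ‖G τ s‖ = ∫ s in Set.Ioo τ t,
          |D| * ((t - s) ^ (α - 1) * (s - τ) ^ (1 - α - 1)) * ‖v τ‖ := by
        refine setIntegral_congr_fun measurableSet_Ioo fun s hs => ?_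
        simp only [hGdef, norm_mul, norm_norm]
        rw [Real.norm_eq_abs D, Real.norm_of_nonneg (Real.rpow_nonneg (by linarith [hs.2]) _),
          Real.norm_of_nonneg (Real.rpow_nonneg (by linarith [hs.1]) _)]
      rw [this, integral_mul_const, integral_const_mul, hbv τ hτ]
  have hFi : Integrable (triF F)
      ((volume.restrict (Set.Ioo 0 t)).prod (volume.restrict (Set.Ioo 0 t))) := by
    refine hGi.mono' hFm ?_
    rw [Measure.prod_restrict]
    refine (ae_restrict_iff' (measurableSet_Ioo.prod measurableSet_Ioo)).2
      (Filter.Eventually.of_forall fun p hp => ?_)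
    rw [triF_norm]
    unfold triF
    by_cases hlt : p.1 < p.2
    · have hmem : p ∈ {p : ℝ × ℝ | p.1 < p.2} := hlt
      rw [Set.indicator_of_mem hmem, Set.indicator_of_mem hmem]
      obtain ⟨τ, s⟩ := p
      obtain ⟨hτ, hs⟩ := hp
      simp only at hlt hτ hs ⊢
      simp only [hF, hGdef, norm_mul]
      have hx : 0 < s - τ := by linarith
      have hxt : s - τ ≤ t := by linarith [hs.2, hτ.1]
      have hts : 0 < t - s := by linarith [hs.2]
      have k1 : ‖mlKer α lam (t - s)‖ ≤ C * (t - s) ^ (α - 1) := hC _ hts (by linarith [hs.1])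
      have hxp : 0 < (s - τ) ^ α := Real.rpow_pos_of_pos hx _
      have k2 : 1 ≤ t ^ α * (s - τ) ^ (-α) := by
        rw [Real.rpow_neg hx.le, ← div_eq_mul_inv, one_le_div hxp]
        exact Real.rpow_le_rpow hx.le hxt hα.le
      have k3 : ‖(s - τ) ^ (-α) / Real.Gamma (1 - α) + lam‖
          ≤ (1 / Real.Gamma (1 - α) + |lam| * t ^ α) * (s - τ) ^ (-α) := by
        have k4 := abs_add_le ((s - τ) ^ (-α) / Real.Gamma (1 - α)) lam
        rw [abs_of_nonneg (div_nonneg (Real.rpow_nonneg hx.le _) hG.le)] at k4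
        have k5 := mul_le_mul_of_nonneg_left k2 (abs_nonneg lam)
        rw [Real.norm_eq_abs]
        calc _ ≤ _ := k4
          _ ≤ (s - τ) ^ (-α) / Real.Gamma (1 - α) + |lam| * (t ^ α * (s - τ) ^ (-α)) := by linarith
          _ = _ := by ring
      have k6 := mul_le_mul k1 k3 (norm_nonneg _) ((norm_nonneg _).trans k1)
      have k7 := mul_le_mul_of_nonneg_right k6 (norm_nonneg (v τ))
      rw [show 1 - α - 1 = -α by ring, hD]
      calc _ = _ := (mul_assoc _ _ _).symm
        _ ≤ _ := k7
        _ = _ := by ring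
    · have hmem : p ∉ {p : ℝ × ℝ | p.1 < p.2} := hlt
      rw [Set.indicator_of_notMem hmem, Set.indicator_of_notMem hmem]
  obtain ⟨r1, r2⟩ := tri_fubini hFi
  simp only [hF, integral_const_mul] at r1 r2
  refine ⟨r1, r2.trans ?_⟩
  refine setIntegral_congr_fun measurableSet_Ioo fun τ hτ => ?_
  have h1 := shift_integral_aux
    (fun x => mlKer α lam (t - τ - x) * (x ^ (-α) / Real.Gamma (1 - α) + lam)) hτ.2
  rw [mlKer_identity hα hα1 lam (sub_pos.2 hτ.2)] at h1
  simp only [sub_sub_sub_cancel_right] at h1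
  simp only [← mul_assoc]
  rw [integral_mul_const, h1, one_mul]

lemma abs_deriv_norm_le_aux {H : Type*} [NormedAddCommGroup H] [InnerProductSpace ℝ H]
    {e : ℝ → H} {e' : H} {s : ℝ} (h : HasDerivAt e e' s) :
    |deriv (fun x => ‖e x‖) s| ≤ ‖e'‖ := by
  by_cases hd : DifferentiableAt ℝ (fun x => ‖e x‖) s
  · have h1 := (hasDerivAt_iff_tendsto_slope.1 hd.hasDerivAt).norm
    have h2 := (hasDerivAt_iff_tendsto_slope.1 h).norm
    refine le_of_tendsto_of_tendsto h1 h2 (Filter.Eventually.of_forall fun x => ?_)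
    simp only [slope_def_module, norm_smul]
    exact mul_le_mul_of_nonneg_left (abs_norm_sub_norm_le _ _) (norm_nonneg _)
  · rw [deriv_zero_of_not_differentiableAt hd]
    simp

/-- Main a posteriori error bound in abstract form:
`‖e(t)‖ ≤ (D_t^α + λ)⁻¹ r (t) = ∫_0^t (t-s)^(α-1) E_{α,α}(-λ(t-s)^α) r(s) ds`,
where the error `e` with `e(0) = 0` satisfies the tested residual inequality with
coercivity constant `λ` and residual norm `r`. -/
theorem apriori_error_bound_L2
    {H : Type*} [NormedAddCommGroup H] [InnerProductSpace ℝ H] [CompleteSpace H]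
    (α lam T : ℝ) (hα : α ∈ Set.Ioo (0 : ℝ) 1) (hT : 0 < T)
    (e e' : ℝ → H) (r : ℝ → ℝ)
    (he_cont : ContinuousOn e (Set.Icc 0 T))
    (he0 : e 0 = 0)
    (hderiv : ∀ s ∈ Set.Ioo 0 T, HasDerivAt e (e' s) s)
    (hint : ∀ t ∈ Set.Ioc 0 T, IntegrableOn (fun s => (t - s) ^ (-α) * ‖e' s‖) (Set.Ioo 0 t))
    (hlip : ∀ ε ∈ Set.Ioo 0 T, ∃ K : NNReal, LipschitzOnWith K (fun s => ‖e s‖) (Set.Icc ε T))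
    (hr_nonneg : ∀ t ∈ Set.Ioc 0 T, 0 ≤ r t)
    (hr_cont : ContinuousOn r (Set.Ioc 0 T))
    (hr_int : ∀ t ∈ Set.Ioc 0 T,
      IntegrableOn (fun s => (t - s) ^ (α - 1) * mittagLeffler α α (-lam * (t - s) ^ α) * r s)
        (Set.Ioo 0 t))
    (hres : ∀ t ∈ Set.Ioc 0 T,
      (1 / Real.Gamma (1 - α)) * ⟪(∫ s in Set.Ioo 0 t, (t - s) ^ (-α) • e' s), e t⟫
        + lam * ‖e t‖ ^ 2 ≤ r t * ‖e t‖) :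
    ∀ t ∈ Set.Ioc 0 T,
      ‖e t‖ ≤ ∫ s in Set.Ioo 0 t,
        (t - s) ^ (α - 1) * mittagLeffler α α (-lam * (t - s) ^ α) * r s := by
  obtain ⟨hα0, hα1⟩ := hα
  have hG := Real.Gamma_pos_of_pos (sub_pos.2 hα1)
  set w : ℝ → ℝ := fun s => ‖e s‖ with hw
  set v : ℝ → ℝ := deriv w with hv
  have hvm : Measurable v := measurable_deriv w
  have he'm : AEStronglyMeasurable e' (volume.restrict (Set.Ioo 0 T)) := by
    refine (stronglyMeasurable_deriv e).aestronglyMeasurable.congr ?_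
    exact (ae_restrict_iff' measurableSet_Ioo).2
      (Filter.Eventually.of_forall fun s hs => (hderiv s hs).deriv)
  have hvb : ∀ s ∈ Set.Ioo 0 T, ‖v s‖ ≤ ‖e' s‖ := fun s hs => abs_deriv_norm_le_aux (hderiv s hs)
  have hwc : ContinuousOn w (Set.Icc 0 T) := he_cont.norm
  have he'int : IntegrableOn e' (Set.Ioo 0 T) := by
    refine Integrable.mono' ((hint T ⟨hT, le_rfl⟩).const_mul (T ^ α)) he'm ?_
    refine (ae_restrict_iff' measurableSet_Ioo).2 (Filter.Eventually.of_forall fun s hs => ?_)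
    have hx : 0 < T - s := by linarith [hs.2]
    have hxp : 0 < (T - s) ^ α := Real.rpow_pos_of_pos hx _
    have k2 : 1 ≤ T ^ α * (T - s) ^ (-α) := by
      rw [Real.rpow_neg hx.le, ← div_eq_mul_inv, one_le_div hxp]
      exact Real.rpow_le_rpow hx.le (by linarith [hs.1]) hα0.le
    rw [← mul_assoc]
    exact le_mul_of_one_le_left (norm_nonneg _) k2
  have hvint : IntegrableOn v (Set.Ioo 0 T) := by
    refine Integrable.mono he'int hvm.aestronglyMeasurable ?_
    exact (ae_restrict_iff' measurableSet_Ioo).2 (Filter.Eventually.of_forall hvb)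
  -- fundamental theorem of calculus for `e`
  have ftc_e : ∀ a b, 0 ≤ a → a ≤ b → b ≤ T → ∫ s in Set.Ioo a b, e' s = e b - e a := by
    intro a b ha hab hb
    rw [← integral_Ioc_eq_integral_Ioo, ← intervalIntegral.integral_of_le hab]
    refine intervalIntegral.integral_eq_sub_of_hasDerivAt_of_le hab
      (he_cont.mono (Set.Icc_subset_Icc ha hb))
      (fun s hs => hderiv s ⟨ha.trans_lt hs.1, hs.2.trans_le hb⟩) ?_
    rw [intervalIntegrable_iff_integrableOn_Ioo_of_le hab]
    exact he'int.mono_set (Set.Ioo_subset_Ioo ha hb)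
  -- fundamental theorem of calculus for `w`
  have ftc_pos : ∀ a b, 0 < a → a ≤ b → b ≤ T → ∫ s in a..b, v s = w b - w a := by
    intro a b ha hab hb
    rcases hab.eq_or_lt with h | h
    · subst h; simp
    obtain ⟨K, hK⟩ := hlip a ⟨ha, h.trans_le hb⟩
    refine AbsolutelyContinuousOnInterval.integral_deriv_eq_sub ?_
    refine LipschitzOnWith.absolutelyContinuousOnInterval (K := K) ?_
    rw [Set.uIcc_of_le hab]
    exact hK.mono (Set.Icc_subset_Icc le_rfl hb)
  have ftc_w : ∀ a b, 0 ≤ a → a ≤ b → b ≤ T → ∫ s in Set.Ioo a b, v s = w b - w a := by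
    intro a b ha hab hb
    rw [← integral_Ioc_eq_integral_Ioo, ← intervalIntegral.integral_of_le hab]
    rcases ha.lt_or_eq with h | h
    · exact ftc_pos a b h hab hb
    subst h
    rcases hab.eq_or_lt with h | h
    · subst h; simp
    have hvi : IntegrableOn v (Set.uIcc 0 b) := by
      rw [Set.uIcc_of_le hab, integrableOn_Icc_iff_integrableOn_Ioo]
      exact hvint.mono_set (Set.Ioo_subset_Ioo le_rfl hb)
    have hc1 : ContinuousOn (fun a => (∫ s in a..b, v s) + w a) (Set.Icc 0 b) := by
      refine ContinuousOn.add ?_ (hwc.mono (Set.Icc_subset_Icc le_rfl hb))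
      have := intervalIntegral.continuousOn_primitive_interval_left hvi
      rwa [Set.uIcc_of_le hab] at this
    have heq : Set.EqOn (fun a => (∫ s in a..b, v s) + w a) (fun _ => w b) (Set.Ioo 0 b) := by
      intro a ha
      simp only
      rw [ftc_pos a b ha.1 ha.2.le hb]
      ring
    have := heq.of_subset_closure hc1 continuousOn_const Set.Ioo_subset_Icc_self
      (by rw [closure_Ioo h.ne]) (Set.left_mem_Icc.2 hab)
    simp only at this
    linarith
  have hw0 : w 0 = 0 := by simp [hw, he0]
  -- weighted integrability
  have hwe' : ∀ t ∈ Set.Ioc 0 T,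
      IntegrableOn (fun s => (t - s) ^ (-α) • e' s) (Set.Ioo 0 t) := by
    intro t ht
    refine Integrable.mono' (hint t ht) ?_ ?_
    · refine AEStronglyMeasurable.smul ?_
        (he'm.mono_set (Set.Ioo_subset_Ioo le_rfl ht.2))
      exact ((measurable_const.sub measurable_id).pow_const _).aestronglyMeasurable
    · refine (ae_restrict_iff' measurableSet_Ioo).2 (Filter.Eventually.of_forall fun s hs => ?_)
      rw [norm_smul, Real.norm_of_nonneg (Real.rpow_nonneg (by linarith [hs.2]) _)]
  have hwv : ∀ t ∈ Set.Ioc 0 T,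
      IntegrableOn (fun s => (t - s) ^ (-α) * v s) (Set.Ioo 0 t) := by
    intro t ht
    refine Integrable.mono' (hint t ht) ?_ ?_
    · exact (((measurable_const.sub measurable_id).pow_const _).mul hvm).aestronglyMeasurable
    · refine (ae_restrict_iff' measurableSet_Ioo).2 (Filter.Eventually.of_forall fun s hs => ?_)
      rw [norm_mul, Real.norm_of_nonneg (Real.rpow_nonneg (by linarith [hs.2]) _)]
      exact mul_le_mul_of_nonneg_left (hvb s ⟨hs.1, hs.2.trans_le ht.2⟩)
        (Real.rpow_nonneg (by linarith [hs.2]) _)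
  -- comparison of the Caputo derivatives
  have hcmp : ∀ t ∈ Set.Ioc 0 T, ∀ u : H, ‖u‖ ≤ 1 → ⟪u, e t⟫ = ‖e t‖ →
      ∫ s in Set.Ioo 0 t, (t - s) ^ (-α) * v s
        ≤ ⟪u, ∫ s in Set.Ioo 0 t, (t - s) ^ (-α) • e' s⟫ := by
    intro t ht u hu hut
    have hei : IntegrableOn e' (Set.Ioo 0 t) := he'int.mono_set (Set.Ioo_subset_Ioo le_rfl ht.2)
    have hvi : IntegrableOn v (Set.Ioo 0 t) := hvint.mono_set (Set.Ioo_subset_Ioo le_rfl ht.2)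
    have hψi : IntegrableOn (fun s => ⟪u, e' s⟫ - v s) (Set.Ioo 0 t) :=
      (hei.const_inner u).sub hvi
    have hψval : ∀ τ, 0 ≤ τ → τ ≤ t →
        ∫ s in Set.Ioo τ t, (⟪u, e' s⟫ - v s) = ‖e τ‖ - ⟪u, e τ⟫ := by
      intro τ h0 h1
      have hsub : Set.Ioo τ t ⊆ Set.Ioo 0 t := Set.Ioo_subset_Ioo h0 le_rfl
      have i1 : IntegrableOn e' (Set.Ioo τ t) := hei.mono_set hsub
      have i2 : IntegrableOn v (Set.Ioo τ t) := hvi.mono_set hsub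
      rw [integral_sub (i1.const_inner u) i2, integral_inner i1, ftc_e τ t h0 h1 ht.2,
        ftc_w τ t h0 h1 ht.2, inner_sub_right, hut]
      simp only [hw]
      ring
    have key := caputo_nonneg_aux hα0 ht.1 (fun s => ⟪u, e' s⟫ - v s)
      hψi.aestronglyMeasurable ?_ hψi ?_ ?_
    · have i1 := (hwe' t ht).const_inner (𝕜 := ℝ) u
      have e1 : ∫ s in Set.Ioo 0 t, (t - s) ^ (-α) * (⟪u, e' s⟫ - v s)
          = ∫ s in Set.Ioo 0 t, (⟪u, (t - s) ^ (-α) • e' s⟫ - (t - s) ^ (-α) * v s) := by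
        refine setIntegral_congr_fun measurableSet_Ioo fun s hs => ?_
        simp only [inner_smul_right]
        ring
      rw [e1, integral_sub i1 (hwv t ht), integral_inner (hwe' t ht)] at key
      linarith
    · refine (((hwe' t ht).const_inner u).sub (hwv t ht)).congr ?_
      refine Filter.Eventually.of_forall fun s => ?_
      simp only [Pi.sub_apply, inner_smul_right]
      ring
    · rw [hψval 0 le_rfl ht.1.le, he0]
      simp
    · intro τ hτ
      rw [hψval τ hτ.1.le hτ.2.le]
      have := real_inner_le_norm u (e τ)
      have := mul_le_of_le_one_left (norm_nonneg (e τ)) hu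
      linarith
  -- pointwise inequality for the scalar problem
  have hD : ∀ t ∈ Set.Ioc 0 T,
      ∫ τ in Set.Ioo 0 t, ((t - τ) ^ (-α) / Real.Gamma (1 - α) + lam) * v τ ≤ r t := by
    intro t ht
    have hvi : IntegrableOn v (Set.Ioo 0 t) := hvint.mono_set (Set.Ioo_subset_Ioo le_rfl ht.2)
    have e1 : ∫ τ in Set.Ioo 0 t, ((t - τ) ^ (-α) / Real.Gamma (1 - α) + lam) * v τ
        = (1 / Real.Gamma (1 - α)) * (∫ τ in Set.Ioo 0 t, (t - τ) ^ (-α) * v τ)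
          + lam * ‖e t‖ := by
      have e2 : ∫ τ in Set.Ioo 0 t, v τ = ‖e t‖ := by
        rw [ftc_w 0 t le_rfl ht.1.le ht.2, hw0, sub_zero]
      rw [← e2, ← integral_const_mul, ← integral_const_mul,
        ← integral_add ((hwv t ht).const_mul _) (hvi.const_mul _)]
      refine setIntegral_congr_fun measurableSet_Ioo fun s hs => ?_
      ring
    rw [e1]
    by_cases het : e t = 0
    · have h1 := hcmp t ht 0 (by simp) (by simp [het])
      rw [inner_zero_left] at h1
      have h2 : (1 / Real.Gamma (1 - α)) * (∫ τ in Set.Ioo 0 t, (t - τ) ^ (-α) * v τ) ≤ 0 :=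
        mul_nonpos_of_nonneg_of_nonpos (by positivity) h1
      rw [het, norm_zero, mul_zero, add_zero]
      exact h2.trans (hr_nonneg t ht)
    · have hn : 0 < ‖e t‖ := norm_pos_iff.2 het
      have h1 := hcmp t ht (‖e t‖⁻¹ • e t) (by rw [norm_smul, norm_inv, norm_norm, inv_mul_cancel₀ hn.ne'])
        (by rw [real_inner_smul_left, real_inner_self_eq_norm_sq]; field_simp)
      have h2 := hres t ht
      rw [real_inner_smul_left, real_inner_comm] at h1
      set I := ⟪(∫ s in Set.Ioo 0 t, (t - s) ^ (-α) • e' s), e t⟫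
      set J := ∫ s in Set.Ioo 0 t, (t - s) ^ (-α) * v s
      have h3 : 1 / Real.Gamma (1 - α) * J ≤ 1 / Real.Gamma (1 - α) * (‖e t‖⁻¹ * I) :=
        mul_le_mul_of_nonneg_left h1 (by positivity)
      have h4 : (1 / Real.Gamma (1 - α) * (‖e t‖⁻¹ * I) + lam * ‖e t‖) * ‖e t‖ ≤ r t * ‖e t‖ := by
        refine le_trans (le_of_eq ?_) h2
        field_simp
      have h5 := le_of_mul_le_mul_right h4 hn
      linarith
  intro t ht
  obtain ⟨r1, r2⟩ := resolvent_fubini hα0 hα1 lam v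
    (hvint.mono_set (Set.Ioo_subset_Ioo le_rfl ht.2) : IntegrableOn v (Set.Ioo 0 t))
  rw [ftc_w 0 t le_rfl ht.1.le ht.2, hw0, sub_zero] at r2
  have hwt : ‖e t‖ = w t := rfl
  rw [hwt, ← r2]
  refine setIntegral_mono_on r1 (hr_int t ht) measurableSet_Ioo fun s hs => ?_
  exact mul_le_mul_of_nonneg_left (hD s ⟨hs.1, hs.2.le.trans ht.2⟩)
    (mlKer_nonneg hα0 hα1 lam (by linarith [hs.2]))
end

section
/- Let H be a real Hilbert space, α ∈ (0,1), λ ≥ 0, and T > 0. Let e : [0,T] → H be continuous with e(0) = 0, differentiable on (0,T), such that s ↦ (t−s)^{−α}‖e′(s)‖ is integrable on (0,t) for every t ∈ (0,T], and such that t ↦ ‖e(t)‖ is Lipschitz continuous on [ε, T] for every ε ∈ (0,T). Let r : (0,T] → ℝ be nonnegative and continuous, and suppose that for every t ∈ (0,T]: (1/Γ(1−α)) ⟨∫_0^t (t−s)^{−α} e′(s) ds, e(t)⟩ + λ ‖e(t)‖² ≤ r(t) ‖e(t)‖. Then for every t ∈ (0,T], provided the supremum is finite: ‖e(t)‖ ≤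 sup_{0 < s ≤ t} [ r(s) / ( s^{−α}/Γ(1−α) + λ ) ]. -/
open MeasureTheory Real
open scoped RealInnerProductSpace

/-- At a maximum point `τ` of `‖e‖`, the Caputo integral tested with `e τ` is bounded below. -/
theorem caputo_lower
    {H : Type*} [NormedAddCommGroup H] [InnerProductSpace ℝ H] [CompleteSpace H]
    (α τ : ℝ) (hα : α ∈ Set.Ioo (0 : ℝ) 1) (hτ : 0 < τ)
    (e e' : ℝ → H)
    (he_cont : ContinuousOn e (Set.Icc 0 τ))
    (he0 : e 0 = 0)
    (hderiv : ∀ s ∈ Set.Ioo 0 τ, HasDerivAt e (e' s) s)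
    (hint : IntegrableOn (fun s => (τ - s) ^ (-α) * ‖e' s‖) (Set.Ioo 0 τ))
    (hmax : ∀ s ∈ Set.Icc 0 τ, ‖e s‖ ≤ ‖e τ‖) :
    τ ^ (-α) * ‖e τ‖ ^ 2 ≤ ⟪(∫ s in Set.Ioo 0 τ, (τ - s) ^ (-α) • e' s), e τ⟫ := by
  obtain ⟨hα0, hα1⟩ := hα
  set N : ℝ → ℝ := fun s => (τ - s) ^ (-α) * ‖e' s‖ with hN
  set G : ℝ → ℝ := fun s => ⟪e τ, (τ - s) ^ (-α) • e' s⟫ with hG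
  have hmeas : AEStronglyMeasurable (fun s => (τ - s) ^ (-α) • e' s)
      (volume.restrict (Set.Ioo 0 τ)) := by
    have h1 : AEStronglyMeasurable (fun s => (τ - s) ^ (-α) • deriv e s)
        (volume.restrict (Set.Ioo 0 τ)) := by
      apply AEStronglyMeasurable.smul
      · exact (Measurable.pow_const (by fun_prop) _).aestronglyMeasurable
      · exact (stronglyMeasurable_deriv e).aestronglyMeasurable
    refine h1.congr ?_
    filter_upwards [ae_restrict_mem measurableSet_Ioo] with s hs
    rw [(hderiv s hs).deriv]
  have hvint : IntegrableOn (fun s => (τ - s) ^ (-α) • e' s) (Set.Ioo 0 τ) := by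
    refine Integrable.mono' hint hmeas ?_
    filter_upwards [ae_restrict_mem measurableSet_Ioo] with s hs
    have : 0 ≤ (τ - s) ^ (-α) := rpow_nonneg (by linarith [hs.2]) _
    rw [norm_smul, Real.norm_of_nonneg this]
  have hGint : IntegrableOn G (Set.Ioo 0 τ) := Integrable.const_inner (e τ) hvint
  have hGI : IntegrableOn G (Set.Icc 0 τ) := by
    rw [integrableOn_Icc_iff_integrableOn_Ioo]
    exact hGint
  have hNI : IntegrableOn N (Set.Icc 0 τ) := by
    rw [integrableOn_Icc_iff_integrableOn_Ioo]
    exact hint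
  have hGval : ⟪(∫ s in Set.Ioo 0 τ, (τ - s) ^ (-α) • e' s), e τ⟫ = ∫ s in (0:ℝ)..τ, G s := by
    rw [real_inner_comm, ← integral_inner hvint, intervalIntegral.integral_of_le hτ.le,
      integral_Ioc_eq_integral_Ioo]
  rw [hGval]
  have hPc : ContinuousOn (fun b => ∫ s in (0:ℝ)..b, N s) (Set.Icc 0 τ) := by
    have := intervalIntegral.continuousOn_primitive_interval (f := N) (μ := volume)
      (a := 0) (b := τ) (by rwa [Set.uIcc_of_le hτ.le])
    rwa [Set.uIcc_of_le hτ.le] at this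
  have hQc : ContinuousOn (fun b => ∫ s in (0:ℝ)..b, G s) (Set.Icc 0 τ) := by
    have := intervalIntegral.continuousOn_primitive_interval (f := G) (μ := volume)
      (a := 0) (b := τ) (by rwa [Set.uIcc_of_le hτ.le])
    rwa [Set.uIcc_of_le hτ.le] at this
  have hφ : ∀ s ∈ Set.Ioo 0 τ, HasDerivAt (fun s => ⟪e τ, e s⟫) ⟪e τ, e' s⟫ s := by
    intro s hs
    simpa using (hasDerivAt_const s (e τ)).inner ℝ (hderiv s hs)
  have hφc : ContinuousOn (fun s => ⟪e τ, e s⟫) (Set.Icc 0 τ) :=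
    ContinuousOn.inner continuousOn_const he_cont
  have key : ∀ b ∈ Set.Ioo 0 τ, τ ^ (-α) * ‖e τ‖ ^ 2
      - ‖e τ‖ * ((∫ s in (0:ℝ)..τ, N s) - ∫ s in (0:ℝ)..b, N s) ≤ ∫ s in (0:ℝ)..b, G s := by
    intro b hb
    have hτb : 0 < τ - b := by linarith [hb.2]
    -- step 1: product rule inequality on [0,b]
    have h1 := intervalIntegral.sub_le_integral_of_hasDeriv_right_of_le (a := 0) (b := b)
      (g := fun s => (τ - s) ^ (-α) * (⟪e τ, e s⟫ - ‖e τ‖ ^ 2))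
      (g' := fun s => ((-1) * (-α) * (τ - s) ^ (-α - 1)) * (⟪e τ, e s⟫ - ‖e τ‖ ^ 2)
        + (τ - s) ^ (-α) * ⟪e τ, e' s⟫)
      (φ := G) hb.1.le
      (by
        apply ContinuousOn.mul
        · apply ContinuousOn.rpow_const (by fun_prop)
          intro s hs
          left
          have := hs.2
          linarith
        · exact (hφc.mono (Set.Icc_subset_Icc_right hb.2.le)).sub continuousOn_const)
      (by
        intro s hs
        have hs' : s ∈ Set.Ioo 0 τ := ⟨hs.1, hs.2.trans hb.2⟩
        apply HasDerivAt.hasDerivWithinAt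
        apply HasDerivAt.mul
        · apply HasDerivAt.rpow_const
          · simpa using (hasDerivAt_id s).const_sub τ
          · left
            linarith [hs'.2]
        · exact (hφ s hs').sub_const _)
      (hGI.mono_set (Set.Icc_subset_Icc_right hb.2.le))
      (by
        intro s hs
        have hs' : s ∈ Set.Icc 0 τ := ⟨hs.1.le, (hs.2.trans hb.2).le⟩
        have hle : ⟪e τ, e s⟫ - ‖e τ‖ ^ 2 ≤ 0 := by
          have h2 := real_inner_le_norm (e τ) (e s)
          have h3 := mul_le_mul_of_nonneg_left (hmax s hs') (norm_nonneg (e τ))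
          nlinarith
        have hp : 0 ≤ (-1) * (-α) * (τ - s) ^ (-α - 1) := by
          have : 0 ≤ (τ - s) ^ (-α - 1) := rpow_nonneg (by linarith [hs'.2]) _
          have := mul_nonneg hα0.le this
          linarith
        have := mul_nonpos_of_nonneg_of_nonpos hp hle
        simp only [hG, inner_smul_right]
        linarith)
    -- step 2: the boundary term
    have h2 := intervalIntegral.sub_le_integral_of_hasDeriv_right_of_le (a := b) (b := τ)
      (g := fun s => ⟪e τ, e s⟫)
      (g' := fun s => ⟪e τ, e' s⟫)
      (φ := fun s => ((τ - b) ^ α * ‖e τ‖) * N s) hb.2.le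
      (hφc.mono (Set.Icc_subset_Icc_left hb.1.le))
      (fun s hs => (hφ s ⟨hb.1.trans hs.1, hs.2⟩).hasDerivWithinAt)
      (Integrable.const_mul (hNI.mono_set (Set.Icc_subset_Icc_left hb.1.le)) _)
      (by
        intro s hs
        have hτs : 0 < τ - s := by linarith [hs.2]
        have h3 : (τ - s) ^ α ≤ (τ - b) ^ α :=
          rpow_le_rpow hτs.le (by linarith [hs.1]) hα0.le
        have h4 : 1 ≤ (τ - b) ^ α * (τ - s) ^ (-α) := by
          have h5 : (τ - s) ^ α * (τ - s) ^ (-α) = 1 := by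
            rw [← rpow_add hτs]; simp
          have := mul_le_mul_of_nonneg_right h3 (rpow_nonneg hτs.le (-α))
          linarith
        have h6 := real_inner_le_norm (e τ) (e' s)
        have h7 : 0 ≤ ‖e τ‖ * ‖e' s‖ := by positivity
        have h8 := mul_le_mul_of_nonneg_right h4 h7
        simp only [hN]
        calc _ ≤ 1 * (‖e τ‖ * ‖e' s‖) := by linarith
          _ ≤ _ := h8
          _ = _ := by ring)
    have hadd : (∫ s in (0:ℝ)..b, N s) + (∫ s in b..τ, N s) = ∫ s in (0:ℝ)..τ, N s := by
      apply intervalIntegral.integral_add_adjacent_intervals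
      · rw [intervalIntegrable_iff_integrableOn_Icc_of_le hb.1.le]
        exact hNI.mono_set (Set.Icc_subset_Icc_right hb.2.le)
      · rw [intervalIntegrable_iff_integrableOn_Icc_of_le hb.2.le]
        exact hNI.mono_set (Set.Icc_subset_Icc_left hb.1.le)
    rw [intervalIntegral.integral_const_mul, real_inner_self_eq_norm_sq] at h2
    simp only [he0, inner_zero_right, sub_zero, zero_sub] at h1
    have h5 : (τ - b) ^ (-α) * (τ - b) ^ α = 1 := by
      rw [← rpow_add hτb]; simp
    have h6 := mul_le_mul_of_nonneg_left h2 (rpow_nonneg hτb.le (-α))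
    have h7 : (τ - b) ^ (-α) * ((τ - b) ^ α * ‖e τ‖ * ∫ s in b..τ, N s)
        = ‖e τ‖ * ∫ s in b..τ, N s := by
      rw [← mul_assoc, ← mul_assoc, h5, one_mul]
    rw [h7] at h6
    have h8 : (∫ s in (0:ℝ)..τ, N s) - (∫ s in (0:ℝ)..b, N s) = ∫ s in b..τ, N s := by linarith
    rw [h8]
    linarith
  have hcl : closure (Set.Ioo 0 τ) = Set.Icc 0 τ := closure_Ioo hτ.ne
  have := le_on_closure (s := Set.Ioo 0 τ) key
    (by rw [hcl]; exact continuousOn_const.sub (continuousOn_const.mul (continuousOn_const.sub hPc)))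
    (by rw [hcl]; exact hQc) (x := τ) (by rw [hcl]; exact ⟨hτ.le, le_rfl⟩)
  simpa using this

/-- First bound of Corollary 2.2: with the residual barrier
`𝓡₀(s) = s^(-α)/Γ(1-α) + λ` (for `λ ≥ 0`), the error satisfies
`‖e(t)‖ ≤ sup_{0 < s ≤ t} r(s)/𝓡₀(s)`, provided the supremum is finite. -/
theorem error_bound_R0
    {H : Type*} [NormedAddCommGroup H] [InnerProductSpace ℝ H] [CompleteSpace H]
    (α lam T : ℝ) (hα : α ∈ Set.Ioo (0 : ℝ) 1) (hlam : 0 ≤ lam) (hT : 0 < T)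
    (e e' : ℝ → H) (r : ℝ → ℝ)
    (he_cont : ContinuousOn e (Set.Icc 0 T))
    (he0 : e 0 = 0)
    (hderiv : ∀ s ∈ Set.Ioo 0 T, HasDerivAt e (e' s) s)
    (hint : ∀ t ∈ Set.Ioc 0 T, IntegrableOn (fun s => (t - s) ^ (-α) * ‖e' s‖) (Set.Ioo 0 t))
    (hlip : ∀ ε ∈ Set.Ioo 0 T, ∃ K : NNReal, LipschitzOnWith K (fun s => ‖e s‖) (Set.Icc ε T))
    (hr_nonneg : ∀ t ∈ Set.Ioc 0 T, 0 ≤ r t)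
    (hr_cont : ContinuousOn r (Set.Ioc 0 T))
    (hres : ∀ t ∈ Set.Ioc 0 T,
      (1 / Real.Gamma (1 - α)) * ⟪(∫ s in Set.Ioo 0 t, (t - s) ^ (-α) • e' s), e t⟫
        + lam * ‖e t‖ ^ 2 ≤ r t * ‖e t‖) :
    ∀ t ∈ Set.Ioc 0 T,
      BddAbove ((fun s => r s / (s ^ (-α) / Real.Gamma (1 - α) + lam)) '' Set.Ioc 0 t) →
      ‖e t‖ ≤ sSup ((fun s => r s / (s ^ (-α) / Real.Gamma (1 - α) + lam)) '' Set.Ioc 0 t) := by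
  intro t ht hbdd
  have hc : 0 < Real.Gamma (1 - α) := Real.Gamma_pos_of_pos (by linarith [hα.2])
  have hden : ∀ s : ℝ, 0 < s → 0 < s ^ (-α) / Real.Gamma (1 - α) + lam := fun s hs => by
    have : 0 < s ^ (-α) / Real.Gamma (1 - α) := div_pos (rpow_pos_of_pos hs _) hc
    linarith
  obtain ⟨τ, hτ, hmax⟩ := isCompact_Icc.exists_isMaxOn (Set.nonempty_Icc.2 ht.1.le)
    ((he_cont.mono (Set.Icc_subset_Icc_right ht.2)).norm)
  have hmax' : ∀ s ∈ Set.Icc 0 t, ‖e s‖ ≤ ‖e τ‖ := fun s hs => hmax hs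
  have htτ := hmax' t ⟨ht.1.le, le_rfl⟩
  rcases (norm_nonneg (e τ)).eq_or_lt with h0 | hpos
  · have h1 : 0 ≤ r t / (t ^ (-α) / Real.Gamma (1 - α) + lam) :=
      div_nonneg (hr_nonneg t ht) (hden t ht.1).le
    have h2 := le_csSup hbdd (Set.mem_image_of_mem _ (⟨ht.1, le_rfl⟩ : t ∈ Set.Ioc 0 t))
    linarith
  · have hτ0 : 0 < τ := by
      rcases hτ.1.eq_or_lt with h | h
      · rw [← h, he0, norm_zero] at hpos
        exact absurd hpos (lt_irrefl _)
      · exact h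
    have hτT : τ ∈ Set.Ioc 0 T := ⟨hτ0, hτ.2.trans ht.2⟩
    have hlow := caputo_lower α τ hα hτ0 e e' (he_cont.mono (Set.Icc_subset_Icc_right hτT.2)) he0
      (fun s hs => hderiv s ⟨hs.1, hs.2.trans_le hτT.2⟩) (hint τ hτT)
      (fun s hs => hmax' s ⟨hs.1, hs.2.trans hτ.2⟩)
    have hR := hres τ hτT
    have h3 := mul_le_mul_of_nonneg_left hlow (one_div_pos.2 hc).le
    have h4 : ((τ ^ (-α) / Real.Gamma (1 - α) + lam) * ‖e τ‖) * ‖e τ‖ ≤ r τ * ‖e τ‖ := by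
      calc _ = 1 / Real.Gamma (1 - α) * (τ ^ (-α) * ‖e τ‖ ^ 2) + lam * ‖e τ‖ ^ 2 := by ring
        _ ≤ _ := by linarith
    have h5 := le_of_mul_le_mul_right h4 hpos
    have h6 : ‖e τ‖ ≤ r τ / (τ ^ (-α) / Real.Gamma (1 - α) + lam) := by
      rw [le_div_iff₀ (hden τ hτ0)]
      linarith
    have h2 := le_csSup hbdd (Set.mem_image_of_mem _ (⟨hτ0, hτ.2⟩ : τ ∈ Set.Ioc 0 t))
    linarith
end
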